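/- arXiv:2006.11313 — 2 statements merged into one kernel-verified Lean document; each statement's English description precedes it below -/
import Mathlib

section
/- (i) For all ρ sufficiently close to 0: ρ·(E[X])² < a_ρ^{(K)} < b_ρ^{(K)} < a_ρ^{(K−1)} < b_ρ^{(K−1)} < ⋯ < a_ρ^{(1)} < b_ρ^{(1)} < E[X²]. (ii) For every j∈{1,…,K}: lim_{ρ→0⁺} a_ρ^{(j)} = E[X²·1{|X|>v_j}] and lim_{ρ→0⁺} b_ρ^{(j)} = E[X²·1{|X|≥v_j}]. (iii) For every q∈(ρ(E[X])², E[X²]) there exists a unique r*_ρ(q)∈(0,+∞) such that r*_ρ(q)·q/2 − (1/α(ρ))·ψ_ρ((α(ρ)/ρ)·r*_ρ(q)) = sup_{r≥0}{ r·q/2 − (1/α(ρ))·ψ_ρ((α(ρ)/ρ)·r) }. (iv) For every j∈{1,…,K} and every q∈[a_ρ^{(j)}, b_ρ^{(j)}]: 2(1−|ln ρ|^{-1/4})/(γv_j²) ≤ r*_ρ(q) ≤ 2(1+|ln ρ|^{-1/4})/(γv_j²), with r*_ρ(a_ρ^{(j)}) = 2(1−|ln ρ|^{-1/4})/(γv_j²)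 and r*_ρ(b_ρ^{(j)}) = 2(1+|ln ρ|^{-1/4})/(γv_j²). -/
open MeasureTheory ProbabilityTheory Real

noncomputable section

namespace DiscretePrior

/-- Standard Gaussian measure on ℝ. -/
def stdG : Measure ℝ := gaussianReal 0 1

/-- The sparse prior (1−ρ)δ₀ + ρ P₀. -/
def sparsePrior (ρ : ℝ) (P0 : Measure ℝ) : Measure ℝ :=
  ENNReal.ofReal (1 - ρ) • Measure.dirac 0 + ENNReal.ofReal ρ • P0

def meanP (P : Measure ℝ) : ℝ := ∫ x, x ∂P
def secondMoment (P : Measure ℝ) : ℝ := ∫ x, x ^ 2 ∂P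

/-- E[X² 1(|X| > v)]. -/
def truncSMgt (P : Measure ℝ) (v : ℝ) : ℝ := ∫ x, if v < |x| then x ^ 2 else 0 ∂P

/-- E[X² 1(|X| ≥ v)]. -/
def truncSMge (P : Measure ℝ) (v : ℝ) : ℝ := ∫ x, if v ≤ |x| then x ^ 2 else 0 ∂P

/-- ψ_ρ(r) = E[ln ∫ exp(r X* x + √r Z x − r x²/2) dP_{0,ρ}(x)]. -/
def psiD (P0 : Measure ℝ) (ρ r : ℝ) : ℝ :=
  ∫ xs, ∫ z,
    Real.log (∫ x, Real.exp (r * xs * x + Real.sqrt r * z * x - r * x ^ 2 / 2)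
      ∂(sparsePrior ρ P0)) ∂stdG ∂(sparsePrior ρ P0)

/-- g_ρ(r) = (2/ρ) ψ_ρ'((α(ρ)/ρ) r) with α(ρ) = γρ|ln ρ|. -/
def gD (P0 : Measure ℝ) (γ ρ r : ℝ) : ℝ :=
  (2 / ρ) * deriv (psiD P0 ρ) (γ * |Real.log ρ| * r)

/-- a_ρ^{(j)}. -/
def aD (P0 : Measure ℝ) (γ ρ vj : ℝ) : ℝ :=
  gD P0 γ ρ (2 * (1 - |Real.log ρ| ^ (-(1 : ℝ) / 4)) / (γ * vj ^ 2))

/-- b_ρ^{(j)}. -/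
def bD (P0 : Measure ℝ) (γ ρ vj : ℝ) : ℝ :=
  gD P0 γ ρ (2 * (1 + |Real.log ρ| ^ (-(1 : ℝ) / 4)) / (γ * vj ^ 2))

/-- The function whose supremum over r ≥ 0 is taken. -/
def fD (P0 : Measure ℝ) (γ ρ q r : ℝ) : ℝ :=
  r * q / 2 - psiD P0 ρ (γ * |Real.log ρ| * r) / (γ * ρ * |Real.log ρ|)

instance : IsProbabilityMeasure stdG := inferInstanceAs (IsProbabilityMeasure (gaussianReal 0 1))

lemma integral_stdG (f : ℝ → ℝ) : ∫ z, f z ∂stdG = ∫ z, gaussianPDFReal 0 1 z * f z := by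
  simpa [stdG] using
    integral_gaussianReal_eq_integral_smul (μ := 0) (v := 1) (f := f) one_ne_zero

lemma integrable_stdG_iff (f : ℝ → ℝ) :
    Integrable f stdG ↔ Integrable (fun z => gaussianPDFReal 0 1 z * f z) := by
  rw [stdG, gaussianReal_of_var_ne_zero _ one_ne_zero,
    integrable_withDensity_iff_integrable_smul' (measurable_gaussianPDF _ _)
      (Filter.Eventually.of_forall fun _ => gaussianPDF_lt_top)]
  simp [toReal_gaussianPDF]

lemma integrable_id_stdG : Integrable (fun z : ℝ => z) stdG :=
  (memLp_id_gaussianReal 1).integrable le_rfl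

lemma integrable_of_continuous_of_bounded {μ : Measure ℝ} [IsFiniteMeasure μ] {f : ℝ → ℝ}
    (hf : Continuous f) {B : ℝ} (hB : ∀ z, |f z| ≤ B) : Integrable f μ :=
  Integrable.of_bound hf.aestronglyMeasurable B (Filter.Eventually.of_forall hB)

lemma integral_stdG_comp_add (f : ℝ → ℝ) (c : ℝ) :
    ∫ z, f (z + c) ∂stdG = ∫ z, Real.exp (c * z - c ^ 2 / 2) * f z ∂stdG := by
  rw [integral_stdG, integral_stdG,
    ← integral_sub_right_eq_self (fun z => gaussianPDFReal 0 1 z * f (z + c)) c]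
  congr 1
  ext z
  have : gaussianPDFReal 0 1 (z - c)
      = gaussianPDFReal 0 1 z * Real.exp (c * z - c ^ 2 / 2) := by
    simp only [gaussianPDFReal, mul_assoc, ← Real.exp_add]
    congr 2
    simp
    ring
  rw [this, sub_add_cancel]
  ring

/-- Gaussian integration by parts for bounded functions with bounded derivative. -/
lemma integral_stdG_mul_eq_deriv {f f' : ℝ → ℝ} (hf : ∀ z, HasDerivAt f (f' z) z)
    (hf' : Continuous f') {B B' : ℝ} (hB : ∀ z, |f z| ≤ B) (hB' : ∀ z, |f' z| ≤ B') :
    ∫ z, z * f z ∂stdG = ∫ z, f' z ∂stdG := by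
  have hfc : Continuous f := continuous_iff_continuousAt.2 fun z => (hf z).continuousAt
  have hpdf : ∀ z, HasDerivAt (gaussianPDFReal 0 1) (-(gaussianPDFReal 0 1 z * z)) z := by
    intro z
    have h1 : HasDerivAt (fun z : ℝ => -(z - 0) ^ 2 / (2 * ((1 : NNReal) : ℝ))) (-z) z := by
      have := ((((hasDerivAt_id z).sub_const 0).pow 2).neg).div_const (2 * ((1 : NNReal) : ℝ))
      convert! this using 1
      simp
      ring
    have h2 := h1.exp.const_mul (√(2 * π * ((1 : NNReal) : ℝ)))⁻¹
    convert! h2 using 1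
    simp [gaussianPDFReal]
    ring
  rw [integral_stdG, integral_stdG]
  have hzf : Integrable (fun z => z * f z) stdG :=
    integrable_id_stdG.mul_bdd hfc.aestronglyMeasurable (Filter.Eventually.of_forall hB)
  have key := integral_mul_deriv_eq_deriv_mul_of_integrable (u := gaussianPDFReal 0 1) (v := f)
    (fun z _ => hpdf z) (fun z _ => hf z)
    ((integrable_stdG_iff _).1 (integrable_of_continuous_of_bounded hf' hB'))
    (by
      have := ((integrable_stdG_iff _).1 hzf).neg
      refine this.congr (Filter.Eventually.of_forall fun z => ?_)
      simp
      ring)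
    ((integrable_stdG_iff _).1 (integrable_of_continuous_of_bounded hfc hB))
  rw [key, ← integral_neg]
  congr 1
  ext z
  ring

/-- Boundedness of a real function of two real variables. -/
def IsBdd (f : ℝ → ℝ → ℝ) : Prop := ∃ B, ∀ y r, |f y r| ≤ B

lemma IsBdd.add {f g : ℝ → ℝ → ℝ} (hf : IsBdd f) (hg : IsBdd g) :
    IsBdd fun y r => f y r + g y r := by
  obtain ⟨B, hB⟩ := hf
  obtain ⟨C, hC⟩ := hg
  exact ⟨B + C, fun y r => (abs_add_le _ _).trans (add_le_add (hB y r) (hC y r))⟩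

lemma IsBdd.mul {f g : ℝ → ℝ → ℝ} (hf : IsBdd f) (hg : IsBdd g) :
    IsBdd fun y r => f y r * g y r := by
  obtain ⟨B, hB⟩ := hf
  obtain ⟨C, hC⟩ := hg
  refine ⟨B * C, fun y r => ?_⟩
  rw [abs_mul]
  exact mul_le_mul (hB y r) (hC y r) (abs_nonneg _) ((abs_nonneg _).trans (hB y r))

lemma IsBdd.const_mul {f : ℝ → ℝ → ℝ} (c : ℝ) (hf : IsBdd f) : IsBdd fun y r => c * f y r :=
  IsBdd.mul ⟨|c|, fun _ _ => le_rfl⟩ hf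

lemma IsBdd.sub {f g : ℝ → ℝ → ℝ} (hf : IsBdd f) (hg : IsBdd g) :
    IsBdd fun y r => f y r - g y r := by
  simpa [sub_eq_add_neg] using hf.add (hg.const_mul (-1))

/-- Differentiation in `s` of `E[F (s² x + s Z, s²)]`: the contribution of `Z` is turned into a
second derivative by Gaussian integration by parts. -/
lemma hasDerivAt_integral_gaussian_channel {F A B C : ℝ → ℝ → ℝ} (x : ℝ)
    (hF : ∀ (y r : ℝ → ℝ) (y' r' t : ℝ), HasDerivAt y y' t → HasDerivAt r r' t →
      HasDerivAt (fun t => F (y t) (r t)) (A (y t) (r t) * y' + B (y t) (r t) * r') t)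
    (hA : ∀ (r y : ℝ), HasDerivAt (fun y => A y r) (C y r) y)
    (hFc : Continuous fun p : ℝ × ℝ => F p.1 p.2)
    (hAc : Continuous fun p : ℝ × ℝ => A p.1 p.2)
    (hBc : Continuous fun p : ℝ × ℝ => B p.1 p.2)
    (hCc : Continuous fun p : ℝ × ℝ => C p.1 p.2)
    (hAb : IsBdd A) (hBb : IsBdd B) (hCb : IsBdd C)
    (hFi : ∀ s, Integrable (fun z => F (s ^ 2 * x + s * z) (s ^ 2)) stdG) (s : ℝ) :
    HasDerivAt (fun s => ∫ z, F (s ^ 2 * x + s * z) (s ^ 2) ∂stdG)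
      (2 * s * ∫ z, (x * A (s ^ 2 * x + s * z) (s ^ 2) + C (s ^ 2 * x + s * z) (s ^ 2) / 2
        + B (s ^ 2 * x + s * z) (s ^ 2)) ∂stdG) s := by
  obtain ⟨M, hAM⟩ := hAb
  obtain ⟨M', hBM⟩ := hBb
  obtain ⟨M'', hCM⟩ := hCb
  have hM : 0 ≤ M := (abs_nonneg _).trans (hAM 0 0)
  have hM' : 0 ≤ M' := (abs_nonneg _).trans (hBM 0 0)
  have hsub : ∀ {G : ℝ → ℝ → ℝ} (s : ℝ), Continuous (fun p : ℝ × ℝ => G p.1 p.2) →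
      Continuous fun z => G (s ^ 2 * x + s * z) (s ^ 2) := fun s hG =>
    hG.comp (by fun_prop : Continuous fun z : ℝ => (s ^ 2 * x + s * z, s ^ 2))
  have hmain := (hasDerivAt_integral_of_dominated_loc_of_deriv_le (μ := stdG) (x₀ := s)
    (s := Metric.ball s 1) (F := fun s z => F (s ^ 2 * x + s * z) (s ^ 2))
    (F' := fun s z => A (s ^ 2 * x + s * z) (s ^ 2) * (2 * s * x + z)
      + B (s ^ 2 * x + s * z) (s ^ 2) * (2 * s))
    (bound := fun z => M * (2 * (|s| + 1) * |x| + |z|) + M' * (2 * (|s| + 1)))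
    (Metric.ball_mem_nhds s one_pos)
    (Filter.Eventually.of_forall fun s => (hsub s hFc).aestronglyMeasurable) (hFi s)
    (((hsub s hAc).mul (by fun_prop)).add ((hsub s hBc).mul_const _)).aestronglyMeasurable
    (Filter.Eventually.of_forall fun z t ht => ?_)
    ((((integrable_const _).add integrable_id_stdG.abs).const_mul M).add (integrable_const _))
    (Filter.Eventually.of_forall fun z t ht => ?_)).2
  · convert! hmain using 1
    have hAi := integrable_of_continuous_of_bounded (μ := stdG) (hsub s hAc) (fun z => hAM _ _)
    have hBi := integrable_of_continuous_of_bounded (μ := stdG) (hsub s hBc) (fun z => hBM _ _)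
    have hCi := integrable_of_continuous_of_bounded (μ := stdG) (hsub s hCc) (fun z => hCM _ _)
    have hzA : Integrable (fun z => z * A (s ^ 2 * x + s * z) (s ^ 2)) stdG :=
      integrable_id_stdG.mul_bdd (hsub s hAc).aestronglyMeasurable
        (Filter.Eventually.of_forall fun z => hAM _ _)
    have hstein := integral_stdG_mul_eq_deriv
      (f := fun z => A (s ^ 2 * x + s * z) (s ^ 2))
      (f' := fun z => s * C (s ^ 2 * x + s * z) (s ^ 2)) (B := M) (B' := |s| * M'')
      (fun z => by
        have h1 : HasDerivAt (fun z : ℝ => s ^ 2 * x + s * z) s z := by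
          simpa using ((hasDerivAt_id z).const_mul s).const_add (s ^ 2 * x)
        have := (hA (s ^ 2) (s ^ 2 * x + s * z)).comp z h1
        rw [mul_comm (C _ _)] at this
        exact this)
      (continuous_const.mul (hsub s hCc)) (fun z => hAM _ _)
      (fun z => by rw [abs_mul]; gcongr; exact hCM _ _)
    have e : ∀ z, A (s ^ 2 * x + s * z) (s ^ 2) * (2 * s * x + z)
        + B (s ^ 2 * x + s * z) (s ^ 2) * (2 * s)
        = (2 * s * x) * A (s ^ 2 * x + s * z) (s ^ 2) + z * A (s ^ 2 * x + s * z) (s ^ 2)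
          + (2 * s) * B (s ^ 2 * x + s * z) (s ^ 2) := fun z => by ring
    simp only [e]
    rw [integral_add ((hAi.const_mul _).fun_add hzA) (hBi.const_mul _),
      integral_add (hAi.const_mul _) hzA, hstein,
      integral_add ((hAi.const_mul _).fun_add (hCi.div_const _)) hBi,
      integral_add (hAi.const_mul _) (hCi.div_const _)]
    simp only [integral_const_mul, integral_div]
    ring
  · have ht' : |t| ≤ |s| + 1 := by
      have h1 : |t - s| < 1 := by simpa [Real.dist_eq] using ht
      have h2 := abs_sub_abs_le_abs_sub t s
      linarith
    have h1 : |2 * t * x + z| ≤ 2 * (|s| + 1) * |x| + |z| := by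
      refine (abs_add_le _ _).trans ?_
      rw [abs_mul, abs_mul, abs_two]
      gcongr
    have h2 : |2 * t| ≤ 2 * (|s| + 1) := by
      rw [abs_mul, abs_two]
      gcongr
    rw [Real.norm_eq_abs]
    refine (abs_add_le _ _).trans ?_
    rw [abs_mul, abs_mul]
    gcongr
    · exact hAM _ _
    · exact hBM _ _
  · have h2 : HasDerivAt (fun t : ℝ => t ^ 2) (2 * t) t := by simpa using hasDerivAt_pow 2 t
    have h1 : HasDerivAt (fun t : ℝ => t ^ 2 * x + t * z) (2 * t * x + z) t := by
      simpa using (h2.mul_const x).fun_add ((hasDerivAt_id t).mul_const z)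
    exact hF _ _ _ _ t h1 h2

/-- The `k`-th unnormalised moment `∑ w i * i ^ k * exp (i y - r i² / 2)`. -/
def tiltSum (T : Finset ℝ) (w : ℝ → ℝ) (k : ℕ) (y r : ℝ) : ℝ :=
  ∑ i ∈ T, w i * i ^ k * Real.exp (i * y - r * i ^ 2 / 2)

/-- The `k`-th moment of the posterior law given the observation `y`. -/
def tiltMoment (T : Finset ℝ) (w : ℝ → ℝ) (k : ℕ) (y r : ℝ) : ℝ :=
  tiltSum T w k y r / tiltSum T w 0 y r

section Tilt

variable {T : Finset ℝ} {w : ℝ → ℝ}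

lemma hasDerivAt_tiltSum (k : ℕ) {y r : ℝ → ℝ} {y' r' t : ℝ} (hy : HasDerivAt y y' t)
    (hr : HasDerivAt r r' t) :
    HasDerivAt (fun t => tiltSum T w k (y t) (r t))
      (tiltSum T w (k + 1) (y t) (r t) * y' - tiltSum T w (k + 2) (y t) (r t) / 2 * r') t := by
  have h := HasDerivAt.fun_sum (u := T) (x := t)
    (A := fun i t => w i * i ^ k * Real.exp (i * y t - r t * i ^ 2 / 2))
    (fun i _ => (((hy.const_mul i).sub ((hr.mul_const (i ^ 2)).div_const 2)).exp.const_mul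
      (w i * i ^ k)))
  refine h.congr_deriv ?_
  simp only [tiltSum, Finset.sum_mul, Finset.sum_div, ← Finset.sum_sub_distrib, Pi.sub_apply]
  refine Finset.sum_congr rfl fun i _ => ?_
  ring

lemma continuous_tiltSum (k : ℕ) : Continuous fun p : ℝ × ℝ => tiltSum T w k p.1 p.2 := by
  unfold tiltSum
  fun_prop

lemma tiltSum_zero_pos (hT : T.Nonempty) (hw : ∀ i ∈ T, 0 < w i) (y r : ℝ) :
    0 < tiltSum T w 0 y r :=
  Finset.sum_pos (fun i hi => by have := hw i hi; positivity) hT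

lemma continuous_tiltMoment (hT : T.Nonempty) (hw : ∀ i ∈ T, 0 < w i) (k : ℕ) :
    Continuous fun p : ℝ × ℝ => tiltMoment T w k p.1 p.2 :=
  (continuous_tiltSum k).div (continuous_tiltSum 0) fun _ => (tiltSum_zero_pos hT hw _ _).ne'

lemma tiltMoment_mul (hT : T.Nonempty) (hw : ∀ i ∈ T, 0 < w i) (k : ℕ) (y r : ℝ) :
    tiltSum T w 0 y r * tiltMoment T w k y r = tiltSum T w k y r :=
  mul_div_cancel₀ _ (tiltSum_zero_pos hT hw y r).ne'

lemma abs_tiltMoment_le (hT : T.Nonempty) (hw : ∀ i ∈ T, 0 < w i) {M : ℝ}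
    (hM : ∀ i ∈ T, |i| ≤ M) (k : ℕ) (y r : ℝ) : |tiltMoment T w k y r| ≤ M ^ k := by
  have h0 := tiltSum_zero_pos hT hw y r
  rw [tiltMoment, abs_div, abs_of_pos h0, div_le_iff₀ h0]
  refine (Finset.abs_sum_le_sum_abs _ _).trans ?_
  rw [tiltSum, Finset.mul_sum]
  refine Finset.sum_le_sum fun i hi => ?_
  have hwi := hw i hi
  rw [abs_mul, abs_mul, abs_of_pos hwi, abs_pow, Real.abs_exp, pow_zero, mul_one, ← mul_assoc,
    mul_comm (M ^ k)]
  gcongr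
  exact hM i hi

lemma exists_bound (T : Finset ℝ) : ∃ M, ∀ i ∈ T, |i| ≤ M :=
  ⟨∑ i ∈ T, |i|, fun _ hi => Finset.single_le_sum (f := fun i => |i|)
    (fun _ _ => abs_nonneg _) hi⟩

lemma isBdd_tiltMoment (hT : T.Nonempty) (hw : ∀ i ∈ T, 0 < w i) (k : ℕ) :
    IsBdd (tiltMoment T w k) := by
  obtain ⟨M, hM⟩ := exists_bound T
  exact ⟨M ^ k, abs_tiltMoment_le hT hw hM k⟩

lemma hasDerivAt_log_tiltSum (hT : T.Nonempty) (hw : ∀ i ∈ T, 0 < w i) {y r : ℝ → ℝ}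
    {y' r' t : ℝ} (hy : HasDerivAt y y' t) (hr : HasDerivAt r r' t) :
    HasDerivAt (fun t => Real.log (tiltSum T w 0 (y t) (r t)))
      (tiltMoment T w 1 (y t) (r t) * y' + -1 / 2 * tiltMoment T w 2 (y t) (r t) * r') t := by
  refine ((hasDerivAt_tiltSum 0 hy hr).log (tiltSum_zero_pos hT hw _ _).ne').congr_deriv ?_
  simp only [tiltMoment]
  ring

lemma hasDerivAt_tiltMoment (hT : T.Nonempty) (hw : ∀ i ∈ T, 0 < w i) (k : ℕ) {y r : ℝ → ℝ}
    {y' r' t : ℝ} (hy : HasDerivAt y y' t) (hr : HasDerivAt r r' t) :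
    HasDerivAt (fun t => tiltMoment T w k (y t) (r t))
      ((tiltMoment T w (k + 1) (y t) (r t)
          - tiltMoment T w k (y t) (r t) * tiltMoment T w 1 (y t) (r t)) * y'
        + -1 / 2 * (tiltMoment T w (k + 2) (y t) (r t)
          - tiltMoment T w k (y t) (r t) * tiltMoment T w 2 (y t) (r t)) * r') t := by
  have h0 := (tiltSum_zero_pos hT hw (y t) (r t)).ne'
  refine ((hasDerivAt_tiltSum k hy hr).div (hasDerivAt_tiltSum 0 hy hr) h0).congr_deriv ?_
  simp only [tiltMoment]
  field_simp
  ring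

lemma tiltMoment_variance_pos (hT : T.Nontrivial) (hw : ∀ i ∈ T, 0 < w i) (y r : ℝ) :
    0 < tiltMoment T w 2 y r - tiltMoment T w 1 y r ^ 2 := by
  have h0 := tiltSum_zero_pos hT.nonempty hw y r
  set m := tiltMoment T w 1 y r with hm
  have h1 : tiltSum T w 1 y r = m * tiltSum T w 0 y r := by
    rw [hm, tiltMoment, div_mul_cancel₀ _ h0.ne']
  have key : tiltMoment T w 2 y r - m ^ 2
      = (∑ i ∈ T, w i * (i - m) ^ 2 * Real.exp (i * y - r * i ^ 2 / 2))
        / tiltSum T w 0 y r := by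
    have : ∑ i ∈ T, w i * (i - m) ^ 2 * Real.exp (i * y - r * i ^ 2 / 2)
        = tiltSum T w 2 y r - 2 * m * tiltSum T w 1 y r + m ^ 2 * tiltSum T w 0 y r := by
      simp only [tiltSum, Finset.mul_sum, ← Finset.sum_sub_distrib, ← Finset.sum_add_distrib]
      refine Finset.sum_congr rfl fun i _ => ?_
      ring
    rw [this, h1, tiltMoment]
    field_simp
    ring
  rw [key]
  refine div_pos ?_ h0
  obtain ⟨i, hi, him⟩ := hT.exists_ne m
  refine Finset.sum_pos' (fun j hj => ?_) ⟨i, hi, ?_⟩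
  · have := hw j hj
    positivity
  · have := hw i hi
    have := sq_pos_of_ne_zero (sub_ne_zero.2 him)
    positivity

/-- Change of variables turning the channel output into a centred Gaussian. -/
lemma sum_pow_mul_integral_channel (k : ℕ) {Φ : ℝ → ℝ} (hΦ : Continuous Φ) {B : ℝ}
    (hB : ∀ y, |Φ y| ≤ B) (s : ℝ) :
    ∑ x ∈ T, w x * x ^ k * ∫ z, Φ (s ^ 2 * x + s * z) ∂stdG
      = ∫ z, tiltSum T w k (s * z) (s ^ 2) * Φ (s * z) ∂stdG := by
  simp only [tiltSum, Finset.sum_mul]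
  rw [integral_finsetSum]
  · refine Finset.sum_congr rfl fun x _ => ?_
    have h := integral_stdG_comp_add (fun z => Φ (s * z)) (s * x)
    have e : ∀ z, s * (z + s * x) = s ^ 2 * x + s * z := fun z => by ring
    simp only [e] at h
    rw [h, ← integral_const_mul]
    congr 1
    ext z
    rw [show s * x * z - (s * x) ^ 2 / 2 = x * (s * z) - s ^ 2 * x ^ 2 / 2 by ring]
    ring
  · intro x _
    have h1 : Integrable (fun z => Real.exp (x * s * z)) stdG :=
      integrable_exp_mul_gaussianReal (x * s)
    have h2 := ((h1.mul_bdd (hΦ.comp (continuous_const_mul s)).aestronglyMeasurable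
      (Filter.Eventually.of_forall fun z => hB (s * z))).const_mul
        (w x * x ^ k * Real.exp (-(s ^ 2 * x ^ 2 / 2))))
    refine h2.congr (Filter.Eventually.of_forall fun z => ?_)
    simp only [Function.comp]
    rw [sub_eq_add_neg, Real.exp_add, mul_assoc x s z]
    ring

/-- The Nishimori identity: the signal may be replaced by an independent posterior sample. -/
lemma nishimori (hT : T.Nonempty) (hw : ∀ i ∈ T, 0 < w i) (k : ℕ) {Φ : ℝ → ℝ → ℝ}
    (hΦ : Continuous fun p : ℝ × ℝ => Φ p.1 p.2) (hB : IsBdd Φ) (s : ℝ) :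
    ∑ x ∈ T, w x * x ^ k * ∫ z, Φ (s ^ 2 * x + s * z) (s ^ 2) ∂stdG
      = ∑ x ∈ T, w x * ∫ z, tiltMoment T w k (s ^ 2 * x + s * z) (s ^ 2)
          * Φ (s ^ 2 * x + s * z) (s ^ 2) ∂stdG := by
  obtain ⟨B, hB'⟩ := (isBdd_tiltMoment hT hw k).mul hB
  obtain ⟨C, hC⟩ := hB
  have hpair : Continuous fun y : ℝ => (y, s ^ 2) := by fun_prop
  rw [sum_pow_mul_integral_channel k (Φ := fun y => Φ y (s ^ 2)) (hΦ.comp hpair)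
    (fun y => hC y _) s]
  have h := sum_pow_mul_integral_channel (T := T) (w := w) 0
    (Φ := fun y => tiltMoment T w k y (s ^ 2) * Φ y (s ^ 2))
    (((continuous_tiltMoment hT hw k).comp hpair).mul (hΦ.comp hpair)) (fun y => hB' y _) s
  simp only [pow_zero, mul_one] at h
  rw [h]
  simp only [← mul_assoc, tiltMoment_mul hT hw]

end Tilt

/-- The free energy as a function of `s = √r`. -/
def freeEnergy (T : Finset ℝ) (w : ℝ → ℝ) (s : ℝ) : ℝ :=
  ∑ x ∈ T, w x * ∫ z, Real.log (tiltSum T w 0 (s ^ 2 * x + s * z) (s ^ 2)) ∂stdG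

/-- The expected overlap of the signal with the posterior mean, as a function of `s = √r`. -/
def overlap (T : Finset ℝ) (w : ℝ → ℝ) (s : ℝ) : ℝ :=
  ∑ x ∈ T, w x * x * ∫ z, tiltMoment T w 1 (s ^ 2 * x + s * z) (s ^ 2) ∂stdG

section Overlap

variable {T : Finset ℝ} {w : ℝ → ℝ}

lemma integrable_channel {F : ℝ → ℝ → ℝ} (hF : Continuous fun p : ℝ × ℝ => F p.1 p.2)
    (hb : IsBdd F) (x s : ℝ) :
    Integrable (fun z => F (s ^ 2 * x + s * z) (s ^ 2)) stdG := by
  obtain ⟨B, hB⟩ := hb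
  exact integrable_of_continuous_of_bounded
    (hF.comp (by fun_prop : Continuous fun z : ℝ => (s ^ 2 * x + s * z, s ^ 2))) fun z => hB _ _

lemma continuous_log_tiltSum (hT : T.Nonempty) (hw : ∀ i ∈ T, 0 < w i) :
    Continuous fun p : ℝ × ℝ => Real.log (tiltSum T w 0 p.1 p.2) :=
  (continuous_tiltSum 0).log fun _ => (tiltSum_zero_pos hT hw _ _).ne'

lemma integrable_log_tiltSum (hT : T.Nonempty) (hw : ∀ i ∈ T, 0 < w i) (x s : ℝ) :
    Integrable (fun z => Real.log (tiltSum T w 0 (s ^ 2 * x + s * z) (s ^ 2))) stdG := by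
  obtain ⟨B, hB⟩ := isBdd_tiltMoment hT hw 1
  have hlip : ∀ y, |Real.log (tiltSum T w 0 y (s ^ 2)) - Real.log (tiltSum T w 0 0 (s ^ 2))|
      ≤ B * |y| := by
    intro y
    have h := Convex.norm_image_sub_le_of_norm_hasDerivWithin_le
      (f := fun y => Real.log (tiltSum T w 0 y (s ^ 2)))
      (f' := fun y => tiltMoment T w 1 y (s ^ 2)) (s := Set.univ) (x := 0) (y := y) (C := B)
      (fun y _ => by
        simpa using hasDerivAt_log_tiltSum hT hw (hasDerivAt_id y) (hasDerivAt_const y (s ^ 2)))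
      (fun y _ => hB y _) convex_univ trivial trivial
    simpa using h
  have hc : Continuous fun z => Real.log (tiltSum T w 0 (s ^ 2 * x + s * z) (s ^ 2)) :=
    (continuous_log_tiltSum hT hw).comp
      (by fun_prop : Continuous fun z : ℝ => (s ^ 2 * x + s * z, s ^ 2))
  have hB0 : 0 ≤ B := (abs_nonneg _).trans (hB 0 0)
  refine Integrable.mono' (g := fun z => |Real.log (tiltSum T w 0 0 (s ^ 2))|
    + B * (|s ^ 2 * x| + |s| * |z|)) ?_ hc.aestronglyMeasurable
    (Filter.Eventually.of_forall fun z => ?_)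
  · exact (integrable_const _).add
      (((integrable_const _).add (integrable_id_stdG.abs.const_mul _)).const_mul _)
  · have h1 := hlip (s ^ 2 * x + s * z)
    have h2 := abs_add_le (s ^ 2 * x) (s * z)
    rw [abs_mul s z] at h2
    have h3 := abs_sub_abs_le_abs_sub (Real.log (tiltSum T w 0 (s ^ 2 * x + s * z) (s ^ 2)))
      (Real.log (tiltSum T w 0 0 (s ^ 2)))
    have h4 := mul_le_mul_of_nonneg_left h2 hB0
    rw [Real.norm_eq_abs]
    linarith

lemma hasDerivAt_freeEnergy (hT : T.Nonempty) (hw : ∀ i ∈ T, 0 < w i) (s : ℝ) :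
    HasDerivAt (freeEnergy T w) (s * overlap T w s) s := by
  have hc := continuous_tiltMoment hT hw
  have hb := isBdd_tiltMoment hT hw
  have hder : ∀ x : ℝ, HasDerivAt
      (fun s => ∫ z, Real.log (tiltSum T w 0 (s ^ 2 * x + s * z) (s ^ 2)) ∂stdG) _ s := fun x =>
    hasDerivAt_integral_gaussian_channel
      (F := fun y r => Real.log (tiltSum T w 0 y r)) (A := tiltMoment T w 1)
      (B := fun y r => -1 / 2 * tiltMoment T w 2 y r)
      (C := fun y r => tiltMoment T w 2 y r - tiltMoment T w 1 y r * tiltMoment T w 1 y r) x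
      (fun y r y' r' t hy hr => hasDerivAt_log_tiltSum hT hw hy hr)
      (fun r y => by
        simpa using hasDerivAt_tiltMoment hT hw 1 (hasDerivAt_id y) (hasDerivAt_const y r))
      (continuous_log_tiltSum hT hw) (hc 1) (continuous_const.mul (hc 2))
      ((hc 2).sub ((hc 1).mul (hc 1)))
      (hb 1) ((hb 2).const_mul _) ((hb 2).sub ((hb 1).mul (hb 1)))
      (integrable_log_tiltSum hT hw x) s
  have hsum := HasDerivAt.fun_sum (u := T) fun x _ => (hder x).const_mul (w x)
  refine hsum.congr_deriv ?_
  have hn := nishimori hT hw 1 (hc 1) (hb 1) s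
  simp only [pow_one] at hn
  have hterm : ∀ x : ℝ, ∫ z, (x * tiltMoment T w 1 (s ^ 2 * x + s * z) (s ^ 2)
      + (tiltMoment T w 2 (s ^ 2 * x + s * z) (s ^ 2) - tiltMoment T w 1 (s ^ 2 * x + s * z) (s ^ 2)
        * tiltMoment T w 1 (s ^ 2 * x + s * z) (s ^ 2)) / 2
      + -1 / 2 * tiltMoment T w 2 (s ^ 2 * x + s * z) (s ^ 2)) ∂stdG
      = x * ∫ z, tiltMoment T w 1 (s ^ 2 * x + s * z) (s ^ 2) ∂stdG
        - 1 / 2 * ∫ z, tiltMoment T w 1 (s ^ 2 * x + s * z) (s ^ 2)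
          * tiltMoment T w 1 (s ^ 2 * x + s * z) (s ^ 2) ∂stdG := by
    intro x
    rw [← integral_const_mul, ← integral_const_mul, ← integral_sub
      ((integrable_channel (hc 1) (hb 1) x s).const_mul _)
      ((integrable_channel ((hc 1).mul (hc 1)) ((hb 1).mul (hb 1)) x s).const_mul _)]
    congr 1
    ext z
    ring
  simp only [hterm]
  have : ∀ x : ℝ, w x * (2 * s * (x * ∫ z, tiltMoment T w 1 (s ^ 2 * x + s * z) (s ^ 2) ∂stdG
        - 1 / 2 * ∫ z, tiltMoment T w 1 (s ^ 2 * x + s * z) (s ^ 2)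
          * tiltMoment T w 1 (s ^ 2 * x + s * z) (s ^ 2) ∂stdG))
      = 2 * s * (w x * x * ∫ z, tiltMoment T w 1 (s ^ 2 * x + s * z) (s ^ 2) ∂stdG)
        - s * (w x * ∫ z, tiltMoment T w 1 (s ^ 2 * x + s * z) (s ^ 2)
          * tiltMoment T w 1 (s ^ 2 * x + s * z) (s ^ 2) ∂stdG) := fun x => by ring
  simp only [this]
  rw [Finset.sum_sub_distrib, ← Finset.mul_sum, ← Finset.mul_sum, ← hn, overlap]
  ring

lemma hasDerivAt_overlap (hT : T.Nonempty) (hw : ∀ i ∈ T, 0 < w i) (s : ℝ) :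
    HasDerivAt (overlap T w) (2 * s * ∑ x ∈ T, w x * ∫ z,
      (tiltMoment T w 2 (s ^ 2 * x + s * z) (s ^ 2)
        - tiltMoment T w 1 (s ^ 2 * x + s * z) (s ^ 2) ^ 2) ^ 2 ∂stdG) s := by
  have hc := continuous_tiltMoment hT hw
  have hb := isBdd_tiltMoment hT hw
  set V : ℝ → ℝ → ℝ := fun y r =>
    tiltMoment T w 2 y r - tiltMoment T w 1 y r * tiltMoment T w 1 y r with hV
  have hVc : Continuous fun p : ℝ × ℝ => V p.1 p.2 := (hc 2).sub ((hc 1).mul (hc 1))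
  have hVb : IsBdd V := (hb 2).sub ((hb 1).mul (hb 1))
  have hder : ∀ x : ℝ, HasDerivAt
      (fun s => ∫ z, tiltMoment T w 1 (s ^ 2 * x + s * z) (s ^ 2) ∂stdG) _ s := fun x =>
    hasDerivAt_integral_gaussian_channel
      (F := tiltMoment T w 1) (A := V)
      (B := fun y r => -1 / 2 * (tiltMoment T w 3 y r
        - tiltMoment T w 1 y r * tiltMoment T w 2 y r))
      (C := fun y r => (tiltMoment T w 3 y r - tiltMoment T w 2 y r * tiltMoment T w 1 y r)
        - 2 * (tiltMoment T w 1 y r * V y r)) x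
      (fun y r y' r' t hy hr => hasDerivAt_tiltMoment hT hw 1 hy hr)
      (fun r y => by
        have h1 := hasDerivAt_tiltMoment hT hw 1 (hasDerivAt_id y) (hasDerivAt_const y r)
        have h2 := hasDerivAt_tiltMoment hT hw 2 (hasDerivAt_id y) (hasDerivAt_const y r)
        refine (h2.sub (h1.mul h1)).congr_deriv ?_
        simp only [hV, id]
        ring)
      (hc 1) hVc (continuous_const.mul ((hc 3).sub ((hc 1).mul (hc 2))))
      (((hc 3).sub ((hc 2).mul (hc 1))).sub (continuous_const.mul ((hc 1).mul hVc)))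
      hVb (((hb 3).sub ((hb 1).mul (hb 2))).const_mul _)
      (((hb 3).sub ((hb 2).mul (hb 1))).sub (((hb 1).mul hVb).const_mul _))
      (integrable_channel (hc 1) (hb 1) x) s
  have hsum := HasDerivAt.fun_sum (u := T) fun x _ => (hder x).const_mul (w x * x)
  refine hsum.congr_deriv ?_
  have hn2 := nishimori hT hw 2 hVc hVb s
  have hn1 := nishimori hT hw 1 ((hc 1).mul hVc) ((hb 1).mul hVb) s
  simp only [pow_one] at hn1
  have hterm : ∀ x : ℝ, ∫ z, (x * V (s ^ 2 * x + s * z) (s ^ 2)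
      + (tiltMoment T w 3 (s ^ 2 * x + s * z) (s ^ 2) - tiltMoment T w 2 (s ^ 2 * x + s * z) (s ^ 2)
        * tiltMoment T w 1 (s ^ 2 * x + s * z) (s ^ 2)
        - 2 * (tiltMoment T w 1 (s ^ 2 * x + s * z) (s ^ 2)
          * V (s ^ 2 * x + s * z) (s ^ 2))) / 2
      + -1 / 2 * (tiltMoment T w 3 (s ^ 2 * x + s * z) (s ^ 2)
        - tiltMoment T w 1 (s ^ 2 * x + s * z) (s ^ 2)
          * tiltMoment T w 2 (s ^ 2 * x + s * z) (s ^ 2))) ∂stdG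
      = x * ∫ z, V (s ^ 2 * x + s * z) (s ^ 2) ∂stdG
        - ∫ z, tiltMoment T w 1 (s ^ 2 * x + s * z) (s ^ 2)
          * V (s ^ 2 * x + s * z) (s ^ 2) ∂stdG := by
    intro x
    rw [← integral_const_mul, ← integral_sub
      ((integrable_channel hVc hVb x s).const_mul _)
      (integrable_channel ((hc 1).mul hVc) ((hb 1).mul hVb) x s)]
    congr 1
    ext z
    ring
  simp only [hterm]
  have hfin : ∀ x : ℝ, ∫ z, (tiltMoment T w 2 (s ^ 2 * x + s * z) (s ^ 2)
        - tiltMoment T w 1 (s ^ 2 * x + s * z) (s ^ 2) ^ 2) ^ 2 ∂stdG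
      = (∫ z, tiltMoment T w 2 (s ^ 2 * x + s * z) (s ^ 2)
          * V (s ^ 2 * x + s * z) (s ^ 2) ∂stdG)
        - ∫ z, tiltMoment T w 1 (s ^ 2 * x + s * z) (s ^ 2)
          * (tiltMoment T w 1 (s ^ 2 * x + s * z) (s ^ 2)
            * V (s ^ 2 * x + s * z) (s ^ 2)) ∂stdG := by
    intro x
    rw [← integral_sub (integrable_channel ((hc 2).mul hVc) ((hb 2).mul hVb) x s)
      (integrable_channel ((hc 1).mul ((hc 1).mul hVc)) ((hb 1).mul ((hb 1).mul hVb)) x s)]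
    congr 1
    ext z
    simp only [hV]
    ring
  simp only [hfin, mul_sub, Finset.sum_sub_distrib]
  rw [← hn2, ← hn1]
  simp only [Finset.mul_sum, ← Finset.sum_sub_distrib]
  refine Finset.sum_congr rfl fun x _ => ?_
  ring

lemma continuous_overlap (hT : T.Nonempty) (hw : ∀ i ∈ T, 0 < w i) : Continuous (overlap T w) :=
  continuous_iff_continuousAt.2 fun s => (hasDerivAt_overlap hT hw s).continuousAt

lemma strictMonoOn_overlap (hT : T.Nontrivial) (hw : ∀ i ∈ T, 0 < w i) :
    StrictMonoOn (overlap T w) (Set.Ici 0) := by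
  have hc := continuous_tiltMoment hT.nonempty hw
  have hb := isBdd_tiltMoment hT.nonempty hw
  refine strictMonoOn_of_deriv_pos (convex_Ici 0) (continuous_overlap hT.nonempty hw).continuousOn
    fun s hs => ?_
  rw [interior_Ici, Set.mem_Ioi] at hs
  rw [(hasDerivAt_overlap hT.nonempty hw s).deriv]
  refine mul_pos (by positivity) (Finset.sum_pos (fun x hx => mul_pos (hw x hx) ?_) hT.nonempty)
  have hint := integrable_channel
    (F := fun y r => (tiltMoment T w 2 y r - tiltMoment T w 1 y r * tiltMoment T w 1 y r)
      * (tiltMoment T w 2 y r - tiltMoment T w 1 y r * tiltMoment T w 1 y r))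
    (((hc 2).sub ((hc 1).mul (hc 1))).mul ((hc 2).sub ((hc 1).mul (hc 1))))
    (((hb 2).sub ((hb 1).mul (hb 1))).mul ((hb 2).sub ((hb 1).mul (hb 1)))) x s
  simp only [← pow_two] at hint
  rw [integral_pos_iff_support_of_nonneg (fun z => sq_nonneg _) hint]
  have : Function.support (fun z => (tiltMoment T w 2 (s ^ 2 * x + s * z) (s ^ 2)
      - tiltMoment T w 1 (s ^ 2 * x + s * z) (s ^ 2) ^ 2) ^ 2) = Set.univ := by
    ext z
    simpa using (tiltMoment_variance_pos hT hw _ _).ne'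
  rw [this, measure_univ]
  exact one_pos

lemma overlap_zero (hw1 : ∑ x ∈ T, w x = 1) : overlap T w 0 = (∑ x ∈ T, w x * x) ^ 2 := by
  simp [overlap, tiltMoment, tiltSum, hw1, ← Finset.sum_mul, pow_two]

end Overlap

lemma tendsto_weighted_average {α : Type*} {l : Filter α} {T : Finset ℝ} {u : ℝ → α → ℝ}
    {x : ℝ} (hx : x ∈ T) (hpos : ∀ᶠ t in l, u x t ≠ 0)
    (h : ∀ i ∈ T, i ≠ x → Filter.Tendsto (fun t => u i t / u x t) l (nhds 0)) :
    Filter.Tendsto (fun t => (∑ i ∈ T, i * u i t) / ∑ i ∈ T, u i t) l (nhds x) := by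
  have hlim : ∀ i ∈ T, Filter.Tendsto (fun t => u i t / u x t) l
      (nhds (if i = x then 1 else 0)) := by
    intro i hi
    split_ifs with hix
    · subst hix
      exact tendsto_const_nhds.congr' (hpos.mono fun t ht => (div_self ht).symm)
    · exact h i hi hix
  have hnum := tendsto_finsetSum T fun i hi => (hlim i hi).const_mul i
  have hden := tendsto_finsetSum T hlim
  simp only [mul_ite, mul_one, mul_zero, Finset.sum_ite_eq', hx, if_true] at hnum hden
  have := hnum.div hden one_ne_zero
  rw [div_one] at this
  refine this.congr' (hpos.mono fun t ht => ?_)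
  simp only [← mul_div_assoc, Pi.div_apply, ← Finset.sum_div]
  exact div_div_div_cancel_right₀ ht _ _

/-- Weights of the sparse prior. -/
def sparseWeight (p : ℝ → ℝ) (ρ x : ℝ) : ℝ := if x = 0 then 1 - ρ else ρ * p x

section Limits

variable {S : Finset ℝ} {p : ℝ → ℝ}

lemma ne_zero_of_mem (hS : (0 : ℝ) ∉ S) {x : ℝ} (hx : x ∈ S) : x ≠ 0 :=
  fun h => hS (h ▸ hx)

lemma sparseWeight_of_mem (hS : (0 : ℝ) ∉ S) {x : ℝ} (hx : x ∈ S) (ρ : ℝ) :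
    sparseWeight p ρ x = ρ * p x := by
  rw [sparseWeight, if_neg (ne_zero_of_mem hS hx)]

lemma sparseWeight_pos (hS : (0 : ℝ) ∉ S) (hp : ∀ x ∈ S, 0 < p x) {ρ : ℝ} (h0 : 0 < ρ)
    (h1 : ρ < 1) : ∀ x ∈ insert 0 S, 0 < sparseWeight p ρ x := by
  intro x hx
  rcases Finset.mem_insert.1 hx with rfl | hx
  · simpa [sparseWeight] using h1
  · rw [sparseWeight_of_mem hS hx]
    exact mul_pos h0 (hp x hx)

lemma overlap_sparse_div (hS : (0 : ℝ) ∉ S) {ρ : ℝ} (h0 : 0 < ρ) (s : ℝ) :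
    overlap (insert 0 S) (sparseWeight p ρ) s / ρ = ∑ x ∈ S, p x * x *
      ∫ z, tiltMoment (insert 0 S) (sparseWeight p ρ) 1 (s ^ 2 * x + s * z) (s ^ 2) ∂stdG := by
  rw [overlap, Finset.sum_insert hS, mul_zero, zero_mul, zero_add, Finset.sum_div]
  refine Finset.sum_congr rfl fun x hx => ?_
  rw [sparseWeight_of_mem hS hx]
  field_simp

lemma tiltMoment_one_eq (T : Finset ℝ) (w : ℝ → ℝ) (y r : ℝ) :
    tiltMoment T w 1 y r = (∑ i ∈ T, i * (w i * Real.exp (i * y - r * i ^ 2 / 2)))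
      / ∑ i ∈ T, w i * Real.exp (i * y - r * i ^ 2 / 2) := by
  simp only [tiltMoment, tiltSum, pow_zero, mul_one, pow_one]
  congr 1
  exact Finset.sum_congr rfl fun i _ => by ring

variable {α : Type*} {l : Filter α} {ρ s : α → ℝ}

/-- Above the threshold the posterior mean recovers the signal. -/
lemma tendsto_tiltMoment_of_atTop (hS : (0 : ℝ) ∉ S) (hp : ∀ x ∈ S, 0 < p x)
    (hρ : ∀ᶠ t in l, 0 < ρ t ∧ ρ t < 1) (hs : Filter.Tendsto s l Filter.atTop) {x : ℝ}
    (hx : x ∈ S)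
    (hlim : ∀ C : ℝ, Filter.Tendsto (fun t => s t ^ 2 * x ^ 2 / 2 + C * s t + Real.log (ρ t)) l
      Filter.atTop) (z : ℝ) :
    Filter.Tendsto (fun t => tiltMoment (insert 0 S) (sparseWeight p (ρ t)) 1
      (s t ^ 2 * x + s t * z) (s t ^ 2)) l (nhds x) := by
  simp only [tiltMoment_one_eq]
  have hpx := hp x hx
  refine tendsto_weighted_average (u := fun i t => sparseWeight p (ρ t) i
    * Real.exp (i * (s t ^ 2 * x + s t * z) - s t ^ 2 * i ^ 2 / 2)) (Finset.mem_insert_of_mem hx)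
    ?_ fun i hi hix => ?_
  · filter_upwards [hρ] with t ht
    exact (mul_pos (sparseWeight_pos hS hp ht.1 ht.2 x (Finset.mem_insert_of_mem hx))
      (Real.exp_pos _)).ne'
  rcases Finset.mem_insert.1 hi with rfl | hi
  · have h1 := (Real.tendsto_exp_neg_atTop_nhds_zero.comp (hlim (x * z))).const_mul (1 / p x)
    rw [mul_zero] at h1
    refine squeeze_zero' (hρ.mono fun t ht => ?_) (hρ.mono fun t ht => ?_) h1
    · have := sub_pos.2 ht.2
      have := ht.1
      simp only [sparseWeight_of_mem hS hx]
      simp only [sparseWeight, if_true]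
      positivity
    · have h0 := ht.1
      simp only [sparseWeight_of_mem hS hx, Function.comp]
      simp only [sparseWeight, if_true]
      rw [div_le_iff₀ (by positivity)]
      have : Real.exp (-(s t ^ 2 * x ^ 2 / 2 + x * z * s t + Real.log (ρ t)))
          * (ρ t * Real.exp (x * (s t ^ 2 * x + s t * z) - s t ^ 2 * x ^ 2 / 2)) = 1 := by
        nth_rewrite 2 [← Real.exp_log h0]
        rw [← Real.exp_add, ← Real.exp_add, Real.exp_eq_one_iff]
        ring
      calc (1 - ρ t) * Real.exp (0 * (s t ^ 2 * x + s t * z) - s t ^ 2 * 0 ^ 2 / 2)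
          ≤ 1 := by
            have : (0 : ℝ) * (s t ^ 2 * x + s t * z) - s t ^ 2 * 0 ^ 2 / 2 = 0 := by ring
            rw [this, Real.exp_zero]
            linarith
        _ = 1 / p x * p x * (Real.exp (-(s t ^ 2 * x ^ 2 / 2 + x * z * s t + Real.log (ρ t)))
          * (ρ t * Real.exp (x * (s t ^ 2 * x + s t * z) - s t ^ 2 * x ^ 2 / 2))) := by
            rw [this, one_div_mul_cancel hpx.ne', mul_one]
        _ = _ := by ring
  · have hd : 0 < (x - i) ^ 2 / 2 := by
      have := sq_pos_of_ne_zero (sub_ne_zero.2 (Ne.symm hix))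
      positivity
    have h1 : Filter.Tendsto (fun t => s t * (s t * ((x - i) ^ 2 / 2) + -(z * (i - x)))) l
        Filter.atTop :=
      hs.atTop_mul_atTop₀ (Filter.tendsto_atTop_add_const_right _ _ (hs.atTop_mul_const hd))
    have h2 := (Real.tendsto_exp_neg_atTop_nhds_zero.comp h1).const_mul (p i / p x)
    rw [mul_zero] at h2
    refine h2.congr' (hρ.mono fun t ht => ?_)
    have h0 := ht.1.ne'
    simp only [Function.comp, sparseWeight_of_mem hS hx, sparseWeight_of_mem hS hi]
    rw [mul_div_mul_comm, ← Real.exp_sub, mul_div_mul_left _ _ h0]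
    congr 2
    ring

/-- Below the threshold the posterior mean vanishes. -/
lemma tendsto_tiltMoment_of_atBot (hS : (0 : ℝ) ∉ S) (hp : ∀ x ∈ S, 0 < p x)
    (hρ : ∀ᶠ t in l, 0 < ρ t ∧ ρ t < 1) (hρ0 : Filter.Tendsto ρ l (nhds 0)) {x : ℝ}
    (hlim : ∀ C : ℝ, Filter.Tendsto (fun t => s t ^ 2 * x ^ 2 / 2 + C * s t + Real.log (ρ t)) l
      Filter.atBot) (z : ℝ) :
    Filter.Tendsto (fun t => tiltMoment (insert 0 S) (sparseWeight p (ρ t)) 1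
      (s t ^ 2 * x + s t * z) (s t ^ 2)) l (nhds 0) := by
  simp only [tiltMoment_one_eq]
  refine tendsto_weighted_average (u := fun i t => sparseWeight p (ρ t) i
    * Real.exp (i * (s t ^ 2 * x + s t * z) - s t ^ 2 * i ^ 2 / 2)) (Finset.mem_insert_self 0 S)
    ?_ fun i hi hi0 => ?_
  · filter_upwards [hρ] with t ht
    exact (mul_pos (sparseWeight_pos hS hp ht.1 ht.2 0 (Finset.mem_insert_self 0 S))
      (Real.exp_pos _)).ne'
  have hi : i ∈ S := (Finset.mem_insert.1 hi).resolve_left hi0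
  have hpi := hp i hi
  have h1 : Filter.Tendsto (fun t => p i / (1 - ρ t)) l (nhds (p i / (1 - 0))) :=
    (tendsto_const_nhds (x := p i)).div (tendsto_const_nhds.sub hρ0) (by norm_num)
  have h2 := h1.mul (Real.tendsto_exp_atBot.comp (hlim (i * z)))
  rw [mul_zero] at h2
  refine squeeze_zero' (hρ.mono fun t ht => ?_) (hρ.mono fun t ht => ?_) h2
  · have := sub_pos.2 ht.2
    have := ht.1
    simp only [sparseWeight_of_mem hS hi]
    simp only [sparseWeight, if_true]
    positivity
  · have h0 := ht.1
    have h1 := sub_pos.2 ht.2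
    simp only [sparseWeight_of_mem hS hi, Function.comp]
    simp only [sparseWeight, if_true]
    have e0 : (0 : ℝ) * (s t ^ 2 * x + s t * z) - s t ^ 2 * 0 ^ 2 / 2 = 0 := by ring
    rw [e0, Real.exp_zero, mul_one, div_mul_eq_mul_div]
    refine div_le_div_of_nonneg_right ?_ h1.le
    nth_rewrite 1 [← Real.exp_log h0]
    rw [mul_comm (Real.exp (Real.log (ρ t))), mul_assoc, ← Real.exp_add]
    refine mul_le_mul_of_nonneg_left (Real.exp_le_exp.2 ?_) hpi.le
    nlinarith [mul_nonneg (sq_nonneg (s t)) (sq_nonneg (x - i))]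

lemma tendsto_integral_tiltMoment [l.IsCountablyGenerated] (hS : (0 : ℝ) ∉ S)
    (hp : ∀ x ∈ S, 0 < p x) (hρ : ∀ᶠ t in l, 0 < ρ t ∧ ρ t < 1) {x c : ℝ}
    (h : ∀ z, Filter.Tendsto (fun t => tiltMoment (insert 0 S) (sparseWeight p (ρ t)) 1
      (s t ^ 2 * x + s t * z) (s t ^ 2)) l (nhds c)) :
    Filter.Tendsto (fun t => ∫ z, tiltMoment (insert 0 S) (sparseWeight p (ρ t)) 1
      (s t ^ 2 * x + s t * z) (s t ^ 2) ∂stdG) l (nhds c) := by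
  obtain ⟨M, hM⟩ := exists_bound (insert 0 S)
  have hne : (insert 0 S).Nonempty := Finset.insert_nonempty 0 S
  have := tendsto_integral_filter_of_dominated_convergence (μ := stdG) (l := l)
    (F := fun t z => tiltMoment (insert 0 S) (sparseWeight p (ρ t)) 1
      (s t ^ 2 * x + s t * z) (s t ^ 2)) (f := fun _ => c) (fun _ => M ^ 1)
    (hρ.mono fun t ht => by
      have hw := sparseWeight_pos hS hp ht.1 ht.2
      exact (integrable_channel (continuous_tiltMoment hne hw 1) (isBdd_tiltMoment hne hw 1)
        x (s t)).aestronglyMeasurable)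
    (hρ.mono fun t ht => Filter.Eventually.of_forall fun z =>
      abs_tiltMoment_le hne (sparseWeight_pos hS hp ht.1 ht.2) hM 1 _ _)
    (integrable_const _) (Filter.Eventually.of_forall h)
  simpa using this

lemma tendsto_overlap_div [l.IsCountablyGenerated] (hS : (0 : ℝ) ∉ S)
    (hp : ∀ x ∈ S, 0 < p x) (hρ : ∀ᶠ t in l, 0 < ρ t ∧ ρ t < 1)
    (hs : Filter.Tendsto s l Filter.atTop) (P : ℝ → Prop) [DecidablePred P]
    (hlim : ∀ x ∈ S, P x → ∀ C : ℝ, Filter.Tendsto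
      (fun t => s t ^ 2 * x ^ 2 / 2 + C * s t + Real.log (ρ t)) l Filter.atTop)
    (hlim' : ∀ x ∈ S, ¬ P x → Filter.Tendsto ρ l (nhds 0) ∧ ∀ C : ℝ, Filter.Tendsto
      (fun t => s t ^ 2 * x ^ 2 / 2 + C * s t + Real.log (ρ t)) l Filter.atBot) :
    Filter.Tendsto (fun t => overlap (insert 0 S) (sparseWeight p (ρ t)) (s t) / ρ t) l
      (nhds (∑ x ∈ S, p x * if P x then x ^ 2 else 0)) := by
  have hterm : ∀ x ∈ S, Filter.Tendsto (fun t => p x * x *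
      ∫ z, tiltMoment (insert 0 S) (sparseWeight p (ρ t)) 1 (s t ^ 2 * x + s t * z) (s t ^ 2)
        ∂stdG) l (nhds (p x * if P x then x ^ 2 else 0)) := by
    intro x hx
    split_ifs with hP
    · have := (tendsto_integral_tiltMoment hS hp hρ
        (tendsto_tiltMoment_of_atTop hS hp hρ hs hx (hlim x hx hP))).const_mul (p x * x)
      rwa [show p x * x * x = p x * x ^ 2 by ring] at this
    · obtain ⟨h0, h1⟩ := hlim' x hx hP
      have := (tendsto_integral_tiltMoment hS hp hρ
        (tendsto_tiltMoment_of_atBot hS hp hρ h0 h1)).const_mul (p x * x)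
      rwa [mul_zero] at this ⊢
  refine (tendsto_finsetSum S hterm).congr' (hρ.mono fun t ht => ?_)
  exact (overlap_sparse_div hS ht.1 (s t)).symm

end Limits

section Measures

lemma integral_eq_sum_of_ae_mem {μ : Measure ℝ} [IsFiniteMeasure μ] {T : Finset ℝ}
    (h : ∀ᵐ x ∂μ, x ∈ T) (f : ℝ → ℝ) : ∫ x, f x ∂μ = ∑ x ∈ T, μ.real {x} * f x := by
  have hrestrict : μ.restrict (T : Set ℝ) = μ := Measure.restrict_eq_self_of_ae_mem h
  have := setIntegral_finset (μ := μ) T (f := f) IntegrableOn.finset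
  rw [hrestrict] at this
  simpa using this

lemma exists_atoms {P : Measure ℝ} [IsProbabilityMeasure P] {T : Finset ℝ}
    (h : ∀ᵐ x ∂P, x ∈ T) :
    ∃ S ⊆ T, (∀ x ∈ S, 0 < P.real {x}) ∧ ∀ᵐ x ∂P, x ∈ S := by
  refine ⟨T.filter fun x => 0 < P.real {x}, Finset.filter_subset _ _,
    fun x hx => (Finset.mem_filter.1 hx).2, ?_⟩
  have hnull : ∀ᵐ x ∂P, ∀ y ∈ T, P.real {y} = 0 → x ≠ y := by
    rw [Filter.eventually_all_finset]
    intro y _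
    by_cases hy : P.real {y} = 0
    · rw [measureReal_eq_zero_iff] at hy
      filter_upwards [compl_mem_ae_iff.2 hy] with x hx _ using hx
    · exact Filter.Eventually.of_forall fun x h => absurd h hy
  filter_upwards [h, hnull] with x hx hx'
  refine Finset.mem_filter.2 ⟨hx, measureReal_nonneg.lt_of_ne' fun h0 => hx' x hx h0 rfl⟩

lemma ae_sparsePrior_mem {P0 : Measure ℝ} {S : Finset ℝ} {ρ : ℝ} (h : ∀ᵐ x ∂P0, x ∈ S) :
    ∀ᵐ x ∂(sparsePrior ρ P0), x ∈ insert 0 S := by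
  rw [sparsePrior, ae_add_measure_iff]
  constructor
  · refine Measure.ae_smul_measure ?_ _
    exact (ae_dirac_iff (p := fun x => x ∈ insert 0 S) (insert 0 S).measurableSet).2
      (Finset.mem_insert_self 0 S)
  · refine Measure.ae_smul_measure ?_ _
    exact h.mono fun x hx => Finset.mem_insert_of_mem hx

variable {P0 : Measure ℝ} [IsProbabilityMeasure P0] {S : Finset ℝ} {ρ : ℝ}

instance : IsFiniteMeasure (sparsePrior ρ P0) :=
  ⟨by simp [sparsePrior]⟩

lemma sparsePrior_real_singleton (hS : (0 : ℝ) ∉ S) (h : ∀ᵐ x ∂P0, x ∈ S) (h0 : 0 < ρ)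
    (h1 : ρ < 1) (x : ℝ) :
    (sparsePrior ρ P0).real {x} = sparseWeight (fun x => P0.real {x}) ρ x := by
  have hfin : ∀ (c : ℝ) (μ : Measure ℝ) [IsFiniteMeasure μ], (ENNReal.ofReal c • μ) {x} ≠ ⊤ := by
    intro c μ _
    rw [Measure.smul_apply, smul_eq_mul]
    exact ENNReal.mul_ne_top ENNReal.ofReal_ne_top (measure_ne_top _ _)
  have hx : (sparsePrior ρ P0).real {x}
      = (1 - ρ) * (Measure.dirac (0 : ℝ)).real {x} + ρ * P0.real {x} := by
    rw [sparsePrior, measureReal_add_apply (hfin _ _) (hfin _ _),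
      measureReal_ennreal_smul_apply,
      measureReal_ennreal_smul_apply, ENNReal.toReal_ofReal h0.le,
      ENNReal.toReal_ofReal (sub_nonneg.2 h1.le)]
  rw [hx, sparseWeight]
  split_ifs with hx0
  · subst hx0
    have : P0.real {(0 : ℝ)} = 0 := by
      rw [measureReal_eq_zero_iff]
      exact measure_mono_null (fun y hy => by simpa [Set.mem_singleton_iff.1 hy] using hS) h
    simp [this, measureReal_def]
  · have : (Measure.dirac (0 : ℝ)).real {x} = 0 := by
      simp [measureReal_def, Ne.symm hx0]
    rw [this, mul_zero, zero_add]

lemma integral_sparsePrior (hS : (0 : ℝ) ∉ S) (h : ∀ᵐ x ∂P0, x ∈ S) (h0 : 0 < ρ)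
    (h1 : ρ < 1) (f : ℝ → ℝ) :
    ∫ x, f x ∂(sparsePrior ρ P0)
      = ∑ x ∈ insert 0 S, sparseWeight (fun x => P0.real {x}) ρ x * f x := by
  rw [integral_eq_sum_of_ae_mem (ae_sparsePrior_mem h) f]
  simp only [sparsePrior_real_singleton hS h h0 h1]

lemma sum_sparseWeight (hS : (0 : ℝ) ∉ S) (h : ∀ᵐ x ∂P0, x ∈ S) :
    ∑ x ∈ insert 0 S, sparseWeight (fun x => P0.real {x}) ρ x = 1 := by
  have hP := integral_eq_sum_of_ae_mem h fun _ => 1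
  simp only [mul_one, integral_const, probReal_univ, smul_eq_mul] at hP
  rw [Finset.sum_insert hS, Finset.sum_congr rfl fun x hx => sparseWeight_of_mem hS hx ρ,
    ← Finset.mul_sum, ← hP, sparseWeight, if_pos rfl]
  ring

lemma psiD_eq_freeEnergy (hS : (0 : ℝ) ∉ S) (h : ∀ᵐ x ∂P0, x ∈ S) (h0 : 0 < ρ)
    (h1 : ρ < 1) {r : ℝ} (hr : 0 ≤ r) :
    psiD P0 ρ r = freeEnergy (insert 0 S) (sparseWeight (fun x => P0.real {x}) ρ) (√r) := by
  rw [psiD, integral_sparsePrior hS h h0 h1, freeEnergy]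
  refine Finset.sum_congr rfl fun x _ => ?_
  congr 2
  ext z
  rw [integral_sparsePrior hS h h0 h1, tiltSum, Real.sq_sqrt hr]
  congr 1
  refine Finset.sum_congr rfl fun i _ => ?_
  rw [pow_zero, mul_one]
  congr 2
  ring

end Measures

/-- The rescaled overlap, a continuous extension of `gD` to `r = 0`. -/
def scaledOverlap (P0 : Measure ℝ) (S : Finset ℝ) (γ ρ r : ℝ) : ℝ :=
  overlap (insert 0 S) (sparseWeight (fun x => P0.real {x}) ρ) (√(γ * |Real.log ρ| * r)) / ρ

section Variational

lemma continuous_scaledOverlap {P0 : Measure ℝ} {S : Finset ℝ} {γ ρ : ℝ} (hS : (0 : ℝ) ∉ S)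
    (hp : ∀ x ∈ S, 0 < P0.real {x}) (h0 : 0 < ρ) (h1 : ρ < 1) :
    Continuous (scaledOverlap P0 S γ ρ) :=
  ((continuous_overlap (Finset.insert_nonempty 0 S) (sparseWeight_pos hS hp h0 h1)).comp
    (by fun_prop : Continuous fun r => √(γ * |Real.log ρ| * r))).div_const ρ

variable {P0 : Measure ℝ} [IsProbabilityMeasure P0] {S : Finset ℝ} {γ ρ : ℝ}

lemma nonempty_of_ae_mem (h : ∀ᵐ x ∂P0, x ∈ S) : S.Nonempty := by
  obtain ⟨x, hx⟩ := h.exists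
  exact ⟨x, hx⟩

lemma insert_zero_nontrivial (hS : (0 : ℝ) ∉ S) (h : ∀ᵐ x ∂P0, x ∈ S) :
    (insert 0 S).Nontrivial := by
  obtain ⟨x, hx⟩ := nonempty_of_ae_mem h
  exact ⟨0, by simp, x, by simp [hx], (ne_zero_of_mem hS hx).symm⟩

lemma abs_log_pos (h0 : 0 < ρ) (h1 : ρ < 1) : 0 < |Real.log ρ| :=
  abs_pos.2 (Real.log_neg h0 h1).ne

lemma hasDerivAt_psiD (hS : (0 : ℝ) ∉ S) (h : ∀ᵐ x ∂P0, x ∈ S)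
    (hp : ∀ x ∈ S, 0 < P0.real {x}) (h0 : 0 < ρ) (h1 : ρ < 1) {r : ℝ} (hr : 0 < r) :
    HasDerivAt (psiD P0 ρ)
      (overlap (insert 0 S) (sparseWeight (fun x => P0.real {x}) ρ) (√r) / 2) r := by
  have hd := (hasDerivAt_freeEnergy (Finset.insert_nonempty 0 S)
    (sparseWeight_pos hS hp h0 h1) (√r)).comp r (Real.hasDerivAt_sqrt hr.ne')
  have hr' := Real.sqrt_pos.2 hr
  refine (hd.congr_of_eventuallyEq ?_).congr_deriv ?_
  · filter_upwards [lt_mem_nhds hr] with t ht using psiD_eq_freeEnergy hS h h0 h1 ht.le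
  · field_simp

lemma gD_eq_scaledOverlap (hγ : 0 < γ) (hS : (0 : ℝ) ∉ S) (h : ∀ᵐ x ∂P0, x ∈ S)
    (hp : ∀ x ∈ S, 0 < P0.real {x}) (h0 : 0 < ρ) (h1 : ρ < 1) {r : ℝ} (hr : 0 < r) :
    gD P0 γ ρ r = scaledOverlap P0 S γ ρ r := by
  have hL := abs_log_pos h0 h1
  rw [gD, (hasDerivAt_psiD hS h hp h0 h1 (by positivity)).deriv, scaledOverlap]
  ring

lemma strictMonoOn_scaledOverlap (hγ : 0 < γ) (hS : (0 : ℝ) ∉ S) (h : ∀ᵐ x ∂P0, x ∈ S)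
    (hp : ∀ x ∈ S, 0 < P0.real {x}) (h0 : 0 < ρ) (h1 : ρ < 1) :
    StrictMonoOn (scaledOverlap P0 S γ ρ) (Set.Ici 0) := by
  intro r hr r' _ hrr'
  have hL := abs_log_pos h0 h1
  refine div_lt_div_of_pos_right (strictMonoOn_overlap (insert_zero_nontrivial hS h)
    (sparseWeight_pos hS hp h0 h1) (Real.sqrt_nonneg _) (Real.sqrt_nonneg _)
    (Real.sqrt_lt_sqrt ?_ ?_)) h0
  · have : 0 ≤ r := hr
    positivity
  · exact mul_lt_mul_of_pos_left hrr' (mul_pos hγ hL)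

lemma scaledOverlap_zero (hS : (0 : ℝ) ∉ S) (h : ∀ᵐ x ∂P0, x ∈ S) (h0 : 0 < ρ) :
    scaledOverlap P0 S γ ρ 0 = ρ * meanP P0 ^ 2 := by
  have hm := integral_eq_sum_of_ae_mem h fun x => x
  rw [scaledOverlap, mul_zero, Real.sqrt_zero, overlap_zero (sum_sparseWeight hS h), meanP,
    hm, Finset.sum_insert hS, mul_zero, zero_add,
    Finset.sum_congr rfl fun x hx => by rw [sparseWeight_of_mem hS hx, mul_assoc],
    ← Finset.mul_sum]
  field_simp

lemma tendsto_scaledOverlap_atTop (hγ : 0 < γ) (hS : (0 : ℝ) ∉ S) (h : ∀ᵐ x ∂P0, x ∈ S)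
    (hp : ∀ x ∈ S, 0 < P0.real {x}) (h0 : 0 < ρ) (h1 : ρ < 1) :
    Filter.Tendsto (scaledOverlap P0 S γ ρ) Filter.atTop (nhds (secondMoment P0)) := by
  have hs : Filter.Tendsto (fun r => √(γ * |Real.log ρ| * r)) Filter.atTop Filter.atTop :=
    Real.tendsto_sqrt_atTop.comp
      (Filter.tendsto_id.const_mul_atTop (mul_pos hγ (abs_log_pos h0 h1)))
  have := tendsto_overlap_div (ρ := fun _ => ρ) hS hp
    (Filter.Eventually.of_forall fun _ => ⟨h0, h1⟩) hs (fun _ => True) (fun x hx _ C => ?_) (fun x _ hx => absurd trivial hx)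
  · simp only [if_true] at this
    rwa [secondMoment, integral_eq_sum_of_ae_mem h]
  · have hd : 0 < x ^ 2 / 2 := by
      have := sq_pos_of_ne_zero (ne_zero_of_mem hS hx)
      positivity
    refine Filter.tendsto_atTop_add_const_right _ _ ?_
    refine (hs.atTop_mul_atTop₀
      (Filter.tendsto_atTop_add_const_right _ C (hs.atTop_mul_const hd))).congr fun t => ?_
    ring

lemma scaledOverlap_lt_secondMoment (hγ : 0 < γ) (hS : (0 : ℝ) ∉ S) (h : ∀ᵐ x ∂P0, x ∈ S)
    (hp : ∀ x ∈ S, 0 < P0.real {x}) (h0 : 0 < ρ) (h1 : ρ < 1) {r : ℝ} (hr : 0 ≤ r) :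
    scaledOverlap P0 S γ ρ r < secondMoment P0 := by
  have hmono := strictMonoOn_scaledOverlap hγ hS h hp h0 h1
  have hr1 : (0 : ℝ) ≤ r + 1 := by linarith
  refine (hmono hr hr1 (lt_add_one r)).trans_le
    (ge_of_tendsto (tendsto_scaledOverlap_atTop hγ hS h hp h0 h1) ?_)
  filter_upwards [Filter.eventually_ge_atTop (r + 1)] with t ht
  exact hmono.monotoneOn hr1 (hr1.trans ht) ht

lemma hasDerivAt_fD (hγ : 0 < γ) (hS : (0 : ℝ) ∉ S) (h : ∀ᵐ x ∂P0, x ∈ S)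
    (hp : ∀ x ∈ S, 0 < P0.real {x}) (h0 : 0 < ρ) (h1 : ρ < 1) (q : ℝ) {r : ℝ} (hr : 0 < r) :
    HasDerivAt (fD P0 γ ρ q) ((q - scaledOverlap P0 S γ ρ r) / 2) r := by
  have hL := abs_log_pos h0 h1
  have hψ := (hasDerivAt_psiD hS h hp h0 h1 (r := γ * |Real.log ρ| * r) (by positivity)).comp r
    ((hasDerivAt_id r).const_mul (γ * |Real.log ρ|))
  refine ((((hasDerivAt_id r).mul_const q).div_const 2).sub
    (hψ.div_const (γ * ρ * |Real.log ρ|))).congr_deriv ?_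
  rw [scaledOverlap]
  field_simp

lemma continuousOn_fD (hγ : 0 < γ) (hS : (0 : ℝ) ∉ S) (h : ∀ᵐ x ∂P0, x ∈ S)
    (hp : ∀ x ∈ S, 0 < P0.real {x}) (h0 : 0 < ρ) (h1 : ρ < 1) (q : ℝ) :
    ContinuousOn (fD P0 γ ρ q) (Set.Ici 0) := by
  have hL := abs_log_pos h0 h1
  have hc : Continuous (freeEnergy (insert 0 S) (sparseWeight (fun x => P0.real {x}) ρ)) :=
    continuous_iff_continuousAt.2 fun s => (hasDerivAt_freeEnergy (Finset.insert_nonempty 0 S)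
      (sparseWeight_pos hS hp h0 h1) s).continuousAt
  have hc' : Continuous fun r => r * q / 2 - freeEnergy (insert 0 S)
      (sparseWeight (fun x => P0.real {x}) ρ) (√(γ * |Real.log ρ| * r))
        / (γ * ρ * |Real.log ρ|) := by fun_prop
  refine hc'.continuousOn.congr fun r hr => ?_
  have : 0 ≤ r := hr
  rw [fD, psiD_eq_freeEnergy hS h h0 h1 (by positivity)]

lemma fD_lt_of_critical (hγ : 0 < γ) (hS : (0 : ℝ) ∉ S) (h : ∀ᵐ x ∂P0, x ∈ S)
    (hp : ∀ x ∈ S, 0 < P0.real {x}) (h0 : 0 < ρ) (h1 : ρ < 1) {r r' : ℝ}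
    (hr : 0 < r) (hr' : 0 ≤ r') (hne : r' ≠ r) :
    fD P0 γ ρ (scaledOverlap P0 S γ ρ r) r' < fD P0 γ ρ (scaledOverlap P0 S γ ρ r) r := by
  set q := scaledOverlap P0 S γ ρ r with hq
  have hmono := strictMonoOn_scaledOverlap hγ hS h hp h0 h1
  have hcont := continuousOn_fD hγ hS h hp h0 h1 q
  rcases hne.lt_or_gt with hlt | hgt
  · refine strictMonoOn_of_deriv_pos (convex_Icc 0 r)
      (hcont.mono Set.Icc_subset_Ici_self) (fun t ht => ?_) ⟨hr', hlt.le⟩ ⟨hr.le, le_rfl⟩ hlt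
    rw [interior_Icc] at ht
    rw [(hasDerivAt_fD hγ hS h hp h0 h1 q ht.1).deriv]
    have := hmono ht.1.le hr.le ht.2
    linarith
  · refine strictAntiOn_of_deriv_neg (convex_Ici r)
      (hcont.mono (Set.Ici_subset_Ici.2 hr.le)) (fun t ht => ?_) Set.self_mem_Ici hgt.le hgt
    rw [interior_Ici] at ht
    have ht0 : 0 < t := hr.trans ht
    rw [(hasDerivAt_fD hγ hS h hp h0 h1 q ht0).deriv]
    have := hmono hr.le ht0.le ht
    linarith

lemma fD_critical_eq_iSup (hγ : 0 < γ) (hS : (0 : ℝ) ∉ S) (h : ∀ᵐ x ∂P0, x ∈ S)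
    (hp : ∀ x ∈ S, 0 < P0.real {x}) (h0 : 0 < ρ) (h1 : ρ < 1) {r : ℝ} (hr : 0 < r) :
    fD P0 γ ρ (scaledOverlap P0 S γ ρ r) r
      = ⨆ r' : Set.Ici (0 : ℝ), fD P0 γ ρ (scaledOverlap P0 S γ ρ r) r' := by
  have hle : ∀ r' : Set.Ici (0 : ℝ), fD P0 γ ρ (scaledOverlap P0 S γ ρ r) r'
      ≤ fD P0 γ ρ (scaledOverlap P0 S γ ρ r) r := by
    intro r'
    rcases eq_or_ne (r' : ℝ) r with hrr | hrr
    · rw [hrr]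
    · exact (fD_lt_of_critical hγ hS h hp h0 h1 hr r'.2 hrr).le
  exact le_antisymm
    (le_ciSup (f := fun r' : Set.Ici (0 : ℝ) => fD P0 γ ρ (scaledOverlap P0 S γ ρ r) r')
      ⟨_, Set.forall_mem_range.2 hle⟩ ⟨r, hr.le⟩) (ciSup_le hle)

lemma eq_of_fD_eq_iSup (hγ : 0 < γ) (hS : (0 : ℝ) ∉ S) (h : ∀ᵐ x ∂P0, x ∈ S)
    (hp : ∀ x ∈ S, 0 < P0.real {x}) (h0 : 0 < ρ) (h1 : ρ < 1) {r r' : ℝ} (hr : 0 < r)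
    (hr' : 0 < r') (heq : fD P0 γ ρ (scaledOverlap P0 S γ ρ r) r'
      = ⨆ t : Set.Ici (0 : ℝ), fD P0 γ ρ (scaledOverlap P0 S γ ρ r) t) : r' = r := by
  by_contra hne
  rw [← fD_critical_eq_iSup hγ hS h hp h0 h1 hr] at heq
  exact (fD_lt_of_critical hγ hS h hp h0 h1 hr hr'.le hne).ne heq

end Variational

section Asymptotics

/-- The radius at which `gD` is evaluated: `e = -1` for `aD` and `e = 1` for `bD`. -/
def threshold (γ e v ρ : ℝ) : ℝ := 2 * (1 + e * |Real.log ρ| ^ (-(1 : ℝ) / 4)) / (γ * v ^ 2)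

lemma tendsto_abs_log_rpow :
    Filter.Tendsto (fun ρ : ℝ => |Real.log ρ| ^ ((1 : ℝ) / 4)) (nhdsWithin 0 (Set.Ioi 0))
      Filter.atTop :=
  (tendsto_rpow_atTop (by norm_num)).comp
    (Filter.tendsto_abs_atBot_atTop.comp Real.tendsto_log_nhdsGT_zero)

lemma abs_log_rpow_neg (ρ : ℝ) :
    |Real.log ρ| ^ (-(1 : ℝ) / 4) = (|Real.log ρ| ^ ((1 : ℝ) / 4))⁻¹ := by
  rw [← Real.rpow_neg (abs_nonneg _)]
  norm_num

lemma abs_log_eq_pow (ρ : ℝ) : |Real.log ρ| = (|Real.log ρ| ^ ((1 : ℝ) / 4)) ^ 4 := by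
  rw [← Real.rpow_natCast, ← Real.rpow_mul (abs_nonneg _)]
  norm_num

lemma tendsto_abs_log_rpow_neg :
    Filter.Tendsto (fun ρ : ℝ => |Real.log ρ| ^ (-(1 : ℝ) / 4)) (nhdsWithin 0 (Set.Ioi 0))
      (nhds 0) := by
  simp only [abs_log_rpow_neg]
  exact tendsto_abs_log_rpow.inv_tendsto_atTop

lemma eventually_lt_one : ∀ᶠ ρ : ℝ in nhdsWithin 0 (Set.Ioi 0), 0 < ρ ∧ ρ < 1 :=
  Ioo_mem_nhdsGT one_pos

lemma tendsto_quartic_atTop {α : Type*} {l : Filter α} {t s : α → ℝ}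
    (ht : Filter.Tendsto t l Filter.atTop) {a b C D : ℝ} (hab : 0 < a ∨ a = 0 ∧ 0 < b)
    (hs : ∀ᶠ i in l, |s i| ≤ D * t i ^ 2) :
    Filter.Tendsto (fun i => a * t i ^ 4 + b * t i ^ 3 + C * s i) l Filter.atTop := by
  have hlin : Filter.Tendsto (fun i => t i * (a * t i + b)) l Filter.atTop := by
    rcases hab with ha | ⟨rfl, hb⟩
    · exact ht.atTop_mul_atTop₀
        (Filter.tendsto_atTop_add_const_right _ _ (ht.const_mul_atTop ha))
    · simpa using ht.atTop_mul_const hb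
  have hpoly : Filter.Tendsto (fun i => t i ^ 2 * (t i * (a * t i + b) + -(|C| * D))) l
      Filter.atTop :=
    ((Filter.tendsto_pow_atTop two_ne_zero).comp ht).atTop_mul_atTop₀
      (Filter.tendsto_atTop_add_const_right _ _ hlin)
  refine Filter.tendsto_atTop_mono' l (hs.mono fun i hi => ?_) hpoly
  have h1 : -(C * s i) ≤ |C| * (D * t i ^ 2) :=
    (neg_le_abs _).trans (by rw [abs_mul]; gcongr)
  dsimp only
  linarith

variable {γ e v : ℝ}

lemma tendsto_overlap_threshold (hγ : 0 < γ) (hv : 0 < v) (he : |e| ≤ 1) {S : Finset ℝ}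
    {p : ℝ → ℝ} (hS : (0 : ℝ) ∉ S) (hp : ∀ x ∈ S, 0 < p x) (P : ℝ → Prop) [DecidablePred P]
    (hP : ∀ x, P x → v < |x| ∨ |x| = v ∧ 0 < e) (hP' : ∀ x, ¬ P x → |x| < v ∨ |x| = v ∧ e < 0) :
    Filter.Tendsto (fun ρ => overlap (insert 0 S) (sparseWeight p ρ)
        (√(γ * |Real.log ρ| * threshold γ e v ρ)) / ρ) (nhdsWithin 0 (Set.Ioi 0))
      (nhds (∑ x ∈ S, p x * if P x then x ^ 2 else 0)) := by
  set t : ℝ → ℝ := fun ρ => |Real.log ρ| ^ ((1 : ℝ) / 4) with ht_def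
  have ht : Filter.Tendsto t (nhdsWithin 0 (Set.Ioi 0)) Filter.atTop := tendsto_abs_log_rpow
  obtain ⟨he1, he2⟩ := abs_le.1 he
  have hR : ∀ ρ, 1 ≤ t ρ → γ * |Real.log ρ| * threshold γ e v ρ
      = 2 * (t ρ ^ 4 + e * t ρ ^ 3) / v ^ 2 := by
    intro ρ h1
    have h0 : t ρ ≠ 0 := by linarith
    have hl : |Real.log ρ| = t ρ ^ 4 := abs_log_eq_pow ρ
    have hn : |Real.log ρ| ^ (-(1 : ℝ) / 4) = (t ρ)⁻¹ := abs_log_rpow_neg ρ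
    rw [threshold, hn, hl]
    field_simp
  have hnn : ∀ ρ, 1 ≤ t ρ → 0 ≤ 2 * (t ρ ^ 4 + e * t ρ ^ 3) / v ^ 2 := by
    intro ρ h1
    have h3 : 0 ≤ t ρ ^ 3 := by positivity
    have : 0 ≤ t ρ ^ 4 + e * t ρ ^ 3 := by
      nlinarith [mul_nonneg h3 (by linarith : 0 ≤ t ρ + e)]
    positivity
  have hsq : ∀ᶠ ρ in nhdsWithin (0 : ℝ) (Set.Ioi 0),
      √(γ * |Real.log ρ| * threshold γ e v ρ) ^ 2 = 2 * (t ρ ^ 4 + e * t ρ ^ 3) / v ^ 2 := by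
    filter_upwards [ht.eventually_ge_atTop 1] with ρ h1
    rw [hR ρ h1, Real.sq_sqrt (hnn ρ h1)]
  have hbd : ∀ᶠ ρ in nhdsWithin (0 : ℝ) (Set.Ioi 0),
      |√(γ * |Real.log ρ| * threshold γ e v ρ)| ≤ 2 / v * t ρ ^ 2 := by
    filter_upwards [ht.eventually_ge_atTop 1] with ρ h1
    rw [abs_of_nonneg (Real.sqrt_nonneg _), hR ρ h1]
    refine Real.sqrt_le_iff.2 ⟨by positivity, ?_⟩
    rw [mul_pow, div_pow, div_mul_eq_mul_div]
    refine div_le_div_of_nonneg_right ?_ (by positivity)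
    have h3 : 0 ≤ t ρ ^ 3 := by positivity
    nlinarith [mul_nonneg h3 (by linarith : 0 ≤ t ρ - e)]
  have hlog : ∀ᶠ ρ in nhdsWithin (0 : ℝ) (Set.Ioi 0), Real.log ρ = -t ρ ^ 4 := by
    filter_upwards [eventually_lt_one] with ρ hρ
    rw [← abs_log_eq_pow, abs_of_neg (Real.log_neg hρ.1 hρ.2), neg_neg]
  have hs : Filter.Tendsto (fun ρ => √(γ * |Real.log ρ| * threshold γ e v ρ))
      (nhdsWithin 0 (Set.Ioi 0)) Filter.atTop := by
    refine Real.tendsto_sqrt_atTop.comp ?_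
    have h2 : 0 < 2 / v ^ 2 := by positivity
    refine (tendsto_quartic_atTop ht (a := 2 / v ^ 2) (b := 2 / v ^ 2 * e) (C := 0) (s := 0)
      (D := 0) (Or.inl h2) (by simp)).congr' ?_
    filter_upwards [ht.eventually_ge_atTop 1] with ρ h1
    rw [hR ρ h1]
    simp
    ring
  have hv2 : 0 < v ^ 2 := by positivity
  refine tendsto_overlap_div hS hp eventually_lt_one hs P (fun x _ hx C => ?_) (fun x _ hx =>
    ⟨tendsto_nhdsWithin_of_tendsto_nhds Filter.tendsto_id, fun C => ?_⟩)
  · have hab : 0 < x ^ 2 / v ^ 2 - 1 ∨ x ^ 2 / v ^ 2 - 1 = 0 ∧ 0 < x ^ 2 / v ^ 2 * e := by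
      rcases hP x hx with hlt | ⟨heq, he0⟩
      · left
        rw [sub_pos, one_lt_div hv2]
        exact sq_lt_sq.2 (by rwa [abs_of_pos hv])
      · right
        have : x ^ 2 / v ^ 2 = 1 := by rw [← sq_abs x, heq, div_self hv2.ne']
        rw [this]
        exact ⟨sub_self 1, by linarith⟩
    refine (tendsto_quartic_atTop ht (C := C) hab hbd).congr' ?_
    filter_upwards [hsq, hlog] with ρ h1 h2
    rw [h1, h2]
    ring
  · have hab : 0 < 1 - x ^ 2 / v ^ 2 ∨ 1 - x ^ 2 / v ^ 2 = 0 ∧ 0 < -(x ^ 2 / v ^ 2 * e) := by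
      rcases hP' x hx with hlt | ⟨heq, he0⟩
      · left
        rw [sub_pos, div_lt_one hv2]
        exact sq_lt_sq.2 (by rwa [abs_of_pos hv])
      · right
        have : x ^ 2 / v ^ 2 = 1 := by rw [← sq_abs x, heq, div_self hv2.ne']
        rw [this]
        exact ⟨sub_self 1, by linarith⟩
    rw [← Filter.tendsto_neg_atTop_iff]
    refine (tendsto_quartic_atTop ht (C := -C) hab hbd).congr' ?_
    filter_upwards [hsq, hlog] with ρ h1 h2
    rw [h1, h2]
    ring

end Asymptotics

lemma threshold_pos {γ e v ρ : ℝ} (hγ : 0 < γ) (hv : 0 < v)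
    (h : 0 < 1 + e * |Real.log ρ| ^ (-(1 : ℝ) / 4)) : 0 < threshold γ e v ρ := by
  rw [threshold]
  positivity

lemma threshold_one_pos {γ v ρ : ℝ} (hγ : 0 < γ) (hv : 0 < v) : 0 < threshold γ 1 v ρ :=
  threshold_pos hγ hv (by positivity)

lemma threshold_neg_one_pos {γ v ρ : ℝ} (hγ : 0 < γ) (hv : 0 < v)
    (h : |Real.log ρ| ^ (-(1 : ℝ) / 4) < 1) : 0 < threshold γ (-1) v ρ :=
  threshold_pos hγ hv (by linarith)

lemma threshold_neg_one_lt {γ v ρ : ℝ} (hγ : 0 < γ) (hv : 0 < v) (h0 : 0 < ρ) (h1 : ρ < 1) :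
    threshold γ (-1) v ρ < threshold γ 1 v ρ := by
  have := Real.rpow_pos_of_pos (abs_log_pos h0 h1) (-(1 : ℝ) / 4)
  rw [threshold, threshold]
  gcongr
  linarith

lemma aD_eq_gD_threshold (P0 : Measure ℝ) (γ ρ v : ℝ) :
    aD P0 γ ρ v = gD P0 γ ρ (threshold γ (-1) v ρ) := by
  rw [aD, threshold, neg_one_mul, ← sub_eq_add_neg]

lemma bD_eq_gD_threshold (P0 : Measure ℝ) (γ ρ v : ℝ) :
    bD P0 γ ρ v = gD P0 γ ρ (threshold γ 1 v ρ) := by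
  rw [bD, threshold, one_mul]

lemma eventually_threshold_lt {γ v w : ℝ} (hγ : 0 < γ) (hv : 0 < v) (hvw : v < w) :
    ∀ᶠ ρ in nhdsWithin 0 (Set.Ioi 0), threshold γ 1 w ρ < threshold γ (-1) v ρ := by
  have hlim : ∀ e u : ℝ, Filter.Tendsto (threshold γ e u) (nhdsWithin 0 (Set.Ioi 0))
      (nhds (2 * (1 + e * 0) / (γ * u ^ 2))) := fun e u =>
    (((tendsto_abs_log_rpow_neg.const_mul e).const_add 1).const_mul 2).div_const _
  refine (hlim 1 w).eventually_lt (hlim (-1) v) ?_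
  rw [mul_zero, mul_zero]
  gcongr

lemma abs_log_rpow_neg_lt_one {ρ : ℝ} (h0 : 0 < ρ) (h : ρ < Real.exp (-1)) :
    |Real.log ρ| ^ (-(1 : ℝ) / 4) < 1 := by
  have hlog : Real.log ρ < -1 := (Real.log_lt_iff_lt_exp h0).2 h
  refine Real.rpow_lt_one_of_one_lt_of_neg ?_ (by norm_num)
  rw [abs_of_neg (by linarith)]
  linarith

lemma exists_atoms_of_support {K : ℕ} (hK : 0 < K) {v : Fin K → ℝ} (hvpos : 0 < v ⟨0, hK⟩)
    (hvmono : StrictMono v) {P0 : Measure ℝ} [IsProbabilityMeasure P0]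
    (hsupp : ∀ᵐ x ∂P0, ∃ k : Fin K, x = v k ∨ x = -(v k)) :
    ∃ S : Finset ℝ, (0 : ℝ) ∉ S ∧ (∀ᵐ x ∂P0, x ∈ S) ∧ ∀ x ∈ S, 0 < P0.real {x} := by
  have hv : ∀ k, 0 < v k := fun k => hvpos.trans_le (hvmono.monotone (Nat.zero_le k))
  obtain ⟨S, hST, hp, h⟩ := exists_atoms
    (T := Finset.univ.image v ∪ Finset.univ.image fun k => -v k) (hsupp.mono fun x hx => by
      obtain ⟨k, rfl | rfl⟩ := hx <;> simp)
  refine ⟨S, fun h0 => ?_, h, hp⟩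
  have := hST h0
  simp only [Finset.mem_union, Finset.mem_image, Finset.mem_univ, true_and, neg_eq_zero,
    or_self] at this
  obtain ⟨k, hk⟩ := this
  exact (hv k).ne' hk

section

variable {P0 : Measure ℝ} [IsProbabilityMeasure P0] {S : Finset ℝ} {γ ρ v : ℝ}

lemma aD_eq_scaledOverlap (hγ : 0 < γ) (hS : (0 : ℝ) ∉ S) (h : ∀ᵐ x ∂P0, x ∈ S)
    (hp : ∀ x ∈ S, 0 < P0.real {x}) (h0 : 0 < ρ) (h1 : ρ < 1) (hv : 0 < v)
    (hτ : |Real.log ρ| ^ (-(1 : ℝ) / 4) < 1) :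
    aD P0 γ ρ v = scaledOverlap P0 S γ ρ (threshold γ (-1) v ρ) := by
  rw [aD_eq_gD_threshold,
    gD_eq_scaledOverlap hγ hS h hp h0 h1 (threshold_neg_one_pos hγ hv hτ)]

lemma bD_eq_scaledOverlap (hγ : 0 < γ) (hS : (0 : ℝ) ∉ S) (h : ∀ᵐ x ∂P0, x ∈ S)
    (hp : ∀ x ∈ S, 0 < P0.real {x}) (h0 : 0 < ρ) (h1 : ρ < 1) (hv : 0 < v) :
    bD P0 γ ρ v = scaledOverlap P0 S γ ρ (threshold γ 1 v ρ) := by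
  rw [bD_eq_gD_threshold, gD_eq_scaledOverlap hγ hS h hp h0 h1 (threshold_one_pos hγ hv)]

lemma tendsto_aD (hγ : 0 < γ) (hS : (0 : ℝ) ∉ S) (h : ∀ᵐ x ∂P0, x ∈ S)
    (hp : ∀ x ∈ S, 0 < P0.real {x}) (hv : 0 < v) :
    Filter.Tendsto (fun ρ => aD P0 γ ρ v) (nhdsWithin 0 (Set.Ioi 0))
      (nhds (truncSMgt P0 v)) := by
  rw [truncSMgt, integral_eq_sum_of_ae_mem h]
  refine (tendsto_overlap_threshold (e := -1) hγ hv (by norm_num) hS hp (fun x => v < |x|)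
    (fun x hx => Or.inl hx) (fun x hx => ?_)).congr' ?_
  · exact (not_lt.1 hx).lt_or_eq.imp_right fun heq => ⟨heq, by norm_num⟩
  · filter_upwards [eventually_lt_one, tendsto_abs_log_rpow_neg.eventually_lt_const one_pos]
      with ρ hρ hτ
    rw [aD_eq_scaledOverlap hγ hS h hp hρ.1 hρ.2 hv hτ, scaledOverlap]

lemma tendsto_bD (hγ : 0 < γ) (hS : (0 : ℝ) ∉ S) (h : ∀ᵐ x ∂P0, x ∈ S)
    (hp : ∀ x ∈ S, 0 < P0.real {x}) (hv : 0 < v) :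
    Filter.Tendsto (fun ρ => bD P0 γ ρ v) (nhdsWithin 0 (Set.Ioi 0))
      (nhds (truncSMge P0 v)) := by
  rw [truncSMge, integral_eq_sum_of_ae_mem h]
  refine (tendsto_overlap_threshold (e := 1) hγ hv (by norm_num) hS hp (fun x => v ≤ |x|)
    (fun x hx => ?_) (fun x hx => Or.inl (not_le.1 hx))).congr' ?_
  · exact hx.lt_or_eq.imp_right fun heq => ⟨heq.symm, by norm_num⟩
  · filter_upwards [eventually_lt_one] with ρ hρ
    rw [bD_eq_scaledOverlap hγ hS h hp hρ.1 hρ.2 hv, scaledOverlap]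

lemma existsUnique_maximizer (hγ : 0 < γ) (hS : (0 : ℝ) ∉ S) (h : ∀ᵐ x ∂P0, x ∈ S)
    (hp : ∀ x ∈ S, 0 < P0.real {x}) (h0 : 0 < ρ) (h1 : ρ < 1) {q : ℝ}
    (hq : q ∈ Set.Ioo (ρ * meanP P0 ^ 2) (secondMoment P0)) :
    ∃! r : ℝ, 0 < r ∧ fD P0 γ ρ q r = ⨆ r' : Set.Ici (0 : ℝ), fD P0 γ ρ q (r' : ℝ) := by
  obtain ⟨R, hR, hR0⟩ := (((tendsto_scaledOverlap_atTop hγ hS h hp h0 h1).eventually_const_lt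
    hq.2).and (Filter.eventually_gt_atTop 0)).exists
  obtain ⟨r, hr, rfl⟩ := intermediate_value_Ioo hR0.le
    (continuous_scaledOverlap hS hp h0 h1 (γ := γ)).continuousOn
    (show q ∈ Set.Ioo _ _ from ⟨by rw [scaledOverlap_zero hS h h0]; exact hq.1, hR⟩)
  exact ⟨r, ⟨hr.1, fD_critical_eq_iSup hγ hS h hp h0 h1 hr.1⟩, fun r' hr' =>
    eq_of_fD_eq_iSup hγ hS h hp h0 h1 hr.1 hr'.1 hr'.2⟩

lemma mem_Icc_of_fD_eq_iSup (hγ : 0 < γ) (hS : (0 : ℝ) ∉ S) (h : ∀ᵐ x ∂P0, x ∈ S)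
    (hp : ∀ x ∈ S, 0 < P0.real {x}) (h0 : 0 < ρ) (h1 : ρ < 1) {s t q r : ℝ} (hs : 0 < s)
    (hst : s ≤ t) (hq : q ∈ Set.Icc (scaledOverlap P0 S γ ρ s) (scaledOverlap P0 S γ ρ t))
    (hr : 0 < r) (heq : fD P0 γ ρ q r = ⨆ r' : Set.Ici (0 : ℝ), fD P0 γ ρ q (r' : ℝ)) :
    r ∈ Set.Icc s t := by
  obtain ⟨u, hu, rfl⟩ := intermediate_value_Icc hst
    (continuous_scaledOverlap hS hp h0 h1 (γ := γ)).continuousOn hq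
  rwa [eq_of_fD_eq_iSup hγ hS h hp h0 h1 (hs.trans_le hu.1) hr heq]

end

/-- Lemma 7 of the paper: location of the maximizer of
r ↦ rq/2 − (1/α)ψ_ρ((α/ρ)r) for a discrete prior with finite support. -/
theorem location_of_maximizer
    (γ : ℝ) (hγ : 0 < γ)
    (K : ℕ) (hK : 0 < K) (v : Fin K → ℝ) (hvpos : 0 < v ⟨0, hK⟩) (hvmono : StrictMono v)
    (P0 : Measure ℝ) [IsProbabilityMeasure P0]
    (hsupp : ∀ᵐ x ∂P0, ∃ k : Fin K, x = v k ∨ x = -(v k)) :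
    -- (i) ordering of the a's and b's for ρ small enough
    (∃ ρ0 > (0 : ℝ), ∀ ρ : ℝ, 0 < ρ → ρ < ρ0 →
      (ρ * (meanP P0) ^ 2 < aD P0 γ ρ (v ⟨K - 1, by omega⟩)) ∧
      (∀ j : Fin K, aD P0 γ ρ (v j) < bD P0 γ ρ (v j)) ∧
      (∀ j : Fin K, ∀ h : (j : ℕ) + 1 < K, bD P0 γ ρ (v ⟨(j : ℕ) + 1, h⟩) < aD P0 γ ρ (v j)) ∧
      (bD P0 γ ρ (v ⟨0, hK⟩) < secondMoment P0)) ∧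
    -- (ii) limits of a and b as ρ → 0⁺
    (∀ j : Fin K,
      Filter.Tendsto (fun ρ => aD P0 γ ρ (v j)) (nhdsWithin 0 (Set.Ioi 0))
        (nhds (truncSMgt P0 (v j))) ∧
      Filter.Tendsto (fun ρ => bD P0 γ ρ (v j)) (nhdsWithin 0 (Set.Ioi 0))
        (nhds (truncSMge P0 (v j)))) ∧
    -- (iii) existence and uniqueness of the maximizer
    (∀ ρ ∈ Set.Ioo (0 : ℝ) 1,
      ∀ q ∈ Set.Ioo (ρ * (meanP P0) ^ 2) (secondMoment P0),
        ∃! r : ℝ, 0 < r ∧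
          fD P0 γ ρ q r = ⨆ r' : Set.Ici (0 : ℝ), fD P0 γ ρ q (r' : ℝ)) ∧
    -- (iv) location of the maximizer on [a_ρ^{(j)}, b_ρ^{(j)}]
    (∀ ρ ∈ Set.Ioo (0 : ℝ) (Real.exp (-1)), ∀ j : Fin K,
      (∀ q ∈ Set.Icc (aD P0 γ ρ (v j)) (bD P0 γ ρ (v j)),
        ∀ r : ℝ, 0 < r →
          fD P0 γ ρ q r = (⨆ r' : Set.Ici (0 : ℝ), fD P0 γ ρ q (r' : ℝ)) →
          2 * (1 - |Real.log ρ| ^ (-(1 : ℝ) / 4)) / (γ * v j ^ 2) ≤ r ∧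
            r ≤ 2 * (1 + |Real.log ρ| ^ (-(1 : ℝ) / 4)) / (γ * v j ^ 2)) ∧
      fD P0 γ ρ (aD P0 γ ρ (v j)) (2 * (1 - |Real.log ρ| ^ (-(1 : ℝ) / 4)) / (γ * v j ^ 2))
        = (⨆ r' : Set.Ici (0 : ℝ), fD P0 γ ρ (aD P0 γ ρ (v j)) (r' : ℝ)) ∧
      fD P0 γ ρ (bD P0 γ ρ (v j)) (2 * (1 + |Real.log ρ| ^ (-(1 : ℝ) / 4)) / (γ * v j ^ 2))
        = (⨆ r' : Set.Ici (0 : ℝ), fD P0 γ ρ (bD P0 γ ρ (v j)) (r' : ℝ))) := by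
  obtain ⟨S, hS, h, hp⟩ := exists_atoms_of_support hK hvpos hvmono hsupp
  have hv : ∀ k, 0 < v k := fun k => hvpos.trans_le (hvmono.monotone (Nat.zero_le k))
  refine ⟨?_, fun j => ⟨tendsto_aD hγ hS h hp (hv j), tendsto_bD hγ hS h hp (hv j)⟩,
    fun ρ hρ q hq => existsUnique_maximizer hγ hS h hp hρ.1 hρ.2 hq, fun ρ hρ j => ?_⟩
  · have hgap : ∀ᶠ ρ in nhdsWithin (0 : ℝ) (Set.Ioi 0), ∀ j : Fin K, ∀ hj : (j : ℕ) + 1 < K,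
        threshold γ 1 (v ⟨(j : ℕ) + 1, hj⟩) ρ < threshold γ (-1) (v j) ρ := by
      refine Filter.eventually_all.2 fun j => Filter.eventually_all.2 fun hj =>
        eventually_threshold_lt hγ (hv j) (hvmono ?_)
      exact Nat.lt_succ_self (j : ℕ)
    obtain ⟨ρ0, hρ0, hsub⟩ := mem_nhdsGT_iff_exists_Ioo_subset.1
      (eventually_lt_one.and
        ((tendsto_abs_log_rpow_neg.eventually_lt_const one_pos).and hgap))
    refine ⟨ρ0, hρ0, fun ρ hpos hlt => ?_⟩
    obtain ⟨⟨h0, h1⟩, hτ, hgap⟩ := hsub ⟨hpos, hlt⟩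
    have hmono := strictMonoOn_scaledOverlap hγ hS h hp h0 h1
    have ha := fun j => threshold_neg_one_pos (ρ := ρ) hγ (hv j) hτ
    have hb := fun j => threshold_one_pos (ρ := ρ) hγ (hv j)
    simp only [fun j => aD_eq_scaledOverlap hγ hS h hp h0 h1 (hv j) hτ,
      fun j => bD_eq_scaledOverlap hγ hS h hp h0 h1 (hv j)]
    refine ⟨?_, fun j => hmono (ha j).le (hb j).le (threshold_neg_one_lt hγ (hv j) h0 h1),
      fun j hj => hmono (hb _).le (ha j).le (hgap j hj),
      scaledOverlap_lt_secondMoment hγ hS h hp h0 h1 (hb _).le⟩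
    rw [← scaledOverlap_zero hS h h0 (γ := γ)]
    exact hmono Set.self_mem_Ici (ha _).le (ha _)
  · have h0 := hρ.1
    have h1 : ρ < 1 := hρ.2.trans (Real.exp_lt_one_iff.2 (by norm_num))
    have hτ := abs_log_rpow_neg_lt_one h0 hρ.2
    have ha := threshold_neg_one_pos hγ (hv j) hτ
    have hb := threshold_one_pos (ρ := ρ) hγ (hv j)
    have hea : 2 * (1 - |Real.log ρ| ^ (-(1 : ℝ) / 4)) / (γ * v j ^ 2)
        = threshold γ (-1) (v j) ρ := by
      rw [threshold, neg_one_mul, ← sub_eq_add_neg]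
    have heb : 2 * (1 + |Real.log ρ| ^ (-(1 : ℝ) / 4)) / (γ * v j ^ 2)
        = threshold γ 1 (v j) ρ := by
      rw [threshold, one_mul]
    rw [hea, heb, aD_eq_scaledOverlap hγ hS h hp h0 h1 (hv j) hτ,
      bD_eq_scaledOverlap hγ hS h hp h0 h1 (hv j)]
    exact ⟨fun q hq r hr heq => mem_Icc_of_fD_eq_iSup hγ hS h hp h0 h1 ha
      (threshold_neg_one_lt hγ (hv j) h0 h1).le hq hr heq,
      fD_critical_eq_iSup hγ hS h hp h0 h1 ha, fD_critical_eq_iSup hγ hS h hp h0 h1 hb⟩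

end DiscretePrior
end
end

section
/- Let Δ>0, let φ and P_A satisfy hypothesis (H2), let P_0 be a discrete distribution with finite support as described, let γ>0, and for ρ∈(0,1) set α(ρ) := γρ|ln ρ| and I(ρ) := inf_{q∈[0,E[X²]]} sup_{r≥0} i_RS(q,r;α(ρ),ρ). Then I(ρ) converges as ρ→0⁺ and lim_{ρ→0⁺} I(ρ) = min_{1≤k≤K+1} { I_{P_out}(E[X²·1{|X|≥v_k}], E[X²]) + ℙ(|X|≥v_k)/γ }, where v_{K+1} := +∞ (so the term k=K+1 reads I_{P_out}(0,E[X²])). -/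
open MeasureTheory ProbabilityTheory Real

noncomputable section

namespace GLM

/-- Standard Gaussian measure on ℝ. -/
def stdG : Measure ℝ := gaussianReal 0 1

/-- `n` i.i.d. copies of a measure on ℝ. -/
def iid (n : ℕ) (μ : Measure ℝ) : Measure (Fin n → ℝ) := Measure.pi fun _ => μ

/-- The sparse prior `(1-ρ)δ₀ + ρ P₀`. -/
def sparsePrior (ρ : ℝ) (P0 : Measure ℝ) : Measure ℝ :=
  ENNReal.ofReal (1 - ρ) • Measure.dirac 0 + ENNReal.ofReal ρ • P0

/-- Second moment of a real measure. -/
def secondMoment (P : Measure ℝ) : ℝ := ∫ x, x ^ 2 ∂P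

/-- The transition density `P_out(y|x)`. -/
def Pout (Δ : ℝ) {kA : ℕ} (PA : Measure (Fin kA → ℝ)) (φ : ℝ → (Fin kA → ℝ) → ℝ)
    (y x : ℝ) : ℝ :=
  (Real.sqrt (2 * π * Δ))⁻¹ * ∫ a, Real.exp (-(y - φ x a) ^ 2 / (2 * Δ)) ∂PA

/-- Scalar channel mutual information `I_{P_out}(q, ρ')`. -/
def IPout (Δ : ℝ) {kA : ℕ} (PA : Measure (Fin kA → ℝ)) (φ : ℝ → (Fin kA → ℝ) → ℝ)
    (q ρ' : ℝ) : ℝ :=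
  (∫ v, ∫ a, ∫ z,
      Real.log (Pout Δ PA φ (φ (Real.sqrt ρ' * v) a + Real.sqrt Δ * z) (Real.sqrt ρ' * v))
      ∂stdG ∂PA ∂stdG)
  - ∫ v, ∫ w, ∫ a, ∫ z,
      Real.log (∫ w', Pout Δ PA φ
        (φ (Real.sqrt q * v + Real.sqrt (ρ' - q) * w) a + Real.sqrt Δ * z)
        (Real.sqrt q * v + Real.sqrt (ρ' - q) * w') ∂stdG) ∂stdG ∂PA ∂stdG ∂stdG

/-- `ψ_P(r)` for the scalar additive Gaussian channel with prior `P`. -/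
def psiP (P : Measure ℝ) (r : ℝ) : ℝ :=
  ∫ xs, ∫ z, Real.log (∫ x, Real.exp (r * xs * x + Real.sqrt r * z * x - r * x ^ 2 / 2) ∂P)
    ∂stdG ∂P

/-- `I_{P_{0,n}}(r)`. -/
def IP0 (ρ : ℝ) (P0 : Measure ℝ) (r : ℝ) : ℝ :=
  r * ρ * secondMoment P0 / 2 - psiP (sparsePrior ρ P0) r

/-- Replica symmetric potential. -/
def iRS (Δ : ℝ) {kA : ℕ} (PA : Measure (Fin kA → ℝ)) (φ : ℝ → (Fin kA → ℝ) → ℝ)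
    (P0 : Measure ℝ) (α ρ q r : ℝ) : ℝ :=
  (1 / α) * IP0 ρ P0 (α / ρ * r) + IPout Δ PA φ q (secondMoment P0)
    - r * (secondMoment P0 - q) / 2

/-- density of the observations given signal and matrix. -/
def pCond (Δ : ℝ) {kA : ℕ} (PA : Measure (Fin kA → ℝ)) (φ : ℝ → (Fin kA → ℝ) → ℝ)
    (n m : ℕ) (kn : ℝ) (Φ : Fin m → Fin n → ℝ) (x : Fin n → ℝ) (y : Fin m → ℝ) : ℝ :=
  ∏ μ, Pout Δ PA φ (y μ) ((∑ i, Φ μ i * x i) / Real.sqrt kn)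

/-- marginal density of the observations given the matrix. -/
def pMarg (Δ : ℝ) {kA : ℕ} (PA : Measure (Fin kA → ℝ)) (φ : ℝ → (Fin kA → ℝ) → ℝ)
    (n m : ℕ) (P : Measure ℝ) (kn : ℝ) (Φ : Fin m → Fin n → ℝ) (y : Fin m → ℝ) : ℝ :=
  ∫ x, pCond Δ PA φ n m kn Φ x y ∂(iid n P)

/-- The observations `Y`. -/
def Yobs (Δ : ℝ) {kA : ℕ} (φ : ℝ → (Fin kA → ℝ) → ℝ) (n m : ℕ) (kn : ℝ)
    (Φ : Fin m → Fin n → ℝ) (x : Fin n → ℝ) (a : Fin m → Fin kA → ℝ) (z : Fin m → ℝ) :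
    Fin m → ℝ :=
  fun μ => φ ((∑ i, Φ μ i * x i) / Real.sqrt kn) (a μ) + Real.sqrt Δ * z μ

/-- The conditional mutual information `I(X*;Y|Φ)`. -/
def MI (Δ : ℝ) {kA : ℕ} (PA : Measure (Fin kA → ℝ)) (φ : ℝ → (Fin kA → ℝ) → ℝ)
    (P0 : Measure ℝ) (ρ : ℝ) (n m : ℕ) : ℝ :=
  ∫ x, ∫ Φ, ∫ a, ∫ z,
    Real.log (pCond Δ PA φ n m (n * ρ) Φ x (Yobs Δ φ n m (n * ρ) Φ x a z)
      / pMarg Δ PA φ n m (sparsePrior ρ P0) (n * ρ) Φ (Yobs Δ φ n m (n * ρ) Φ x a z))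
    ∂(iid m stdG) ∂(Measure.pi fun _ : Fin m => PA) ∂(Measure.pi fun _ : Fin m => iid n stdG)
    ∂(iid n (sparsePrior ρ P0))

/-- The truncated second moment E[X^2 * 1(|X| >= v)]. -/
def truncSMge (P : Measure ℝ) (v : ℝ) : ℝ := ∫ x, if v ≤ |x| then x ^ 2 else 0 ∂P

/-- The tail probability P(|X| >= v). -/
def tailProb (P : Measure ℝ) (v : ℝ) : ℝ := (P {x | v ≤ |x|}).toReal

instance isProbabilityMeasure_stdG : IsProbabilityMeasure stdG := by
  unfold stdG; infer_instance

section FiniteSupport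

variable {P : Measure ℝ} [IsFiniteMeasure P] {s : Finset ℝ}

lemma integrable_of_ae_mem_finset (h : ∀ᵐ x ∂P, x ∈ s) (f : ℝ → ℝ) : Integrable f P := by
  have h1 : IntegrableOn f s P := IntegrableOn.finset
  rwa [IntegrableOn, Measure.restrict_eq_self_of_ae_mem (by simpa using h)] at h1

lemma integral_eq_sum_of_ae_mem_finset (h : ∀ᵐ x ∂P, x ∈ s) (f : ℝ → ℝ) :
    ∫ x, f x ∂P = ∑ x ∈ s, P.real {x} * f x := by
  have h1 := setIntegral_finset s (IntegrableOn.finset (μ := P) (f := f))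
  rwa [Measure.restrict_eq_self_of_ae_mem (by simpa using h)] at h1

lemma exists_pos_le_measureReal_singleton (h : ∀ᵐ x ∂P, x ∈ s) :
    ∃ c > 0, ∀ᵐ x ∂P, c ≤ P.real {x} := by
  have hpos : ∀ᵐ x ∂P, 0 < P.real {x} := by
    have : ∀ᵐ x ∂P, ∀ y ∈ s, x = y → 0 < P.real {y} := by
      refine (ae_ball_iff s.countable_toSet).2 fun y _ => ?_
      rcases eq_or_ne (P {y}) 0 with h0 | h0
      · filter_upwards [compl_mem_ae_iff.2 h0] with x hx hxy
        exact absurd hxy hx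
      · exact ae_of_all _ fun _ _ => ENNReal.toReal_pos h0 (measure_ne_top _ _)
    filter_upwards [this, h] with x hx hxs using hx x hxs rfl
  set t := s.filter fun x => 0 < P.real {x} with ht
  rcases t.eq_empty_or_nonempty with he | hne
  · refine ⟨1, one_pos, ?_⟩
    filter_upwards [h, hpos] with x hx hx'
    have : x ∈ t := Finset.mem_filter.2 ⟨hx, hx'⟩
    simp [he] at this
  · obtain ⟨y, hy, hmin⟩ := t.exists_min_image (fun x => P.real {x}) hne
    refine ⟨P.real {y}, (Finset.mem_filter.1 hy).2, ?_⟩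
    filter_upwards [h, hpos] with x hx hx' using hmin x (Finset.mem_filter.2 ⟨hx, hx'⟩)

end FiniteSupport

lemma integral_sparsePrior {P : Measure ℝ} {ρ : ℝ} (h0 : 0 ≤ ρ) (h1 : ρ ≤ 1) {f : ℝ → ℝ}
    (hf : Integrable f P) :
    ∫ x, f x ∂(sparsePrior ρ P) = (1 - ρ) * f 0 + ρ * ∫ x, f x ∂P := by
  have hd : Integrable f (Measure.dirac 0) := integrable_dirac (by simp)
  rw [sparsePrior, integral_add_measure (hd.smul_measure ENNReal.ofReal_ne_top)
    (hf.smul_measure ENNReal.ofReal_ne_top), integral_smul_measure, integral_smul_measure,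
    integral_dirac, ENNReal.toReal_ofReal h0, ENNReal.toReal_ofReal (by linarith), smul_eq_mul,
    smul_eq_mul]

section GaussianMoments

lemma integrable_stdG_quadratic (a b c : ℝ) :
    Integrable (fun z => a + b * z + c * z ^ 2) stdG := by
  have h1 : Integrable (fun z : ℝ => z) stdG :=
    (memLp_id_gaussianReal' (μ := 0) (v := 1) 1 (by simp)).integrable le_rfl
  have h2 : Integrable (fun z : ℝ => z ^ 2) stdG :=
    (memLp_id_gaussianReal' (μ := 0) (v := 1) 2 (by simp)).integrable_sq
  exact ((integrable_const a).add (h1.const_mul b)).add (h2.const_mul c)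

lemma integral_stdG_quadratic (a b c : ℝ) :
    ∫ z, (a + b * z + c * z ^ 2) ∂stdG = a + c := by
  have h1 : Integrable (fun z : ℝ => z) stdG := by
    simpa using integrable_stdG_quadratic 0 1 0
  have h2 : Integrable (fun z : ℝ => z ^ 2) stdG := by
    simpa using integrable_stdG_quadratic 0 0 1
  have e1 : ∫ z, z ∂stdG = 0 := integral_id_gaussianReal
  have e2 : ∫ z, z ^ 2 ∂stdG = 1 := by
    have h := variance_of_integral_eq_zero (X := id) (μ := stdG) (by fun_prop)
      (by simpa using e1)
    rw [stdG, variance_id_gaussianReal] at h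
    simpa [stdG] using h.symm
  rw [integral_add (f := fun z => a + b * z) ((integrable_const a).add (h1.const_mul b))
    (h2.const_mul c), integral_add (integrable_const a) (h1.const_mul b), integral_const_mul, integral_const_mul,
    e1, e2]
  simp

lemma integral_stdG_exp (t : ℝ) : ∫ z, exp (t * z - t ^ 2 / 2) ∂stdG = 1 := by
  have h := congrFun (mgf_id_gaussianReal (μ := 0) (v := 1)) t
  simp only [mgf, id] at h
  simp_rw [sub_eq_add_neg, exp_add, integral_mul_const]
  rw [stdG, h, ← exp_add]
  simp

lemma integrable_stdG_exp (t c : ℝ) : Integrable (fun z => exp (t * z - c)) stdG := by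
  simp_rw [sub_eq_add_neg, exp_add]
  exact (integrable_exp_mul_gaussianReal t).mul_const _

end GaussianMoments

section ScalarChannel

/-- The normalised evidence of the scalar channel `√r x + z` under the sparse prior. -/
def evidence (ρ : ℝ) (P : Measure ℝ) (r xs z : ℝ) : ℝ :=
  (1 - ρ) + ρ * ∫ x, exp (r * xs * x + √r * z * x - r * x ^ 2 / 2) ∂P

variable {P : Measure ℝ} {s : Finset ℝ} {ρ r : ℝ}

lemma one_sub_le_evidence (h0 : 0 ≤ ρ) (xs z : ℝ) : 1 - ρ ≤ evidence ρ P r xs z :=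
  le_add_of_nonneg_right (mul_nonneg h0 (integral_nonneg fun _ => (exp_pos _).le))

lemma evidence_pos (h0 : 0 ≤ ρ) (h1 : ρ < 1) (xs z : ℝ) : 0 < evidence ρ P r xs z :=
  (by linarith : 0 < 1 - ρ).trans_le (one_sub_le_evidence h0 xs z)

variable [IsProbabilityMeasure P]

lemma atom_le_evidence (hs : ∀ᵐ x ∂P, x ∈ s) (h0 : 0 ≤ ρ) (h1 : ρ ≤ 1) {c xs : ℝ}
    (hc : c ≤ P.real {xs}) (z : ℝ) :
    ρ * (c * exp (r * xs ^ 2 / 2 + √r * z * xs)) ≤ evidence ρ P r xs z := by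
  have h2 : P.real {xs} * exp (r * xs ^ 2 / 2 + √r * z * xs) ≤
      ∫ x, exp (r * xs * x + √r * z * x - r * x ^ 2 / 2) ∂P := by
    have h3 := setIntegral_le_integral (s := {xs})
      (integrable_of_ae_mem_finset hs fun x => exp (r * xs * x + √r * z * x - r * x ^ 2 / 2))
      (ae_of_all _ fun _ => (exp_pos _).le)
    rw [integral_singleton, smul_eq_mul] at h3
    rwa [show r * xs ^ 2 / 2 + √r * z * xs = r * xs * xs + √r * z * xs - r * xs ^ 2 / 2 by ring]
  have h4 := mul_le_mul_of_nonneg_right hc (exp_pos (r * xs ^ 2 / 2 + √r * z * xs)).le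
  have h5 := mul_le_mul_of_nonneg_left (h4.trans h2) h0
  unfold evidence
  linarith

lemma evidence_le (hs : ∀ᵐ x ∂P, x ∈ s) (h0 : 0 ≤ ρ) (hr : 0 ≤ r) (xs z : ℝ) :
    evidence ρ P r xs z ≤ (1 - ρ) + ρ * exp ((√r * xs + z) ^ 2 / 2) := by
  have h : ∫ x, exp (r * xs * x + √r * z * x - r * x ^ 2 / 2) ∂P ≤
      ∫ _, exp ((√r * xs + z) ^ 2 / 2) ∂P := by
    refine integral_mono (integrable_of_ae_mem_finset hs _) (integrable_const _) fun x => ?_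
    refine exp_le_exp.2 ?_
    have : r = √r ^ 2 := (sq_sqrt hr).symm
    generalize √r = t at *
    subst this
    nlinarith [sq_nonneg (t * xs + z - t * x)]
  rw [integral_const, probReal_univ, one_smul] at h
  unfold evidence
  gcongr

lemma continuous_evidence (hs : ∀ᵐ x ∂P, x ∈ s) (ρ r xs : ℝ) :
    Continuous fun z => evidence ρ P r xs z := by
  unfold evidence
  simp_rw [integral_eq_sum_of_ae_mem_finset hs]
  fun_prop

/-- Quadratic upper bound on the logarithm of the evidence. -/
lemma log_evidence_le (hs : ∀ᵐ x ∂P, x ∈ s) (h0 : 0 < ρ) (h1 : ρ < 1) (hr : 0 ≤ r)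
    (xs z : ℝ) :
    log (evidence ρ P r xs z) ≤ log 2 + max ((√r * xs + z) ^ 2 / 2 - |log ρ|) 0 := by
  have hL : |log ρ| = - log ρ := abs_of_neg (log_neg h0 h1)
  have h2 : ρ * exp ((√r * xs + z) ^ 2 / 2) = exp ((√r * xs + z) ^ 2 / 2 - |log ρ|) := by
    rw [hL, sub_neg_eq_add, exp_add, exp_log h0, mul_comm]
  have h3 := evidence_le (ρ := ρ) hs h0.le hr xs z
  rw [h2] at h3
  rw [log_le_iff_le_exp (evidence_pos h0.le h1 xs z), exp_add, exp_log two_pos]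
  have h4 := exp_le_exp.2 (le_max_left ((√r * xs + z) ^ 2 / 2 - |log ρ|) 0)
  have h5 := one_le_exp (le_max_right ((√r * xs + z) ^ 2 / 2 - |log ρ|) 0)
  linarith

lemma integrable_log_evidence (hs : ∀ᵐ x ∂P, x ∈ s) (h0 : 0 < ρ) (h1 : ρ < 1) (hr : 0 ≤ r)
    (xs : ℝ) : Integrable (fun z => log (evidence ρ P r xs z)) stdG := by
  refine (integrable_stdG_quadratic (log 2 + |log (1 - ρ)| + (√r * xs) ^ 2) 0 1).mono'
    ((continuous_evidence hs ρ r xs).log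
      fun z => (evidence_pos h0.le h1 xs z).ne').aestronglyMeasurable (ae_of_all _ fun z => ?_)
  have h2 := log_evidence_le hs h0 h1 hr xs z
  have h3 : log (1 - ρ) ≤ log (evidence ρ P r xs z) :=
    log_le_log (by linarith) (one_sub_le_evidence h0.le xs z)
  have h4 : max ((√r * xs + z) ^ 2 / 2 - |log ρ|) 0 ≤ (√r * xs) ^ 2 + z ^ 2 :=
    max_le (by nlinarith [sq_nonneg (√r * xs - z), abs_nonneg (log ρ)]) (by positivity)
  have h5 := neg_abs_le (log (1 - ρ))
  have h6 := abs_nonneg (log (1 - ρ))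
  have h7 : 0 < log 2 := log_pos one_lt_two
  rw [norm_eq_abs, abs_le]
  constructor <;> nlinarith [sq_nonneg (√r * xs), sq_nonneg z]

lemma log_one_sub_ge (h0 : 0 ≤ ρ) (h1 : ρ ≤ 1 / 2) : -(2 * ρ) ≤ log (1 - ρ) := by
  have h := one_sub_inv_le_log_of_pos (by linarith : (0 : ℝ) < 1 - ρ)
  have : (1 - ρ)⁻¹ ≤ 1 + 2 * ρ := by
    rw [inv_le_iff_one_le_mul₀ (by linarith)]
    nlinarith
  linarith

lemma integral_log_evidence_zero_le (hs : ∀ᵐ x ∂P, x ∈ s) (h0 : 0 < ρ) (h1 : ρ < 1)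
    (hr : 0 ≤ r) : ∫ z, log (evidence ρ P r 0 z) ∂stdG ≤ 0 := by
  have hsum : ∀ z, evidence ρ P r 0 z - 1 =
      ∑ x ∈ s, ρ * (P.real {x} * (exp (√r * x * z - (√r * x) ^ 2 / 2) - 1)) := by
    intro z
    have hone : ∑ x ∈ s, P.real {x} = 1 := by
      simpa using (integral_eq_sum_of_ae_mem_finset hs fun _ => (1 : ℝ)).symm
    rw [evidence, integral_eq_sum_of_ae_mem_finset hs, ← Finset.mul_sum]
    simp_rw [mul_sub, Finset.sum_sub_distrib, mul_one, hone, mul_pow, sq_sqrt hr,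
      mul_zero, zero_mul, zero_add, mul_right_comm (√r)]
    ring
  have hint : ∀ x ∈ s, Integrable (fun z => ρ * (P.real {x} *
      (exp (√r * x * z - (√r * x) ^ 2 / 2) - 1))) stdG := fun x _ =>
    (((integrable_stdG_exp _ _).sub (integrable_const 1)).const_mul _).const_mul _
  calc ∫ z, log (evidence ρ P r 0 z) ∂stdG
      ≤ ∫ z, (evidence ρ P r 0 z - 1) ∂stdG := by
        refine integral_mono (integrable_log_evidence hs h0 h1 hr 0) ?_
          fun z => log_le_sub_one_of_pos (evidence_pos h0.le h1 0 z)
        simp_rw [hsum]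
        exact integrable_finsetSum _ hint
    _ = 0 := by
        simp_rw [hsum]
        rw [integral_finsetSum _ hint]
        refine Finset.sum_eq_zero fun x _ => ?_
        rw [integral_const_mul, integral_const_mul, integral_sub (integrable_stdG_exp _ _)
          (integrable_const 1), integral_stdG_exp]
        simp

lemma integral_log_evidence_zero_ge (hs : ∀ᵐ x ∂P, x ∈ s) (h0 : 0 < ρ) (h1 : ρ ≤ 1 / 2)
    (hr : 0 ≤ r) : -(2 * ρ) ≤ ∫ z, log (evidence ρ P r 0 z) ∂stdG := by
  have h2 : ∫ _, -(2 * ρ) ∂stdG ≤ ∫ z, log (evidence ρ P r 0 z) ∂stdG :=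
    integral_mono (integrable_const _) (integrable_log_evidence hs h0 (by linarith) hr 0)
      fun z => (log_one_sub_ge h0.le h1).trans
        (log_le_log (by linarith) (one_sub_le_evidence h0.le 0 z))
  simpa using h2

/-- Pointwise bound whose Gaussian average is of order `√L`, uniformly in `t`. -/
lemma max_sq_div_two_sub_le {L : ℝ} (hL : 0 ≤ L) (t : ℝ) :
    ∃ b : ℝ, ∀ z, max ((t + z) ^ 2 / 2 - L) 0 ≤
      (max (t ^ 2 / 2 - L) 0 + √L) + b * z + (√L + 2) * z ^ 2 := by
  have hs := sqrt_nonneg L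
  have hsq := sq_sqrt hL
  set l := √L
  rcases le_or_gt (4 * L) (t ^ 2) with h | h
  · refine ⟨t, fun z => ?_⟩
    have h1 := le_max_left (t ^ 2 / 2 - L) 0
    refine max_le ?_ ?_
    · nlinarith [sq_nonneg z, mul_nonneg hs (sq_nonneg z)]
    · nlinarith [sq_nonneg z, mul_nonneg hs (sq_nonneg z), sq_nonneg (t / 2 + z)]
  · refine ⟨0, fun z => ?_⟩
    have h1 := le_max_left (t ^ 2 / 2 - L) 0
    have h2 := le_max_right (t ^ 2 / 2 - L) 0
    refine max_le ?_ (by nlinarith [mul_nonneg hs (sq_nonneg z), sq_nonneg z])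
    have h3 : |t| ≤ 2 * l := abs_le_of_sq_le_sq (by nlinarith) (by positivity)
    have h4 : t * z ≤ l * (1 + z ^ 2) := by
      calc t * z ≤ |t * z| := le_abs_self _
        _ = |t| * |z| := abs_mul _ _
        _ ≤ 2 * l * |z| := by gcongr
        _ ≤ l * (1 + z ^ 2) := by nlinarith [sq_nonneg (|z| - 1), sq_abs z]
    nlinarith [sq_nonneg z]

lemma integral_log_evidence_le (hs : ∀ᵐ x ∂P, x ∈ s) (h0 : 0 < ρ) (h1 : ρ < 1) (hr : 0 ≤ r)
    (xs : ℝ) : ∫ z, log (evidence ρ P r xs z) ∂stdG ≤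
      max (r * xs ^ 2 / 2 - |log ρ|) 0 + (3 + 2 * √|log ρ|) := by
  obtain ⟨b, hb⟩ := max_sq_div_two_sub_le (abs_nonneg (log ρ)) (√r * xs)
  have h2 := integral_mono (integrable_log_evidence hs h0 h1 hr xs)
    (integrable_stdG_quadratic
      (log 2 + (max ((√r * xs) ^ 2 / 2 - |log ρ|) 0 + √|log ρ|)) b (√|log ρ| + 2))
    fun z => (log_evidence_le hs h0 h1 hr xs z).trans (by linarith [hb z])
  rw [integral_stdG_quadratic, mul_pow, sq_sqrt hr] at h2
  linarith [log_two_lt_d9]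

lemma integral_log_evidence_ge (hs : ∀ᵐ x ∂P, x ∈ s) (h0 : 0 < ρ) (h1 : ρ ≤ 1 / 2)
    (hr : 0 ≤ r) {c xs : ℝ} (hc0 : 0 < c) (hc : c ≤ P.real {xs}) :
    max (r * xs ^ 2 / 2 - |log ρ|) 0 - (1 + |log c|) ≤
      ∫ z, log (evidence ρ P r xs z) ∂stdG := by
  have hi := integrable_log_evidence hs h0 (by linarith) hr xs
  have h2 : ∫ _, (-1 : ℝ) ∂stdG ≤ ∫ z, log (evidence ρ P r xs z) ∂stdG :=
    integral_mono (integrable_const _) hi fun z =>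
      (by linarith [log_one_sub_ge h0.le h1] : -1 ≤ log (1 - ρ)).trans
        (log_le_log (by linarith) (one_sub_le_evidence h0.le xs z))
  have h3 := integral_mono
    (integrable_stdG_quadratic (log ρ + log c + r * xs ^ 2 / 2) (√r * xs) 0) hi fun z => by
      have h4 := log_le_log (mul_pos h0 (mul_pos hc0 (exp_pos _))) (atom_le_evidence (r := r) hs h0.le
        (by linarith) hc z)
      rw [log_mul h0.ne' (mul_pos hc0 (exp_pos _)).ne', log_mul hc0.ne' (exp_pos _).ne', log_exp] at h4
      simp only
      linarith
  rw [integral_stdG_quadratic] at h3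
  rw [integral_const, probReal_univ, one_smul] at h2
  have hL : |log ρ| = - log ρ := abs_of_neg (log_neg h0 (by linarith))
  have h5 := neg_abs_le (log c)
  have h6 := abs_nonneg (log c)
  rcases max_cases (r * xs ^ 2 / 2 - |log ρ|) 0 with ⟨h, _⟩ | ⟨h, _⟩ <;> rw [h] <;> linarith

lemma psiP_sparsePrior (hs : ∀ᵐ x ∂P, x ∈ s) (h0 : 0 ≤ ρ) (h1 : ρ ≤ 1) :
    psiP (sparsePrior ρ P) r = (1 - ρ) * ∫ z, log (evidence ρ P r 0 z) ∂stdG +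
      ρ * ∫ xs, ∫ z, log (evidence ρ P r xs z) ∂stdG ∂P := by
  have h : ∀ xs z, ∫ x, exp (r * xs * x + √r * z * x - r * x ^ 2 / 2) ∂(sparsePrior ρ P) =
      evidence ρ P r xs z := fun xs z => by
    rw [integral_sparsePrior h0 h1 (integrable_of_ae_mem_finset hs _), evidence]
    simp
  unfold psiP
  simp_rw [h]
  rw [integral_sparsePrior h0 h1 (integrable_of_ae_mem_finset hs _)]

/-- The free entropy of the sparse scalar channel, up to an error `O(ρ √|log ρ|)` uniform in
the signal-to-noise ratio. -/
lemma abs_psiP_sub_le (hs : ∀ᵐ x ∂P, x ∈ s) :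
    ∃ C, ∀ ρ r : ℝ, 0 < ρ → ρ ≤ 1 / 2 → 0 ≤ r →
      |psiP (sparsePrior ρ P) r - ρ * ∫ x, max (r * x ^ 2 / 2 - |log ρ|) 0 ∂P| ≤
        ρ * (C + 2 * √|log ρ|) := by
  obtain ⟨c, hc0, hc⟩ := exists_pos_le_measureReal_singleton hs
  refine ⟨3 + |log c|, fun ρ r h0 h1 hr => ?_⟩
  have hi : ∀ f : ℝ → ℝ, Integrable f P := integrable_of_ae_mem_finset hs
  have hup := integral_mono (hi _) (hi _) (integral_log_evidence_le hs h0 (by linarith) hr)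
  rw [integral_add (hi _) (hi _)] at hup
  have hlo := integral_mono_ae (hi _) (hi _)
    (hc.mono fun x hx => integral_log_evidence_ge hs h0 h1 hr hc0 hx)
  rw [integral_sub (hi _) (hi _)] at hlo
  have hz1 := integral_log_evidence_zero_le hs h0 (by linarith : ρ < 1) hr
  have hz2 := integral_log_evidence_zero_ge hs h0 h1 hr
  simp only [integral_const, probReal_univ, one_smul] at hup hlo
  rw [psiP_sparsePrior hs h0.le (by linarith)]
  set F0 := ∫ z, log (evidence ρ P r 0 z) ∂stdG
  set F := ∫ xs, ∫ z, log (evidence ρ P r xs z) ∂stdG ∂P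
  set G := ∫ x, max (r * x ^ 2 / 2 - |log ρ|) 0 ∂P
  have h6 := abs_nonneg (log c)
  have hu := mul_le_mul_of_nonneg_left hup h0.le
  have hl := mul_le_mul_of_nonneg_left hlo h0.le
  have h7 := sqrt_nonneg |log ρ|
  have h8 := mul_nonneg h0.le h6
  have h9 := mul_nonneg h0.le h7
  rw [abs_le]
  constructor <;> nlinarith

end ScalarChannel
section BoundedContinuous

variable {μ : Measure ℝ} [IsProbabilityMeasure μ]

lemma integrable_of_continuous_of_bounded {f : ℝ → ℝ} (hf : Continuous f) {M : ℝ}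
    (hM : ∀ x, |f x| ≤ M) : Integrable f μ :=
  .of_bound hf.aestronglyMeasurable M (ae_of_all _ hM)

lemma abs_log_le_of_mem_Icc {m M u : ℝ} (hm : 0 < m) (hu : u ∈ Set.Icc m M) :
    |log u| ≤ |log m| + |log M| := by
  have h1 := log_le_log hm hu.1
  have h2 := log_le_log (hm.trans_le hu.1) hu.2
  have h3 := neg_abs_le (log m)
  have h4 := le_abs_self (log M)
  rw [abs_le]
  constructor <;> linarith [abs_nonneg (log m), abs_nonneg (log M)]

lemma integral_mem_Icc {f : ℝ → ℝ} (hf : Continuous f) {m M : ℝ}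
    (h : ∀ x, f x ∈ Set.Icc m M) : ∫ x, f x ∂μ ∈ Set.Icc m M := by
  have hi : Integrable f μ := integrable_of_continuous_of_bounded hf
    fun x => abs_le_max_abs_abs (h x).1 (h x).2
  constructor
  · simpa using integral_mono (integrable_const (μ := μ) m) hi fun x => (h x).1
  · simpa using integral_mono hi (integrable_const (μ := μ) M) fun x => (h x).2

lemma continuous_integral_of_mem_Icc {X : Type*} [TopologicalSpace X]
    [FirstCountableTopology X] {F : X → ℝ → ℝ} (hF : Continuous (Function.uncurry F)) {m M : ℝ}
    (h : ∀ x n, F x n ∈ Set.Icc m M) : Continuous fun x => ∫ n, F x n ∂μ :=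
  continuous_of_dominated (bound := fun _ => max |m| |M|)
    (fun x => (hF.comp (by fun_prop : Continuous fun n => (x, n))).aestronglyMeasurable)
    (fun x => ae_of_all _ fun n => abs_le_max_abs_abs (h x n).1 (h x n).2)
    (integrable_const _)
    (ae_of_all _ fun n => hF.comp (by fun_prop : Continuous fun x => (x, n)))

/-- Superadditivity of the relative entropy with respect to a product measure, for a symmetric
density: the joint entropy dominates the sum of the marginal ones. -/
lemma entropy_superadditive_of_symm {g : ℝ → ℝ → ℝ} (hg : Continuous (Function.uncurry g))
    (hsymm : ∀ n n', g n n' = g n' n) {m M : ℝ} (hm : 0 < m)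
    (hb : ∀ n n', g n n' ∈ Set.Icc m M) :
    2 * ∫ n, (∫ n', g n n' ∂μ) * log (∫ n', g n n' ∂μ) ∂μ ≤
      (∫ n, ∫ n', g n n' * log (g n n') ∂μ ∂μ) +
        (∫ n, ∫ n', g n n' ∂μ ∂μ) * log (∫ n, ∫ n', g n n' ∂μ ∂μ) := by
  set g1 : ℝ → ℝ := fun n => ∫ n', g n n' ∂μ with hg1
  have hc1 : Continuous g1 := continuous_integral_of_mem_Icc hg hb
  have hb1 : ∀ n, g1 n ∈ Set.Icc m M := fun n =>
    integral_mem_Icc (hg.comp (by fun_prop : Continuous fun n' => (n, n'))) (hb n)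
  set e := ∫ n, g1 n ∂μ with he
  have hbe : e ∈ Set.Icc m M := integral_mem_Icc hc1 hb1
  have hepos : 0 < e := hm.trans_le hbe.1
  have hM : 0 < M := hepos.trans_le hbe.2
  set D := |log m| + |log M|
  have hmul : ∀ u ∈ Set.Icc m M, ∀ w ∈ Set.Icc m M, |u * log w| ≤ M * D := fun u hu w hw => by
    rw [abs_mul, abs_of_pos (hm.trans_le hu.1)]
    exact mul_le_mul hu.2 (abs_log_le_of_mem_Icc hm hw) (abs_nonneg _) hM.le
  have hlog : Continuous fun q : ℝ × ℝ => g q.1 q.2 * log (g q.1 q.2) :=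
    hg.mul (hg.log fun q => (hm.trans_le (hb q.1 q.2).1).ne')
  have hlog1 : Continuous fun n => log (g1 n) :=
    hc1.log fun n => (hm.trans_le (hb1 n).1).ne'
  have hlog2 : Continuous fun q : ℝ × ℝ => g q.1 q.2 * log (g1 q.2) :=
    hg.mul (hlog1.comp continuous_snd)
  have hcG : Continuous fun n => ∫ n', g n n' * log (g n n') ∂μ :=
    continuous_integral_of_mem_Icc (F := fun n n' => g n n' * log (g n n')) hlog
      fun n n' => abs_le.1 (hmul _ (hb n n') _ (hb n n'))
  have hcH : Continuous fun n => ∫ n', g n n' * log (g1 n') ∂μ :=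
    continuous_integral_of_mem_Icc (F := fun n n' => g n n' * log (g1 n')) hlog2
      fun n n' => abs_le.1 (hmul _ (hb n n') _ (hb1 n'))
  have hcross : ∫ n, ∫ n', g n n' * log (g1 n') ∂μ ∂μ = ∫ n, g1 n * log (g1 n) ∂μ := by
    rw [integral_integral_swap]
    · refine integral_congr_ae (ae_of_all _ fun n => ?_)
      simp only
      rw [integral_mul_const, hg1]
      simp_rw [hsymm _ n]
    · exact .of_bound hlog2.aestronglyMeasurable (M * D)
        (ae_of_all _ fun q => hmul _ (hb q.1 q.2) _ (hb1 q.2))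
  have hpt : ∀ n n', 0 ≤ g n n' * log (g n n') - g n n' * log (g1 n') +
      (g n n' * (log e - log (g1 n) - 1) + g1 n * g1 n' / e) := fun n n' => by
    have h0 : 0 < g n n' := hm.trans_le (hb n n').1
    have h1 : 0 < g1 n := hm.trans_le (hb1 n).1
    have h2 : 0 < g1 n' := hm.trans_le (hb1 n').1
    have h3 := one_sub_inv_le_log_of_pos (by positivity : 0 < g n n' * e / (g1 n * g1 n'))
    rw [log_div (by positivity) (by positivity), log_mul h0.ne' hepos.ne',
      log_mul h1.ne' h2.ne', inv_div] at h3
    have h4 := mul_le_mul_of_nonneg_left h3 h0.le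
    have h5 : g n n' * (1 - g1 n * g1 n' / (g n n' * e)) = g n n' - g1 n * g1 n' / e := by
      field_simp
    rw [h5] at h4
    linarith
  have hslice : ∀ n, 0 ≤ (∫ n', g n n' * log (g n n') ∂μ) - (∫ n', g n n' * log (g1 n') ∂μ)
      + (g1 n * log e - g1 n * log (g1 n)) := fun n => by
    have hs : Continuous fun n' : ℝ => (n, n') := by fun_prop
    have i1 : Integrable (fun n' => g n n' * log (g n n')) μ :=
      integrable_of_continuous_of_bounded (hlog.comp hs) fun n' => hmul _ (hb n n') _ (hb n n')
    have i2 : Integrable (fun n' => g n n' * log (g1 n')) μ :=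
      integrable_of_continuous_of_bounded (hlog2.comp hs) fun n' => hmul _ (hb n n') _ (hb1 n')
    have i3 : Integrable (fun n' => g n n') μ :=
      integrable_of_continuous_of_bounded (hg.comp hs)
        fun n' => abs_le_max_abs_abs (hb n n').1 (hb n n').2
    have i4 : Integrable g1 μ :=
      integrable_of_continuous_of_bounded hc1 fun n' => abs_le_max_abs_abs (hb1 n').1 (hb1 n').2
    have h : 0 ≤ ∫ n', (g n n' * log (g n n') - g n n' * log (g1 n') +
        (g n n' * (log e - log (g1 n) - 1) + g1 n * g1 n' / e)) ∂μ :=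
      integral_nonneg fun n' => hpt n n'
    have k1 : Integrable (fun n' => g n n' * log (g n n') - g n n' * log (g1 n')) μ := i1.sub i2
    have k2 : Integrable (fun n' => g n n' * (log e - log (g1 n) - 1) + g1 n * g1 n' / e) μ :=
      (i3.mul_const _).add ((i4.const_mul _).div_const _)
    rw [integral_add k1 k2,
      integral_sub i1 i2, integral_add (i3.mul_const _) ((i4.const_mul _).div_const _),
      integral_mul_const, integral_div, integral_const_mul, ← he,
      mul_div_assoc, div_self hepos.ne'] at h
    have : ∫ n', g n n' ∂μ = g1 n := rfl
    rw [this] at h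
    linarith
  have j1 : Integrable (fun n => ∫ n', g n n' * log (g n n') ∂μ) μ :=
    integrable_of_continuous_of_bounded hcG fun n => abs_le.2 <| integral_mem_Icc
      (hlog.comp (by fun_prop : Continuous fun n' : ℝ => (n, n')))
      fun n' => abs_le.1 (hmul _ (hb n n') _ (hb n n'))
  have j2 : Integrable (fun n => ∫ n', g n n' * log (g1 n') ∂μ) μ :=
    integrable_of_continuous_of_bounded hcH fun n => abs_le.2 <| integral_mem_Icc
      (hlog2.comp (by fun_prop : Continuous fun n' : ℝ => (n, n')))
      fun n' => abs_le.1 (hmul _ (hb n n') _ (hb1 n'))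
  have j3 : Integrable g1 μ :=
    integrable_of_continuous_of_bounded hc1 fun n' => abs_le_max_abs_abs (hb1 n').1 (hb1 n').2
  have j4 : Integrable (fun n => g1 n * log (g1 n)) μ :=
    integrable_of_continuous_of_bounded (hc1.mul hlog1) fun n => hmul _ (hb1 n) _ (hb1 n)
  have h : 0 ≤ ∫ n, ((∫ n', g n n' * log (g n n') ∂μ) - (∫ n', g n n' * log (g1 n') ∂μ)
      + (g1 n * log e - g1 n * log (g1 n))) ∂μ := integral_nonneg fun n => hslice n
  have k1 : Integrable (fun n => (∫ n', g n n' * log (g n n') ∂μ) -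
      ∫ n', g n n' * log (g1 n') ∂μ) μ := j1.sub j2
  have k2 : Integrable (fun n => g1 n * log e - g1 n * log (g1 n)) μ :=
    (j3.mul_const _).sub j4
  rw [integral_add k1 k2, integral_sub j1 j2,
    integral_sub (j3.mul_const _) j4, integral_mul_const, hcross] at h
  linarith

end BoundedContinuous

/-- Convolution semigroup property of centred Gaussians. -/
lemma integral_stdG_add {F : ℝ → ℝ} (hF : Continuous F) {M : ℝ} (hM : ∀ x, |F x| ≤ M)
    {a h : ℝ} (ha : 0 ≤ a) (hh : 0 ≤ h) :
    ∫ v, ∫ n, F (√a * v + √h * n) ∂stdG ∂stdG = ∫ v, F (√(a + h) * v) ∂stdG := by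
  have hmap : ∀ {t : ℝ}, 0 ≤ t → stdG.map (√t * ·) = gaussianReal 0 t.toNNReal := by
    intro t ht
    rw [stdG, gaussianReal_map_const_mul, mul_zero, mul_one]
    congr 1
    refine NNReal.eq ?_
    rw [coe_toNNReal t ht]
    exact sq_sqrt ht
  have hint : ∀ {t : ℝ}, 0 ≤ t → ∀ {G : ℝ → ℝ}, Continuous G →
      ∫ x, G x ∂(gaussianReal 0 t.toNNReal) = ∫ v, G (√t * v) ∂stdG := by
    intro t ht G hG
    rw [← hmap ht, integral_map (by fun_prop) hG.aestronglyMeasurable]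
  have hconv : gaussianReal 0 a.toNNReal ∗ gaussianReal 0 h.toNNReal =
      gaussianReal 0 (a + h).toNNReal := by
    rw [gaussianReal_conv_gaussianReal, add_zero, toNNReal_add ha hh]
  have hcont : Continuous fun x => ∫ n, F (x + √h * n) ∂stdG :=
    continuous_integral_of_mem_Icc (F := fun x n => F (x + √h * n))
      (by unfold Function.uncurry; fun_prop) fun x n => abs_le.1 (hM _)
  rw [← hint (add_nonneg ha hh) hF, ← hconv,
    integral_conv (integrable_of_continuous_of_bounded hF hM)]
  simp_rw [fun x : ℝ => hint hh (G := fun y => F (x + y)) (by fun_prop)]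
  rw [hint ha hcont]

/-- Jointly continuous kernels squeezed between two Gaussian profiles in the first variable. -/
structure IsGaussianKernel (p : ℝ → ℝ → ℝ) (c C a b : ℝ) : Prop where
  continuous : Continuous (Function.uncurry p)
  c_pos : 0 < c
  C_pos : 0 < C
  a_pos : 0 < a
  b_pos : 0 < b
  mem_Icc : ∀ y x, p y x ∈ Set.Icc (c * exp (-(a * y ^ 2))) (C * exp (-(b * y ^ 2)))

/-- Average of `p y` over a Gaussian of mean `x` and variance `t`. -/
def smoothed (p : ℝ → ℝ → ℝ) (t y x : ℝ) : ℝ := ∫ w, p y (x + √t * w) ∂stdG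

namespace IsGaussianKernel

variable {p : ℝ → ℝ → ℝ} {c C a b : ℝ}

lemma mem_Icc_zero (hp : IsGaussianKernel p c C a b) (y x : ℝ) : p y x ∈ Set.Icc 0 C := by
  refine ⟨le_trans ?_ (hp.mem_Icc y x).1, (hp.mem_Icc y x).2.trans ?_⟩
  · have := hp.c_pos
    positivity
  · have : exp (-(b * y ^ 2)) ≤ 1 := by
      rw [exp_le_one_iff]
      nlinarith [mul_nonneg hp.b_pos.le (sq_nonneg y)]
    exact mul_le_of_le_one_right hp.C_pos.le this

lemma continuous_smoothed (hp : IsGaussianKernel p c C a b) :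
    Continuous fun q : ℝ × ℝ × ℝ => smoothed p q.1 q.2.1 q.2.2 := by
  refine continuous_integral_of_mem_Icc (m := 0) (M := C)
    (F := fun (q : ℝ × ℝ × ℝ) w => p q.2.1 (q.2.2 + √q.1 * w)) ?_ fun q w => hp.mem_Icc_zero _ _
  exact hp.continuous.comp
    (by fun_prop : Continuous fun u : (ℝ × ℝ × ℝ) × ℝ => (u.1.2.1, u.1.2.2 + √u.1.1 * u.2))

lemma smoothed_mem_Icc (hp : IsGaussianKernel p c C a b) (t y x : ℝ) :
    smoothed p t y x ∈ Set.Icc (c * exp (-(a * y ^ 2))) (C * exp (-(b * y ^ 2))) :=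
  integral_mem_Icc (hp.continuous.comp (by fun_prop : Continuous fun w => (y, x + √t * w)))
    fun _ => hp.mem_Icc _ _

lemma smoothed_pos (hp : IsGaussianKernel p c C a b) (t y x : ℝ) : 0 < smoothed p t y x :=
  (mul_pos hp.c_pos (exp_pos _)).trans_le (hp.smoothed_mem_Icc t y x).1

lemma integral_smoothed (hp : IsGaussianKernel p c C a b)
    {t h : ℝ} (ht : 0 ≤ t) (hh : 0 ≤ h) (y x : ℝ) :
    ∫ n, smoothed p t y (x + √h * n) ∂stdG = smoothed p (t + h) y x := by
  have h1 := integral_stdG_add (F := fun u => p y (x + u))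
    (hp.continuous.comp (by fun_prop : Continuous fun u => (y, x + u))) (M := C)
    (fun u => abs_le.2 ⟨by linarith [(hp.mem_Icc_zero y (x + u)).1, hp.C_pos],
      (hp.mem_Icc_zero y (x + u)).2⟩) hh ht
  unfold smoothed
  rw [add_comm t h, ← h1]
  simp_rw [add_assoc]

lemma abs_log_le (hp : IsGaussianKernel p c C a b) {y u : ℝ}
    (hu : u ∈ Set.Icc (c * exp (-(a * y ^ 2))) (C * exp (-(b * y ^ 2)))) :
    |log u| ≤ |log c| + |log C| + a * y ^ 2 := by
  have hc := hp.c_pos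
  have hC := hp.C_pos
  have hpos : 0 < c * exp (-(a * y ^ 2)) := by positivity
  have h1 := log_le_log hpos hu.1
  have h2 := log_le_log (hpos.trans_le hu.1) hu.2
  rw [log_mul hc.ne' (exp_pos _).ne', log_exp] at h1
  rw [log_mul hC.ne' (exp_pos _).ne', log_exp] at h2
  have h3 := neg_abs_le (log c)
  have h4 := le_abs_self (log C)
  have h5 := mul_nonneg hp.a_pos.le (sq_nonneg y)
  have h6 := mul_nonneg hp.b_pos.le (sq_nonneg y)
  rw [abs_le]
  constructor <;> linarith [abs_nonneg (log c), abs_nonneg (log C)]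

lemma exists_abs_mul_log_le (hp : IsGaussianKernel p c C a b) : ∃ D, ∀ y u w,
    u ∈ Set.Icc (c * exp (-(a * y ^ 2))) (C * exp (-(b * y ^ 2))) →
    w ∈ Set.Icc (c * exp (-(a * y ^ 2))) (C * exp (-(b * y ^ 2))) →
    |u * log w| ≤ D * exp (-(b / 2) * y ^ 2) := by
  have hc := hp.c_pos
  have hC := hp.C_pos
  have ha := hp.a_pos
  have hb := hp.b_pos
  refine ⟨C * (|log c| + |log C| + a * (2 / b)), fun y u w hu hw => ?_⟩
  have hu0 : 0 < u := (by positivity : 0 < c * exp (-(a * y ^ 2))).trans_le hu.1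
  have hE : exp (-(b * y ^ 2)) = exp (-(b / 2) * y ^ 2) * exp (-(b / 2) * y ^ 2) := by
    rw [← exp_add]
    ring_nf
  have h1 : exp (-(b / 2) * y ^ 2) ≤ 1 := by
    rw [exp_le_one_iff]
    nlinarith [mul_nonneg hb.le (sq_nonneg y)]
  have h2 : y ^ 2 * exp (-(b / 2) * y ^ 2) ≤ 2 / b := by
    have h3 := add_one_le_exp (b / 2 * y ^ 2)
    rw [neg_mul, exp_neg, ← div_eq_mul_inv, div_le_div_iff₀ (exp_pos _) hb]
    linarith
  set E := exp (-(b / 2) * y ^ 2) with hEdef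
  have hEpos : 0 < E := exp_pos _
  calc |u * log w| = u * |log w| := by rw [abs_mul, abs_of_pos hu0]
    _ ≤ (C * (E * E)) * (|log c| + |log C| + a * y ^ 2) :=
        mul_le_mul (hE ▸ hu.2) (hp.abs_log_le hw) (abs_nonneg _) (by positivity)
    _ = C * (((|log c| + |log C|) * E + a * (y ^ 2 * E)) * E) := by ring
    _ ≤ C * (((|log c| + |log C|) * 1 + a * (2 / b)) * E) := by gcongr
    _ = C * (|log c| + |log C| + a * (2 / b)) * E := by ring

end IsGaussianKernel

/-- Average over `v` of `u log u` at the conditional density `u` of the output `y` given `√q v`. -/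
def sliceEntropy (p : ℝ → ℝ → ℝ) (S q y : ℝ) : ℝ :=
  ∫ v, smoothed p (S - q) y (√q * v) * log (smoothed p (S - q) y (√q * v)) ∂stdG

namespace IsGaussianKernel

variable {p : ℝ → ℝ → ℝ} {c C a b : ℝ}

lemma continuous_smoothed_mul_log (hp : IsGaussianKernel p c C a b) :
    Continuous fun q : ℝ × ℝ × ℝ =>
      smoothed p q.1 q.2.1 q.2.2 * log (smoothed p q.1 q.2.1 q.2.2) :=
  hp.continuous_smoothed.mul (hp.continuous_smoothed.log fun _ => (hp.smoothed_pos _ _ _).ne')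

lemma exists_abs_smoothed_mul_log_le (hp : IsGaussianKernel p c C a b) : ∃ D, ∀ t y x,
    |smoothed p t y x * log (smoothed p t y x)| ≤ D * exp (-(b / 2) * y ^ 2) := by
  obtain ⟨D, hD⟩ := hp.exists_abs_mul_log_le
  exact ⟨D, fun t y x => hD y _ _ (hp.smoothed_mem_Icc t y x) (hp.smoothed_mem_Icc t y x)⟩

lemma exp_neg_le_one (hp : IsGaussianKernel p c C a b) (y : ℝ) : exp (-(b / 2) * y ^ 2) ≤ 1 := by
  rw [exp_le_one_iff]
  nlinarith [mul_nonneg hp.b_pos.le (sq_nonneg y)]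

lemma exists_abs_sliceEntropy_le (hp : IsGaussianKernel p c C a b) (S : ℝ) : ∃ D, ∀ q y,
    |sliceEntropy p S q y| ≤ D * exp (-(b / 2) * y ^ 2) := by
  obtain ⟨D, hD⟩ := hp.exists_abs_smoothed_mul_log_le
  refine ⟨D, fun q y => abs_le.2 <| integral_mem_Icc (hp.continuous_smoothed_mul_log.comp
    (by fun_prop : Continuous fun v => (S - q, y, √q * v))) fun v => abs_le.1 (hD _ _ _)⟩

lemma continuous_sliceEntropy (hp : IsGaussianKernel p c C a b) (S : ℝ) :
    Continuous fun w : ℝ × ℝ => sliceEntropy p S w.1 w.2 := by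
  obtain ⟨D, hD⟩ := hp.exists_abs_smoothed_mul_log_le
  refine continuous_integral_of_mem_Icc (m := -|D|) (M := |D|) (F := fun (w : ℝ × ℝ) v =>
    smoothed p (S - w.1) w.2 (√w.1 * v) * log (smoothed p (S - w.1) w.2 (√w.1 * v))) ?_
    fun w v => abs_le.1 ?_
  · exact hp.continuous_smoothed_mul_log.comp
      (by fun_prop : Continuous fun u : (ℝ × ℝ) × ℝ => (S - u.1.1, u.1.2, √u.1.1 * u.2))
  · refine (hD _ _ _).trans ?_
    calc D * exp (-(b / 2) * w.2 ^ 2) ≤ |D| * 1 :=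
          mul_le_mul (le_abs_self D) (hp.exp_neg_le_one _) (exp_pos _).le (abs_nonneg _)
      _ = |D| := mul_one _

lemma integrable_sliceEntropy (hp : IsGaussianKernel p c C a b)
    (S q : ℝ) : Integrable fun y => sliceEntropy p S q y := by
  obtain ⟨D, hD⟩ := hp.exists_abs_sliceEntropy_le S
  exact ((integrable_exp_neg_mul_sq (half_pos hp.b_pos)).const_mul D).mono'
    ((hp.continuous_sliceEntropy S).comp
      (by fun_prop : Continuous fun y => (q, y))).aestronglyMeasurable (ae_of_all _ (hD q))

lemma continuous_integral_sliceEntropy (hp : IsGaussianKernel p c C a b) (S : ℝ) :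
    Continuous fun q => ∫ y, sliceEntropy p S q y := by
  obtain ⟨D, hD⟩ := hp.exists_abs_sliceEntropy_le S
  exact continuous_of_dominated (fun q => (hp.integrable_sliceEntropy S q).1)
    (fun q => ae_of_all _ (hD q)) ((integrable_exp_neg_mul_sq (half_pos hp.b_pos)).const_mul D)
    (ae_of_all _ fun y => (hp.continuous_sliceEntropy S).comp
      (by fun_prop : Continuous fun q => (q, y)))

lemma sliceEntropy_midpoint (hp : IsGaussianKernel p c C a b)
    {S q h : ℝ} (hh : 0 ≤ h) (hq : h ≤ q) (hS : q + h ≤ S) (y : ℝ) :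
    2 * sliceEntropy p S q y ≤ sliceEntropy p S (q + h) y + sliceEntropy p S (q - h) y := by
  obtain ⟨D, hD⟩ := hp.exists_abs_smoothed_mul_log_le
  set E : ℝ → ℝ → ℝ := fun t x => smoothed p t y x * log (smoothed p t y x) with hE
  have hEc : ∀ t, Continuous (E t) := fun t =>
    hp.continuous_smoothed_mul_log.comp (by fun_prop : Continuous fun x => (t, y, x))
  have hEb : ∀ t x, |E t x| ≤ D * exp (-(b / 2) * y ^ 2) := fun t x => hD t y x
  set B := D * exp (-(b / 2) * y ^ 2)
  set t := S - (q + h) with ht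
  set r := q - h with hr
  have ht0 : 0 ≤ t := by linarith
  have hr0 : 0 ≤ r := by linarith
  have hinner : Continuous fun x => ∫ n, E t (x + √h * n) ∂stdG :=
    continuous_integral_of_mem_Icc (F := fun x n => E t (x + √h * n))
      ((hEc t).comp (by fun_prop : Continuous fun u : ℝ × ℝ => u.1 + √h * u.2))
      fun x n => abs_le.1 (hEb _ _)
  have hinnerb : ∀ x, |∫ n, E t (x + √h * n) ∂stdG| ≤ B := fun x => abs_le.2 <|
    integral_mem_Icc ((hEc t).comp (by fun_prop : Continuous fun n : ℝ => x + √h * n))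
      fun n => abs_le.1 (hEb _ _)
  have e2 : sliceEntropy p S (q + h) y =
      ∫ v, ∫ n, ∫ n', E t (√r * v + √h * n + √h * n') ∂stdG ∂stdG ∂stdG := by
    rw [integral_stdG_add hinner hinnerb hr0 hh,
      integral_stdG_add (hEc t) (hEb t) (add_nonneg hr0 hh) hh,
      show r + h + h = q + h by rw [hr]; ring]
    rfl
  have e1 : sliceEntropy p S q y = ∫ v, ∫ n, E (t + h) (√r * v + √h * n) ∂stdG ∂stdG := by
    rw [integral_stdG_add (hEc _) (hEb _) hr0 hh, hr, ht, sub_add_cancel,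
      show S - (q + h) + h = S - q by ring]
    rfl
  have e0 : sliceEntropy p S r y = ∫ v, E (t + h + h) (√r * v) ∂stdG := by
    rw [ht, show S - (q + h) + h + h = S - r by rw [hr]; ring]
    rfl
  have key : ∀ x, 2 * ∫ n, E (t + h) (x + √h * n) ∂stdG ≤
      (∫ n, ∫ n', E t (x + √h * n + √h * n') ∂stdG ∂stdG) + E (t + h + h) x := fun x => by
    have hsup := entropy_superadditive_of_symm (μ := stdG)
      (g := fun n n' => smoothed p t y (x + √h * n + √h * n'))
      (hp.continuous_smoothed.comp
        (by fun_prop : Continuous fun u : ℝ × ℝ => (t, y, x + √h * u.1 + √h * u.2)))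
      (fun n n' => by ring_nf) (mul_pos hp.c_pos (exp_pos _))
      (fun n n' => hp.smoothed_mem_Icc _ _ _)
    simp_rw [hp.integral_smoothed ht0 hh, hp.integral_smoothed (add_nonneg ht0 hh) hh] at hsup
    exact hsup
  have hinner1 : Continuous fun x => ∫ n, E (t + h) (x + √h * n) ∂stdG :=
    continuous_integral_of_mem_Icc (F := fun x n => E (t + h) (x + √h * n))
      ((hEc _).comp (by fun_prop : Continuous fun u : ℝ × ℝ => u.1 + √h * u.2))
      fun x n => abs_le.1 (hEb _ _)
  have hinner2 : Continuous fun x => ∫ n, ∫ n', E t (x + √h * n + √h * n') ∂stdG ∂stdG :=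
    continuous_integral_of_mem_Icc (F := fun x n => ∫ n', E t (x + √h * n + √h * n') ∂stdG)
      (hinner.comp (by fun_prop : Continuous fun u : ℝ × ℝ => u.1 + √h * u.2))
      fun x n => abs_le.1 (hinnerb _)
  have hlin : Continuous fun v : ℝ => √r * v := by fun_prop
  have i1 : Integrable (fun v => ∫ n, E (t + h) (√r * v + √h * n) ∂stdG) stdG :=
    integrable_of_continuous_of_bounded (hinner1.comp hlin) fun v => abs_le.2 <|
      integral_mem_Icc ((hEc _).comp (by fun_prop : Continuous fun n : ℝ => √r * v + √h * n))
        fun n => abs_le.1 (hEb _ _)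
  have i2 : Integrable (fun v => ∫ n, ∫ n', E t (√r * v + √h * n + √h * n') ∂stdG ∂stdG) stdG :=
    integrable_of_continuous_of_bounded (hinner2.comp hlin) fun v => abs_le.2 <|
      integral_mem_Icc (hinner.comp (by fun_prop : Continuous fun n : ℝ => √r * v + √h * n))
        fun n => abs_le.1 (hinnerb _)
  have i0 : Integrable (fun v => E (t + h + h) (√r * v)) stdG :=
    integrable_of_continuous_of_bounded ((hEc _).comp hlin) fun v => hEb _ _
  rw [e2, e1, e0, ← integral_const_mul, ← integral_add i2 i0]
  exact integral_mono (i1.const_mul 2) (i2.add i0) fun v => key _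

lemma integral_sliceEntropy_midpoint (hp : IsGaussianKernel p c C a b)
    {S q h : ℝ} (hh : 0 ≤ h) (hq : h ≤ q) (hS : q + h ≤ S) :
    2 * ∫ y, sliceEntropy p S q y ≤
      (∫ y, sliceEntropy p S (q + h) y) + ∫ y, sliceEntropy p S (q - h) y := by
  rw [← integral_const_mul,
    ← integral_add (hp.integrable_sliceEntropy S _) (hp.integrable_sliceEntropy S _)]
  exact integral_mono ((hp.integrable_sliceEntropy S q).const_mul 2)
    ((hp.integrable_sliceEntropy S _).add (hp.integrable_sliceEntropy S _))
    fun y => hp.sliceEntropy_midpoint hh hq hS y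

lemma integral_mul_log_smoothed (hp : IsGaussianKernel p c C a b) (S q v : ℝ) :
    ∫ w, (∫ y, p y (√q * v + √(S - q) * w) * log (smoothed p (S - q) y (√q * v))) ∂stdG =
      ∫ y, smoothed p (S - q) y (√q * v) * log (smoothed p (S - q) y (√q * v)) := by
  obtain ⟨D, hD⟩ := hp.exists_abs_mul_log_le
  have hc : Continuous fun u : ℝ × ℝ =>
      p u.2 (√q * v + √(S - q) * u.1) * log (smoothed p (S - q) u.2 (√q * v)) := by
    have h1 := hp.continuous.comp
      (by fun_prop : Continuous fun u : ℝ × ℝ => (u.2, √q * v + √(S - q) * u.1))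
    have h2 := hp.continuous_smoothed.comp
      (by fun_prop : Continuous fun u : ℝ × ℝ => (S - q, u.2, √q * v))
    exact h1.mul (h2.log fun u => (hp.smoothed_pos _ _ _).ne')
  rw [integral_integral_swap]
  · simp_rw [integral_mul_const]
    rfl
  · exact (((integrable_exp_neg_mul_sq (half_pos hp.b_pos)).const_mul D).comp_snd stdG).mono'
      hc.aestronglyMeasurable
      (ae_of_all _ fun u => hD _ _ _ (hp.mem_Icc _ _) (hp.smoothed_mem_Icc _ _ _))

lemma integral_integral_smoothed_mul_log (hp : IsGaussianKernel p c C a b) (S q : ℝ) :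
    ∫ v, (∫ y, smoothed p (S - q) y (√q * v) * log (smoothed p (S - q) y (√q * v))) ∂stdG =
      ∫ y, sliceEntropy p S q y := by
  obtain ⟨D, hD⟩ := hp.exists_abs_smoothed_mul_log_le
  rw [integral_integral_swap]
  · rfl
  · exact (((integrable_exp_neg_mul_sq (half_pos hp.b_pos)).const_mul D).comp_snd stdG).mono'
      (hp.continuous_smoothed_mul_log.comp
        (by fun_prop : Continuous fun u : ℝ × ℝ => (S - q, u.2, √q * u.1))).aestronglyMeasurable
      (ae_of_all _ fun u => hD _ _ _)

end IsGaussianKernel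

section OutputChannel

variable {Δ : ℝ} {kA : ℕ} {PA : Measure (Fin kA → ℝ)} [IsProbabilityMeasure PA]
  {φ : ℝ → (Fin kA → ℝ) → ℝ}

lemma measurable_uncurry_left (hφ : Measurable fun p : ℝ × (Fin kA → ℝ) => φ p.1 p.2) (x : ℝ) :
    Measurable (φ x) :=
  hφ.comp measurable_prodMk_left

lemma continuous_Pout (hφ : Measurable fun p : ℝ × (Fin kA → ℝ) => φ p.1 p.2)
    (hc : ∀ a, Continuous fun x => φ x a) (hΔ : 0 < Δ) :
    Continuous (Function.uncurry (Pout Δ PA φ)) := by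
  refine Continuous.mul continuous_const ?_
  refine continuous_of_dominated (bound := fun _ => 1) (fun q => ?_)
    (fun q => ae_of_all _ fun a => ?_) (integrable_const _) (ae_of_all _ fun a => ?_)
  · have := measurable_uncurry_left hφ q.2
    exact (by fun_prop : Measurable fun a =>
      exp (-(q.1 - φ q.2 a) ^ 2 / (2 * Δ))).aestronglyMeasurable
  · rw [norm_eq_abs, abs_of_pos (exp_pos _), exp_le_one_iff]
    exact div_nonpos_of_nonpos_of_nonneg (neg_nonpos.2 (sq_nonneg _)) (by positivity)
  · have := hc a
    fun_prop

lemma integrable_Pout_integrand (hφ : Measurable fun p : ℝ × (Fin kA → ℝ) => φ p.1 p.2)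
    (hΔ : 0 < Δ) (y x : ℝ) :
    Integrable (fun a => exp (-(y - φ x a) ^ 2 / (2 * Δ))) PA := by
  have := measurable_uncurry_left hφ x
  refine .of_bound (by fun_prop : Measurable fun a =>
    exp (-(y - φ x a) ^ 2 / (2 * Δ))).aestronglyMeasurable 1 (ae_of_all _ fun a => ?_)
  rw [norm_eq_abs, abs_of_pos (exp_pos _), exp_le_one_iff]
  exact div_nonpos_of_nonpos_of_nonneg (neg_nonpos.2 (sq_nonneg _)) (by positivity)

lemma gaussian_mem_Icc (hΔ : 0 < Δ) {B m : ℝ} (hm : |m| ≤ B) (y : ℝ) :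
    (√(2 * π * Δ))⁻¹ * exp (-(y - m) ^ 2 / (2 * Δ)) ∈
      Set.Icc ((√(2 * π * Δ))⁻¹ * exp (-(B ^ 2 / Δ)) * exp (-(1 / Δ * y ^ 2)))
        ((√(2 * π * Δ))⁻¹ * exp (B ^ 2 / (2 * Δ)) * exp (-(1 / (4 * Δ) * y ^ 2))) := by
  have hsq : m ^ 2 ≤ B ^ 2 := sq_le_sq.2 (hm.trans (le_abs_self B))
  rw [mul_assoc (√(2 * π * Δ))⁻¹ (exp _) (exp _), mul_assoc (√(2 * π * Δ))⁻¹ (exp _) (exp _),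
    ← exp_add, ← exp_add]
  constructor
  · refine mul_le_mul_of_nonneg_left (exp_le_exp.2 (sub_nonneg.1 ?_)) (by positivity)
    have : -(y - m) ^ 2 / (2 * Δ) - (-(B ^ 2 / Δ) + -(1 / Δ * y ^ 2)) =
        ((y + m) ^ 2 + 2 * (B ^ 2 - m ^ 2)) / (2 * Δ) := by
      field_simp
      ring
    rw [this]
    exact div_nonneg (by nlinarith [sq_nonneg (y + m)]) (by positivity)
  · refine mul_le_mul_of_nonneg_left (exp_le_exp.2 (sub_nonneg.1 ?_)) (by positivity)
    have : B ^ 2 / (2 * Δ) + -(1 / (4 * Δ) * y ^ 2) - -(y - m) ^ 2 / (2 * Δ) =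
        (2 * (B ^ 2 - m ^ 2) + (y - 2 * m) ^ 2) / (4 * Δ) := by
      field_simp
      ring
    rw [this]
    exact div_nonneg (by nlinarith [sq_nonneg (y - 2 * m)]) (by positivity)

lemma isGaussianKernel_Pout (hφ : Measurable fun p : ℝ × (Fin kA → ℝ) => φ p.1 p.2)
    (hc : ∀ a, Continuous fun x => φ x a) {B : ℝ} (hB : ∀ x a, |φ x a| ≤ B) (hΔ : 0 < Δ) :
    IsGaussianKernel (Pout Δ PA φ) ((√(2 * π * Δ))⁻¹ * exp (-(B ^ 2 / Δ)))
      ((√(2 * π * Δ))⁻¹ * exp (B ^ 2 / (2 * Δ))) (1 / Δ) (1 / (4 * Δ)) where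
  continuous := continuous_Pout hφ hc hΔ
  c_pos := by positivity
  C_pos := by positivity
  a_pos := by positivity
  b_pos := by positivity
  mem_Icc y x := by
    have hi := (integrable_Pout_integrand (PA := PA) hφ hΔ y x).const_mul (√(2 * π * Δ))⁻¹
    have hb := fun a => gaussian_mem_Icc hΔ (hB x a) y
    rw [Pout, ← integral_const_mul]
    constructor
    · refine le_trans (le_of_eq ?_) (integral_mono (integrable_const _) hi fun a => (hb a).1)
      simp
    · refine (integral_mono hi (integrable_const _) fun a => (hb a).2).trans (le_of_eq ?_)
      simp

/-- Change of variables from the channel noise to the channel output. -/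
lemma integral_output_log (hφ : Measurable fun p : ℝ × (Fin kA → ℝ) => φ p.1 p.2)
    (hc : ∀ a, Continuous fun x => φ x a) {B : ℝ} (hB : ∀ x a, |φ x a| ≤ B) (hΔ : 0 < Δ)
    {u : ℝ → ℝ} (hu : Continuous u)
    (hb : ∀ y, u y ∈ Set.Icc ((√(2 * π * Δ))⁻¹ * exp (-(B ^ 2 / Δ)) * exp (-(1 / Δ * y ^ 2)))
      ((√(2 * π * Δ))⁻¹ * exp (B ^ 2 / (2 * Δ)) * exp (-(1 / (4 * Δ) * y ^ 2)))) (x : ℝ) :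
    ∫ a, ∫ z, log (u (φ x a + √Δ * z)) ∂stdG ∂PA = ∫ y, Pout Δ PA φ y x * log (u y) := by
  have hK := isGaussianKernel_Pout (PA := PA) hφ hc hB hΔ
  obtain ⟨D, hD⟩ := hK.exists_abs_mul_log_le
  have hlog : Continuous fun y => log (u y) :=
    hu.log fun y => ((mul_pos hK.c_pos (exp_pos _)).trans_le (hb y).1).ne'
  have hmap : ∀ m, stdG.map (fun z => m + √Δ * z) = gaussianReal m Δ.toNNReal := fun m => by
    have h : stdG.map (fun z => m + √Δ * z) = (stdG.map (√Δ * ·)).map (m + ·) :=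
      (Measure.map_map (by fun_prop) (by fun_prop)).symm
    rw [h, stdG, gaussianReal_map_const_mul, gaussianReal_map_const_add, mul_zero, zero_add, mul_one]
    congr 1
    refine NNReal.eq ?_
    rw [coe_toNNReal Δ hΔ.le]
    exact sq_sqrt hΔ.le
  have hv : Δ.toNNReal ≠ 0 := (toNNReal_pos.2 hΔ).ne'
  have hinner : ∀ m, ∫ z, log (u (m + √Δ * z)) ∂stdG =
      ∫ y, (√(2 * π * Δ))⁻¹ * exp (-(y - m) ^ 2 / (2 * Δ)) * log (u y) := fun m => by
    rw [← integral_map (φ := fun z => m + √Δ * z) (f := fun y => log (u y)) (by fun_prop)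
      hlog.aestronglyMeasurable, hmap, integral_gaussianReal_eq_integral_smul hv]
    simp only [gaussianPDFReal, coe_toNNReal Δ hΔ.le, smul_eq_mul]
  have hm := measurable_uncurry_left hφ x
  simp_rw [hinner]
  rw [integral_integral_swap]
  · simp_rw [integral_mul_const, integral_const_mul]
    rfl
  · refine (((integrable_exp_neg_mul_sq (half_pos hK.b_pos)).const_mul D).comp_snd PA).mono'
      ?_ (ae_of_all _ fun w => hD _ _ _ (gaussian_mem_Icc hΔ (hB x w.1) w.2) (hb w.2))
    have hlogm := hlog.measurable
    exact (by fun_prop : Measurable fun w : (Fin kA → ℝ) × ℝ =>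
      (√(2 * π * Δ))⁻¹ * exp (-(w.2 - φ x w.1) ^ 2 / (2 * Δ)) *
        log (u w.2)).aestronglyMeasurable

/-- Up to a term independent of `q`, the mutual information is minus the average conditional
entropy functional of the output. -/
lemma exists_IPout_eq_sub (hφ : Measurable fun p : ℝ × (Fin kA → ℝ) => φ p.1 p.2)
    (hc : ∀ a, Continuous fun x => φ x a) {B : ℝ} (hB : ∀ x a, |φ x a| ≤ B) (hΔ : 0 < Δ)
    (S : ℝ) : ∃ c₀, ∀ q,
      IPout Δ PA φ q S = c₀ - ∫ y, sliceEntropy (Pout Δ PA φ) S q y := by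
  have hK := isGaussianKernel_Pout (PA := PA) hφ hc hB hΔ
  refine ⟨_, fun q => congrArg₂ (· - ·) rfl ?_⟩
  rw [← hK.integral_integral_smoothed_mul_log]
  refine integral_congr_ae (ae_of_all _ fun v => ?_)
  simp only
  rw [← hK.integral_mul_log_smoothed]
  refine integral_congr_ae (ae_of_all _ fun w => ?_)
  exact integral_output_log hφ hc hB hΔ (hK.continuous_smoothed.comp
    (by fun_prop : Continuous fun y => (S - q, y, √q * v)))
    (fun y => hK.smoothed_mem_Icc _ _ _) _

lemma continuous_IPout (hφ : Measurable fun p : ℝ × (Fin kA → ℝ) => φ p.1 p.2)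
    (hc : ∀ a, Continuous fun x => φ x a) (hB : ∃ B, ∀ x a, |φ x a| ≤ B) (hΔ : 0 < Δ)
    (S : ℝ) : Continuous fun q => IPout Δ PA φ q S := by
  obtain ⟨B, hB⟩ := hB
  obtain ⟨c₀, h⟩ := exists_IPout_eq_sub (PA := PA) hφ hc hB hΔ S
  simp_rw [h]
  exact continuous_const.sub
    ((isGaussianKernel_Pout hφ hc hB hΔ).continuous_integral_sliceEntropy S)

lemma IPout_midpoint (hφ : Measurable fun p : ℝ × (Fin kA → ℝ) => φ p.1 p.2)
    (hc : ∀ a, Continuous fun x => φ x a) (hB : ∃ B, ∀ x a, |φ x a| ≤ B) (hΔ : 0 < Δ)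
    {S q h : ℝ} (hh : 0 ≤ h) (hq : h ≤ q) (hS : q + h ≤ S) :
    IPout Δ PA φ (q + h) S + IPout Δ PA φ (q - h) S ≤ 2 * IPout Δ PA φ q S := by
  obtain ⟨B, hB⟩ := hB
  obtain ⟨c₀, h₀⟩ := exists_IPout_eq_sub (PA := PA) hφ hc hB hΔ S
  rw [h₀, h₀, h₀]
  linarith [(isGaussianKernel_Pout (PA := PA) hφ hc hB hΔ).integral_sliceEntropy_midpoint hh hq hS]

end OutputChannel

/-- Minimum principle for continuous midpoint concave functions on a segment. -/
lemma min_le_of_midpoint {f : ℝ → ℝ} {a b : ℝ} (hf : ContinuousOn f (Set.Icc a b))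
    (hmid : ∀ x h, 0 ≤ h → a ≤ x - h → x + h ≤ b → f (x + h) + f (x - h) ≤ 2 * f x)
    {x : ℝ} (hx : x ∈ Set.Icc a b) : min (f a) (f b) ≤ f x := by
  obtain ⟨c, hc, hmin⟩ := isCompact_Icc.exists_isMinOn ⟨x, hx⟩ hf
  refine le_trans ?_ (hmin hx)
  have hab := hx.1.trans hx.2
  have ha := hmin (Set.left_mem_Icc.2 hab)
  have hb := hmin (Set.right_mem_Icc.2 hab)
  simp only [Set.mem_ofPred_eq] at ha hb
  rcases le_total (c - a) (b - c) with h | h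
  · have h1 := hmid c (c - a) (by linarith [hc.1]) (by linarith) (by linarith)
    have h2 := hmin (show c + (c - a) ∈ Set.Icc a b from ⟨by linarith [hc.1], by linarith⟩)
    simp only [Set.mem_ofPred_eq] at h2
    rw [sub_sub_cancel] at h1
    exact (min_le_left _ _).trans (by linarith)
  · have h1 := hmid c (b - c) (by linarith [hc.2]) (by linarith) (by linarith)
    have h2 := hmin (show c - (b - c) ∈ Set.Icc a b from ⟨by linarith, by linarith [hc.2]⟩)
    simp only [Set.mem_ofPred_eq] at h2
    rw [add_sub_cancel] at h1
    exact (min_le_right _ _).trans (by linarith)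

/-- Limit of the rescaled mutual information of the sparse scalar channel. -/
def limitMI (γ : ℝ) (P : Measure ℝ) (r : ℝ) : ℝ := ∫ x, min (r * x ^ 2 / 2) (1 / γ) ∂P

lemma secondMoment_nonneg (P : Measure ℝ) : 0 ≤ secondMoment P :=
  integral_nonneg fun x => sq_nonneg x

section DiscretePrior

variable {P : Measure ℝ} [IsProbabilityMeasure P] {s : Finset ℝ} {γ : ℝ}

lemma exists_abs_IP0_sub_limitMI_le (hs : ∀ᵐ x ∂P, x ∈ s) (hγ : 0 < γ) :
    ∃ C, ∀ ρ r, 0 < ρ → ρ ≤ 1 / 2 → 0 ≤ r →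
      |1 / (γ * ρ * |log ρ|) * IP0 ρ P (γ * ρ * |log ρ| / ρ * r) - limitMI γ P r| ≤
        (C + 2 * √|log ρ|) / (γ * |log ρ|) := by
  obtain ⟨C, hC⟩ := abs_psiP_sub_le hs
  refine ⟨C, fun ρ r h0 h1 hr => ?_⟩
  have hL : 0 < |log ρ| := abs_pos.2 (log_neg h0 (by linarith)).ne
  have hb := hC ρ (γ * |log ρ| * r) h0 h1 (by positivity)
  set L := |log ρ|
  rw [show γ * ρ * L / ρ * r = γ * L * r by field_simp]
  have hint := integrable_of_ae_mem_finset hs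
  have hlim : limitMI γ P r =
      1 / (γ * L) * (γ * L * r * secondMoment P / 2 - ∫ x, max (γ * L * r * x ^ 2 / 2 - L) 0 ∂P) := by
    have h2 : γ * L * r * secondMoment P / 2 = ∫ x, γ * L * r * x ^ 2 / 2 ∂P := by
      rw [integral_div, integral_const_mul, secondMoment]
    rw [h2, ← integral_sub (hint _) (hint _), ← integral_const_mul, limitMI]
    refine integral_congr_ae (ae_of_all _ fun x => ?_)
    have h3 : γ * L * r * x ^ 2 / 2 = γ * L * (r * x ^ 2 / 2) := by ring
    have h4 : γ * L * (1 / γ) = L := by field_simp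
    simp only
    rw [h3]
    rcases le_total (r * x ^ 2 / 2) (1 / γ) with h | h
    · have h5 := mul_le_mul_of_nonneg_left h (by positivity : 0 ≤ γ * L)
      rw [min_eq_left h, max_eq_right (by linarith)]
      field_simp
      ring
    · have h5 := mul_le_mul_of_nonneg_left h (by positivity : 0 ≤ γ * L)
      rw [min_eq_right h, max_eq_left (by linarith)]
      field_simp
      ring
  have hdiff : 1 / (γ * ρ * L) * IP0 ρ P (γ * L * r) - limitMI γ P r =
      -(1 / (γ * ρ * L) * (psiP (sparsePrior ρ P) (γ * L * r) -
        ρ * ∫ x, max (γ * L * r * x ^ 2 / 2 - L) 0 ∂P)) := by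
    rw [hlim, IP0]
    field_simp
    ring
  rw [hdiff, abs_neg, abs_mul, abs_of_pos (by positivity : 0 < 1 / (γ * ρ * L))]
  refine (mul_le_mul_of_nonneg_left hb (by positivity)).trans (le_of_eq ?_)
  field_simp

lemma limitMI_le (hs : ∀ᵐ x ∂P, x ∈ s) (γ r : ℝ) : limitMI γ P r ≤ 1 / γ := by
  have := integral_mono (integrable_of_ae_mem_finset hs _) (integrable_const (1 / γ))
    fun x => min_le_right (r * x ^ 2 / 2) (1 / γ)
  simpa [limitMI] using this

lemma tailProb_eq_integral (P : Measure ℝ) (t : ℝ) :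
    tailProb P t = ∫ x, if t ≤ |x| then 1 else 0 ∂P := by
  have hm : MeasurableSet {x : ℝ | t ≤ |x|} := measurableSet_le measurable_const measurable_norm
  rw [tailProb, ← measureReal_def, ← integral_indicator_one hm]
  refine integral_congr_ae (ae_of_all _ fun x => ?_)
  simp [Set.indicator_apply]

lemma limitMI_sub_eq (hs : ∀ᵐ x ∂P, x ∈ s) (γ r t : ℝ) :
    limitMI γ P r - r * (secondMoment P - truncSMge P t) / 2 - tailProb P t / γ =
      ∫ x, (min (r * x ^ 2 / 2) (1 / γ) - r / 2 * (x ^ 2 - if t ≤ |x| then x ^ 2 else 0) -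
        (if t ≤ |x| then 1 else 0) / γ) ∂P := by
  have hint := integrable_of_ae_mem_finset hs
  rw [integral_sub (hint _) (hint _), integral_sub (hint _) (hint _), integral_const_mul,
    integral_sub (hint _) (hint _), integral_div, tailProb_eq_integral, limitMI, truncSMge,
    secondMoment]
  ring

lemma limitMI_sub_le (hs : ∀ᵐ x ∂P, x ∈ s) (γ r t : ℝ) :
    limitMI γ P r - r * (secondMoment P - truncSMge P t) / 2 ≤ tailProb P t / γ := by
  rw [← sub_nonpos, limitMI_sub_eq hs]
  refine integral_nonpos fun x => ?_
  simp only [Pi.zero_apply]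
  split_ifs
  · linarith [min_le_right (r * x ^ 2 / 2) (1 / γ)]
  · rw [zero_div, sub_zero, sub_zero]
    linarith [min_le_left (r * x ^ 2 / 2) (1 / γ)]

lemma le_limitMI_sub (hs : ∀ᵐ x ∂P, x ∈ s) (hγ : 0 < γ) {t t' : ℝ} (ht : 0 < t) (htt : t ≤ t')
    (hgap : ∀ᵐ x ∂P, |x| < t' → |x| ≤ t) :
    tailProb P t' / γ ≤
      limitMI γ P (2 / (γ * t ^ 2)) - 2 / (γ * t ^ 2) * (secondMoment P - truncSMge P t') / 2 := by
  rw [← sub_nonneg, limitMI_sub_eq hs]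
  refine integral_nonneg_of_ae ?_
  filter_upwards [hgap] with x hx
  have h1 : 2 / (γ * t ^ 2) * x ^ 2 / 2 = 1 / γ * (x ^ 2 / t ^ 2) := by field_simp
  have h2 : 0 < 1 / γ := by positivity
  simp only [Pi.zero_apply]
  rw [h1]
  split_ifs with h
  · have h3 : 1 ≤ x ^ 2 / t ^ 2 := by
      rw [one_le_div (by positivity), ← sq_abs x]
      exact pow_le_pow_left₀ ht.le (htt.trans h) 2
    rw [min_eq_right (by nlinarith), sub_self, mul_zero, sub_zero, sub_self]
  · have h3 : x ^ 2 / t ^ 2 ≤ 1 := by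
      rw [div_le_one (by positivity), ← sq_abs x]
      exact pow_le_pow_left₀ (abs_nonneg x) (hx (not_le.1 h)) 2
    rw [min_eq_left (by nlinarith), ← h1, zero_div]
    exact le_of_eq (by ring)

lemma truncSMge_antitone (hs : ∀ᵐ x ∂P, x ∈ s) : Antitone (truncSMge P) := fun t t' h => by
  have hint := integrable_of_ae_mem_finset hs
  refine integral_mono (hint _) (hint _) fun x => ?_
  simp only
  split_ifs with h1 h2
  · rfl
  · exact absurd (h.trans h1) h2
  · positivity
  · rfl

lemma truncSMge_mem_Icc (hs : ∀ᵐ x ∂P, x ∈ s) (t : ℝ) :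
    truncSMge P t ∈ Set.Icc 0 (secondMoment P) := by
  have hint := integrable_of_ae_mem_finset hs
  refine ⟨integral_nonneg fun x => ?_, integral_mono (hint _) (hint _) fun x => ?_⟩
  · simp only [Pi.zero_apply]
    split_ifs <;> positivity
  · simp only
    split_ifs
    · rfl
    · positivity

/-- Between two consecutive truncated second moments, the concave potential dominates the
smaller of its values at the end points. -/
lemma exists_le_add_limitMI_sub (hs : ∀ᵐ x ∂P, x ∈ s) (hγ : 0 < γ) {f : ℝ → ℝ}
    (hf : Continuous f)
    (hmid : ∀ q h, 0 ≤ h → h ≤ q → q + h ≤ secondMoment P → f (q + h) + f (q - h) ≤ 2 * f q)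
    {M t t' : ℝ} (ht : 0 < t) (htt : t ≤ t') (hgap : ∀ᵐ x ∂P, |x| < t' → |x| ≤ t)
    (hM : M ≤ f (truncSMge P t) + tailProb P t / γ)
    (hM' : M ≤ f (truncSMge P t') + tailProb P t' / γ)
    {q : ℝ} (hq : q ∈ Set.Icc (truncSMge P t') (truncSMge P t)) :
    ∃ r, 0 ≤ r ∧ M ≤ f q + limitMI γ P r - r * (secondMoment P - q) / 2 := by
  refine ⟨2 / (γ * t ^ 2), by positivity, ?_⟩
  have h1 := le_limitMI_sub hs hγ ht le_rfl (ae_of_all _ fun x hx => hx.le)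
  have h2 := le_limitMI_sub hs hγ ht htt hgap
  set r := 2 / (γ * t ^ 2)
  refine le_trans (le_min ?_ ?_) (min_le_of_midpoint
    (f := fun q => f q + limitMI γ P r - r * (secondMoment P - q) / 2)
    (by fun_prop : Continuous _).continuousOn (fun q h hh hl hu => ?_) hq)
  · linarith
  · linarith
  · have h3 := hmid q h hh (by linarith [(truncSMge_mem_Icc hs t').1])
      (hu.trans (truncSMge_mem_Icc hs t).2)
    linarith

lemma exists_truncSMge_le_le (hs : ∀ᵐ x ∂P, x ∈ s) {K : ℕ} (hK : 0 < K) {V : ℕ → ℝ}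
    (hV : Monotone V) (h0 : ∀ᵐ x ∂P, V 0 ≤ |x|) (hlast : ∀ᵐ x ∂P, |x| < V K)
    {q : ℝ} (hq : q ∈ Set.Icc 0 (secondMoment P)) :
    ∃ k < K, q ∈ Set.Icc (truncSMge P (V (k + 1))) (truncSMge P (V k)) := by
  have hS : truncSMge P (V 0) = secondMoment P := integral_congr_ae <| by
    filter_upwards [h0] with x hx using if_pos hx
  have hex : truncSMge P (V K) ≤ q := by
    have : truncSMge P (V K) = 0 := integral_eq_zero_of_ae <| by
      filter_upwards [hlast] with x hx using if_neg (not_le.2 hx)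
    exact this ▸ hq.1
  classical
  have hfind : ∃ k, truncSMge P (V k) ≤ q := ⟨K, hex⟩
  rcases hn : Nat.find hfind with _ | n
  · have h := Nat.find_spec hfind
    rw [hn] at h
    exact ⟨0, hK, (truncSMge_antitone hs (hV (Nat.le_succ 0))).trans h, hS ▸ hq.2⟩
  · have h := Nat.find_spec hfind
    have hle := Nat.find_min' hfind hex
    have hlt := Nat.find_min hfind (m := n) (by omega)
    rw [hn] at h hle
    exact ⟨n, hle, h, (not_le.1 hlt).le⟩

end DiscretePrior

/-- Uniform closeness transfers to the inf-sup. -/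
lemma abs_iInf_iSup_sub_le {S M b ε : ℝ} (hS : 0 ≤ S) {J : ℝ → ℝ → ℝ} {F : ℝ → ℝ → ℝ} {f : ℝ → ℝ}
    (hJ : ∀ q r, 0 ≤ r → |J q r - F q r| ≤ ε)
    (hbdd : ∀ q ∈ Set.Icc 0 S, ∀ r, 0 ≤ r → F q r ≤ f q + b)
    (hlow : ∀ q ∈ Set.Icc 0 S, ∃ r, 0 ≤ r ∧ M ≤ F q r)
    (hup : ∃ q ∈ Set.Icc 0 S, ∀ r, 0 ≤ r → F q r ≤ M) :
    |(⨅ q : Set.Icc 0 S, ⨆ r : Set.Ici (0 : ℝ), J q r) - M| ≤ ε := by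
  have : Nonempty (Set.Icc 0 S) := ⟨0, Set.left_mem_Icc.2 hS⟩
  have hsup : ∀ q : Set.Icc 0 S, M - ε ≤ ⨆ r : Set.Ici (0 : ℝ), J q r := fun q => by
    obtain ⟨r, hr, hM⟩ := hlow q q.2
    refine le_trans ?_ (le_ciSup (f := fun r : Set.Ici (0 : ℝ) => J q r)
      ⟨f q + b + ε, ?_⟩ ⟨r, hr⟩)
    · linarith [(abs_le.1 (hJ q r hr)).1]
    · rintro _ ⟨r', rfl⟩
      linarith [(abs_le.1 (hJ q r' r'.2)).2, hbdd q q.2 r' r'.2]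
  rw [abs_le]
  constructor
  · linarith [le_ciInf hsup]
  · obtain ⟨q, hq, hM⟩ := hup
    have h1 : (⨅ q : Set.Icc 0 S, ⨆ r : Set.Ici (0 : ℝ), J q r) ≤ _ :=
      ciInf_le ⟨M - ε, by rintro _ ⟨q, rfl⟩; exact hsup q⟩ (⟨q, hq⟩ : Set.Icc 0 S)
    have h2 : (⨆ r : Set.Ici (0 : ℝ), J q r) ≤ M + ε := ciSup_le fun r => by
      linarith [(abs_le.1 (hJ q r r.2)).2, hM r r.2]
    linarith

lemma tendsto_sqrt_log_error (C : ℝ) {γ : ℝ} (hγ : 0 < γ) :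
    Filter.Tendsto (fun ρ => (C + 2 * √|log ρ|) / (γ * |log ρ|)) (nhdsWithin 0 (Set.Ioi 0))
      (nhds 0) := by
  have hL : Filter.Tendsto (fun ρ => |log ρ|) (nhdsWithin 0 (Set.Ioi 0)) Filter.atTop :=
    Filter.tendsto_abs_atBot_atTop.comp tendsto_log_nhdsGT_zero
  have h1 : Filter.Tendsto (fun u : ℝ => C / γ * u⁻¹ + 2 / γ * (√u)⁻¹) Filter.atTop (nhds 0) := by
    simpa using (tendsto_inv_atTop_zero.const_mul (C / γ)).add
      ((tendsto_inv_atTop_zero.comp tendsto_sqrt_atTop).const_mul (2 / γ))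
  refine (h1.comp hL).congr' ?_
  filter_upwards [hL.eventually_gt_atTop 0] with ρ hρ
  have hs := sqrt_pos.2 hρ
  have h2 := mul_self_sqrt hρ.le
  simp only [Function.comp_apply]
  set u := √|log ρ|
  rw [← h2]
  field_simp

/-- Proposition 9 of the paper: the limit as ρ → 0⁺ of the
replica-symmetric variational problem for a discrete prior with finite support. -/
theorem limit_variational_problem_discrete_prior
    (Δ : ℝ) (hΔ : 0 < Δ)
    (kA : ℕ) (PA : Measure (Fin kA → ℝ)) [IsProbabilityMeasure PA]
    (φ φ' φ'' : ℝ → (Fin kA → ℝ) → ℝ)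
    -- (H2)
    (hφmeas : Measurable fun p : ℝ × (Fin kA → ℝ) => φ p.1 p.2)
    (hφbd : ∃ B, ∀ x a, |φ x a| ≤ B)
    (hd1 : ∀ a x, HasDerivAt (fun t => φ t a) (φ' x a) x)
    (hd2 : ∀ a x, HasDerivAt (fun t => φ' t a) (φ'' x a) x)
    (hφ'bd : ∃ B, ∀ x a, |φ' x a| ≤ B)
    (hφ''bd : ∃ B, ∀ x a, |φ'' x a| ≤ B)
    (hφ'cont : ∀ a, Continuous fun x => φ' x a)
    (hφ''cont : ∀ a, Continuous fun x => φ'' x a)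
    -- discrete prior with finite support, 0 < v 0 < ... < v (K-1)
    (K : ℕ) (hK : 0 < K) (v : Fin K → ℝ) (hvpos : 0 < v ⟨0, hK⟩) (hvmono : StrictMono v)
    (P0 : Measure ℝ) [IsProbabilityMeasure P0]
    (hsupp : ∀ᵐ x ∂P0, ∃ k : Fin K, x = v k ∨ x = -(v k))
    (γ : ℝ) (hγ : 0 < γ) :
    Filter.Tendsto
      (fun ρ : ℝ =>
        ⨅ q : Set.Icc (0 : ℝ) (secondMoment P0), ⨆ r : Set.Ici (0 : ℝ),
          iRS Δ PA φ P0 (γ * ρ * |Real.log ρ|) ρ q r)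
      (nhdsWithin 0 (Set.Ioi 0))
      (nhds (⨅ k : Fin (K + 1),
        if h : (k : ℕ) < K then
          IPout Δ PA φ (truncSMge P0 (v ⟨k, h⟩)) (secondMoment P0)
            + tailProb P0 (v ⟨k, h⟩) / γ
        else IPout Δ PA φ 0 (secondMoment P0))) := by
  have : Nonempty (Fin K) := ⟨⟨0, hK⟩⟩
  have hcont : ∀ a, Continuous fun x => φ x a := fun a =>
    continuous_iff_continuousAt.2 fun x => (hd1 a x).continuousAt
  have hvp : ∀ k, 0 < v k := fun k =>
    hvpos.trans_le (hvmono.monotone (Fin.le_def.2 (Nat.zero_le _)))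
  have habs : ∀ᵐ x ∂P0, ∃ k, |x| = v k := by
    filter_upwards [hsupp] with x ⟨k, hk⟩
    exact ⟨k, ((abs_eq (hvp k).le).2 hk)⟩
  obtain ⟨s, hs⟩ : ∃ s : Finset ℝ, ∀ᵐ x ∂P0, x ∈ s := by
    classical
    refine ⟨Finset.univ.image v ∪ Finset.univ.image fun k => -(v k), ?_⟩
    filter_upwards [hsupp] with x ⟨k, hk⟩
    rcases hk with rfl | rfl <;> simp
  set S := secondMoment P0
  set f : ℝ → ℝ := fun q => IPout Δ PA φ q S
  obtain ⟨V, hVlt, hVK⟩ : ∃ V : ℕ → ℝ, (∀ k (h : k < K), V k = v ⟨k, h⟩) ∧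
      ∀ k, K ≤ k → V k = v ⟨K - 1, by omega⟩ + 1 :=
    ⟨fun k => if h : k < K then v ⟨k, h⟩ else v ⟨K - 1, by omega⟩ + 1,
      fun k h => dif_pos h, fun k h => dif_neg (not_lt.2 h)⟩
  have hvlast : ∀ k, v k ≤ v ⟨K - 1, by omega⟩ := fun k =>
    hvmono.monotone (Fin.le_def.2 (by simp only; omega))
  have hVmono : Monotone V := monotone_nat_of_le_succ fun k => by
    rcases lt_or_ge (k + 1) K with h | h
    · rw [hVlt k (by omega), hVlt (k + 1) h]
      exact hvmono.monotone (Fin.le_def.2 (Nat.le_succ k))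
    rw [hVK (k + 1) h]
    rcases lt_or_ge k K with h' | h'
    · rw [hVlt k h']
      linarith [hvlast ⟨k, h'⟩]
    · rw [hVK k h']
  have hV0 : 0 < V 0 := by rwa [hVlt 0 hK]
  have hfirst : ∀ᵐ x ∂P0, V 0 ≤ |x| := by
    filter_upwards [habs] with x ⟨k, hk⟩
    rw [hk, hVlt 0 hK]
    exact hvmono.monotone (Fin.le_def.2 (Nat.zero_le _))
  have hlast : ∀ᵐ x ∂P0, |x| < V K := by
    filter_upwards [habs] with x ⟨k, hk⟩
    rw [hk, hVK K le_rfl]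
    linarith [hvlast k]
  have hgap : ∀ k < K, ∀ᵐ x ∂P0, |x| < V (k + 1) → |x| ≤ V k := fun k hk => by
    filter_upwards [habs] with x ⟨j, hj⟩ hlt
    rw [hj] at hlt ⊢
    rw [hVlt k hk]
    refine hvmono.monotone (Fin.le_def.2 (not_lt.1 fun hkj => hlt.not_ge ?_))
    rw [hVlt (k + 1) (lt_of_le_of_lt hkj j.2)]
    exact hvmono.monotone (Fin.le_def.2 hkj)
  have hobj : ∀ k : Fin (K + 1), (if h : (k : ℕ) < K then
      IPout Δ PA φ (truncSMge P0 (v ⟨k, h⟩)) S + tailProb P0 (v ⟨k, h⟩) / γ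
      else IPout Δ PA φ 0 S) = f (truncSMge P0 (V k)) + tailProb P0 (V k) / γ := fun k => by
    split_ifs with h
    · rw [hVlt k h]
    · have hk : (k : ℕ) = K := by omega
      have h1 : truncSMge P0 (V K) = 0 := integral_eq_zero_of_ae <| by
        filter_upwards [hlast] with x hx using if_neg (not_le.2 hx)
      have h2 : tailProb P0 (V K) = 0 := by
        rw [tailProb_eq_integral]
        refine integral_eq_zero_of_ae ?_
        filter_upwards [hlast] with x hx using if_neg (not_le.2 hx)
      rw [hk, h1, h2, zero_div, add_zero]
  simp_rw [hobj]
  set M := ⨅ k : Fin (K + 1), (f (truncSMge P0 (V k)) + tailProb P0 (V k) / γ) with hMdef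
  have hM : ∀ k ≤ K, M ≤ f (truncSMge P0 (V k)) + tailProb P0 (V k) / γ := fun k hk =>
    ciInf_le (Set.finite_range _).bddBelow (⟨k, by omega⟩ : Fin (K + 1))
  have hfc : Continuous f := continuous_IPout hφmeas hcont hφbd hΔ S
  obtain ⟨C, hC⟩ := exists_abs_IP0_sub_limitMI_le hs hγ
  refine tendsto_iff_norm_sub_tendsto_zero.2 <| squeeze_zero' (.of_forall fun _ => norm_nonneg _) ?_
    (tendsto_sqrt_log_error C hγ)
  filter_upwards [Ioc_mem_nhdsGT (by norm_num : (0 : ℝ) < 1 / 2)] with ρ hρ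
  refine abs_iInf_iSup_sub_le (J := iRS Δ PA φ P0 (γ * ρ * |log ρ|) ρ) (b := 1 / γ) (f := f)
    (F := fun q r => f q + limitMI γ P0 r - r * (S - q) / 2) (secondMoment_nonneg P0)
    (fun q r hr => ?_) (fun q hq r hr => ?_) (fun q hq => ?_) ?_
  · refine le_trans (le_of_eq (congrArg abs ?_)) (hC ρ r hρ.1 hρ.2 hr)
    simp only [iRS, f, S]
    ring
  · nlinarith [limitMI_le hs γ r, mul_nonneg hr (sub_nonneg.2 hq.2)]
  · obtain ⟨k, hk, hqk⟩ := exists_truncSMge_le_le hs hK hVmono hfirst hlast hq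
    exact exists_le_add_limitMI_sub hs hγ hfc
      (fun q h hh hl hu => IPout_midpoint hφmeas hcont hφbd hΔ hh hl hu)
      (hV0.trans_le (hVmono (Nat.zero_le k))) (hVmono (Nat.le_succ k)) (hgap k hk)
      (hM k hk.le) (hM (k + 1) hk) hqk
  · obtain ⟨k, hk⟩ := exists_eq_ciInf_of_finite
      (f := fun k : Fin (K + 1) => f (truncSMge P0 (V k)) + tailProb P0 (V k) / γ)
    refine ⟨truncSMge P0 (V k), truncSMge_mem_Icc hs _, fun r _ => ?_⟩
    rw [hMdef, ← hk]
    linarith [limitMI_sub_le hs γ r (V k)]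

end GLM
end
end
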